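/- Let a < b be real numbers, k ≥ 2 an integer, and F : [a,b]^k → [a,b] twice continuously differentiable. Let X_0 be a nonconstant random variable with P(X_0 ∈ [a,b]) = 1, and define the hierarchical sequence X_{n+1} = F(X_{n,1},…,X_{n,k}) where X_{n,1},…,X_{n,k} are independent copies of X_n. Suppose F is averaging, or scaled averaging and positively homogeneous, that X_n converges in probability to a constant c, and that the gradient α = F′(c,…,c) is not a scalar multiple of a standard basis vector of ℝ^k. Set φ = (Σ_{i=1}^k |α_i|³)/(Σ_{i=1}^k α_i²)^{3/2}, which lies in (0,1). Then with W_n = (X_n − E X_n)/√(Var X_n) and 𝒩 a standard normal random variable, for every γ ∈ (φ, 1) there exists a constant C such that d(W_n, 𝒩) ≤ C γ^n for all n, where d denotes the Wasserstein distance. -/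

import Mathlib

/-!
The rate comes from Stein's method applied to the linearization of `F` at `(c,…,c)`.

For a centred variable `W` of unit variance, let the Stein discrepancy be the least `δ` with
`|E[f'(W) - W f(W)]| ≤ δ` for all `f` with 1-Lipschitz derivative (`SteinBound`). Solving the Stein
equation with a solution whose derivative is 26-Lipschitz (`stein_solution`) shows that the
Wasserstein distance from `W` to the normal law is at most `26 δ`
(`wassersteinDist_le_of_steinBound`). If `∑ βᵢ² = 1` and the `Zᵢ` are independent copies of `Z`,
conditioning on all variables but the `i`-th shows that the discrepancy of `∑ βᵢ Zᵢ` is at most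
`∑ |βᵢ|³` times that of `Z` (`SteinBound.contract`). With `βᵢ = αᵢ / (∑ αⱼ²)^{1/2}` the factor is
exactly `φ`, and it remains to compare the standardized `X_{n+1}` with its standardized linear part
(`SteinBound.perturb`, `Hier.stein_step`).

A scaled averaging, positively homogeneous function is either averaging or linear on the box
(`avg_or_linear`): `F(1,…,1) ≠ 1` makes a nonzero limit `c` impossible, and when `c = 0`
homogeneity and differentiability at the origin force linearity. In the linear case the comparison is
exact (`Hier.stein_geometric_linear`).

In the averaging case the weights `αᵢ` are nonnegative with sum `1`, so `λ := (∑ αᵢ²)^{1/2} ≤ φ`,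
and the comparison error is `O(σₙ)`, where `σₙ` is the standard deviation of `Xₙ`:
* `Var X_{n+1} ≥ κ Var Xₙ` (`Hier.var_lower`), while the probability of deviating from `c` by a
  fixed amount is `O((Var Xₙ)²)` (`Hier.tail`), since by property (3) of averaging functions a
  single deviating argument gives a strictly smaller deviation of `F`, so that up to
  finitely many iterations two independent deviations are needed;
* hence the linearization error is `o(σₙ)` in `L²` (`Hier.rem_sq_small`), and `σ_{n+1}/σₙ → λ`
  (`Hier.sigma_ratio`); because `∑ αᵢ⁴ < λ⁴`, the standardized fourth moments stay bounded
  (`Hier.fourth_bound`), and summing the increments of the means gives `|E Xₙ - c| = O(σₙ)`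
  (`Hier.mean_bound`);
* feeding this back, the linearization error is `O(σₙ²)` in `L²` (`Hier.rem_sq_fine`), so that the
  Stein discrepancies satisfy `δ_{n+1} ≤ φ δₙ + O(σₙ)` (`Hier.stein_error_le`), with `σₙ` decaying
  at any rate above `λ`. As `λ ≤ φ < γ`, this gives `δₙ = O(γⁿ)` (`Hier.stein_geometric`).
-/

open MeasureTheory Filter

/-- The Wasserstein distance between two distributions on `ℝ`:
`d(μ, ν) = sup_h |∫ h dμ − ∫ h dν|`, the supremum over 1-Lipschitz `h : ℝ → ℝ`. -/
noncomputable def wassersteinDist (μ ν : Measure ℝ) : ℝ :=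
  ⨆ h : { h : ℝ → ℝ // LipschitzWith 1 h }, |(∫ x, h.1 x ∂μ) - ∫ x, h.1 x ∂ν|

/-- Property (3) of averaging functions. -/
def AveragingProp3 (D : Set ℝ) (k : ℕ) (F : (Fin k → ℝ) → ℝ) : Prop :=
  ∀ x ∈ D, ∀ y ∈ D, x < y → ∀ i₁ i₂ : Fin k, i₁ ≠ i₂ →
    ∃ z : Fin k → ℝ, (∀ i, z i = x ∨ z i = y) ∧ z i₁ = x ∧ z i₂ = y ∧
      x < F z ∧ F z < y

/-- A function `F : D^k → D` is averaging if (1) `min_i x_i ≤ F x ≤ max_i x_i`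
(expressed as `∃ i, x i ≤ F x` and `∃ i, F x ≤ x i`), (2) it is monotone, and (3)
it satisfies `AveragingProp3`. -/
def Averaging (D : Set ℝ) (k : ℕ) (F : (Fin k → ℝ) → ℝ) : Prop :=
  (∀ x : Fin k → ℝ, (∀ i, x i ∈ D) → (∃ i, x i ≤ F x) ∧ (∃ i, F x ≤ x i)) ∧
  (∀ x y : Fin k → ℝ, (∀ i, x i ∈ D) → (∀ i, y i ∈ D) → (∀ i, x i ≤ y i) →
    F x ≤ F y) ∧
  AveragingProp3 D k F

/-! ### Solution of the Stein equation -/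

/-- The unnormalised standard Gaussian weight `t ↦ e^{-t²/2}`. -/
noncomputable def gw (t : ℝ) : ℝ := Real.exp (-(1 / 2) * t ^ 2)

lemma gw_pos (t : ℝ) : 0 < gw t := Real.exp_pos _

lemma gw_neg (t : ℝ) : gw (-t) = gw t := by simp [gw]

lemma continuous_gw : Continuous gw := by unfold gw; fun_prop

lemma hasDerivAt_gw (t : ℝ) : HasDerivAt gw (-t * gw t) t := by
  have h : HasDerivAt (fun t : ℝ => -(1 / 2) * t ^ 2) (-t) t := by
    have := (hasDerivAt_pow 2 t).const_mul (-(1 / 2) : ℝ)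
    exact this.congr_deriv (by simp)
  exact h.exp.congr_deriv (by simp only [gw]; ring)

lemma hasDerivAt_gw_inv (t : ℝ) : HasDerivAt (fun t => (gw t)⁻¹) (t * (gw t)⁻¹) t := by
  refine ((hasDerivAt_gw t).fun_inv (gw_pos t).ne').congr_deriv ?_
  have := (gw_pos t).ne'
  field_simp

lemma integrable_gw : Integrable gw := integrable_exp_neg_mul_sq (by norm_num)

lemma integrable_pow_gw (n : ℕ) : Integrable (fun t => t ^ n * gw t) := by
  have := integrable_rpow_mul_exp_neg_mul_sq (b := 1 / 2) (by norm_num) (s := (n : ℝ))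
    (by have : (0 : ℝ) ≤ n := n.cast_nonneg
        linarith)
  simpa [gw] using this

lemma tendsto_gw : Tendsto gw atTop (nhds 0) := by
  have := (tendsto_rpow_abs_mul_exp_neg_mul_sq_cocompact (a := 1 / 2) (by norm_num) 0).mono_left
    atTop_le_cocompact
  refine this.congr fun t => ?_
  simp [gw]

lemma tendsto_mul_gw : Tendsto (fun t => t * gw t) atTop (nhds 0) := by
  have := (tendsto_rpow_abs_mul_exp_neg_mul_sq_cocompact (a := 1 / 2) (by norm_num) 1).mono_left
    atTop_le_cocompact
  refine this.congr' ?_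
  filter_upwards [eventually_ge_atTop 0] with t ht
  simp [gw, abs_of_nonneg ht]

lemma integral_Ioi_id_gw (x : ℝ) : ∫ t in Set.Ioi x, t * gw t = gw x := by
  have := integral_Ioi_of_hasDerivAt_of_tendsto' (a := x) (f := fun t => -gw t)
    (f' := fun t => t * gw t) (m := 0)
    (fun t _ => (hasDerivAt_gw t).fun_neg.congr_deriv (by ring))
    (by simpa using (integrable_pow_gw 1).integrableOn) (by simpa using tendsto_gw.neg)
  simpa using this

lemma integral_Ioi_sq_gw (x : ℝ) :
    ∫ t in Set.Ioi x, t ^ 2 * gw t = x * gw x + ∫ t in Set.Ioi x, gw t := by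
  have h2 := (integrable_pow_gw 2).integrableOn (s := Set.Ioi x)
  have h0 := integrable_gw.integrableOn (s := Set.Ioi x)
  have := integral_Ioi_of_hasDerivAt_of_tendsto' (a := x) (f := fun t => -(t * gw t))
    (f' := fun t => t ^ 2 * gw t - gw t) (m := 0)
    (fun t _ => ((hasDerivAt_id' t).fun_mul (hasDerivAt_gw t)).fun_neg.congr_deriv (by ring))
    (h2.sub h0) (by simpa using tendsto_mul_gw.neg)
  rw [integral_sub h2 h0] at this
  linarith

/-- `x w(x) ≤ (1 + x²) ∫_x^∞ w`, obtained by integrating `(t - x)² w(t) ≥ 0` over `(x, ∞)`. -/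
lemma mills_lower (x : ℝ) : x * gw x ≤ (1 + x ^ 2) * ∫ t in Set.Ioi x, gw t := by
  have h2 := (integrable_pow_gw 2).integrableOn (s := Set.Ioi x)
  have h1 := (integrable_pow_gw 1).integrableOn (s := Set.Ioi x)
  have h0 := integrable_gw.integrableOn (s := Set.Ioi x)
  have key : 0 ≤ ∫ t in Set.Ioi x, (t ^ 2 * gw t - 2 * x * (t ^ 1 * gw t) + x ^ 2 * gw t) := by
    refine setIntegral_nonneg measurableSet_Ioi fun t _ => ?_
    have := mul_nonneg (sq_nonneg (t - x)) (gw_pos t).le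
    nlinarith
  have h21 : IntegrableOn (fun t => t ^ 2 * gw t - 2 * x * (t ^ 1 * gw t)) (Set.Ioi x) :=
    h2.sub (h1.const_mul _)
  rw [integral_add h21 (h0.const_mul _), integral_sub h2 (h1.const_mul _),
    integral_const_mul, integral_const_mul, integral_Ioi_sq_gw] at key
  simp only [pow_one, integral_Ioi_id_gw] at key
  nlinarith

lemma mills_upper (x : ℝ) : x * ∫ t in Set.Ioi x, gw t ≤ gw x := by
  have h1 := (integrable_pow_gw 1).integrableOn (s := Set.Ioi x)
  have h0 := integrable_gw.integrableOn (s := Set.Ioi x)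
  rw [← integral_const_mul, ← integral_Ioi_id_gw x]
  simp only [pow_one] at h1
  refine setIntegral_mono_on (h0.const_mul _) h1 measurableSet_Ioi fun t ht => ?_
  exact mul_le_mul_of_nonneg_right (le_of_lt ht) (gw_pos t).le

lemma mills_crude {x : ℝ} (hx : 0 ≤ x) (hx1 : x ≤ 1) : ∫ t in Set.Ioi x, gw t ≤ 6 * gw x := by
  have h1 : ∫ t in Set.Ioi x, gw t ≤ ∫ t, gw t :=
    setIntegral_le_integral integrable_gw (Eventually.of_forall fun t => (gw_pos t).le)
  have h2 : ∫ t, gw t ≤ 3 := by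
    have : ∫ t, gw t = √(Real.pi / (1 / 2)) := integral_gaussian (1 / 2)
    rw [this]
    refine Real.sqrt_le_iff.2 ⟨by norm_num, ?_⟩
    have := Real.pi_le_four
    linarith
  have h3 : 1 / 2 ≤ gw x := by
    unfold gw
    have := Real.add_one_le_exp (-(1 / 2) * x ^ 2)
    nlinarith
  linarith

/-- A Lipschitz function of size at most `1` at the origin has at most linear growth. -/
lemma abs_le_of_lip {k : ℝ → ℝ} (hk : LipschitzWith 1 k) (hk0 : |k 0| ≤ 1) (t : ℝ) :
    |k t| ≤ 1 + |t| := by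
  have := hk.dist_le_mul t 0
  simp only [Real.dist_eq, NNReal.coe_one, one_mul, sub_zero] at this
  have h2 := abs_sub_abs_le_abs_sub (k t) (k 0)
  linarith

lemma integrable_lip_gw {k : ℝ → ℝ} (hk : LipschitzWith 1 k) (hk0 : |k 0| ≤ 1) :
    Integrable (fun t => k t * gw t) := by
  refine Integrable.mono' (g := fun t => gw t + |t ^ 1 * gw t|)
    (integrable_gw.add (integrable_pow_gw 1).abs)
    (hk.continuous.mul continuous_gw).aestronglyMeasurable (Eventually.of_forall fun t => ?_)
  have := abs_le_of_lip hk hk0 t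
  simp only [pow_one, norm_mul, Real.norm_eq_abs, abs_mul, abs_of_pos (gw_pos t)]
  nlinarith [gw_pos t]

/-- The estimate behind the smoothness of the Stein solution: for `x ≥ 0` the two large terms
`(1 + x²) e^{x²/2} ∫_x^∞ k w` and `x k(x)` cancel up to a bounded error. -/
lemma stein_tail {k : ℝ → ℝ} (hk : LipschitzWith 1 k) (hk0 : |k 0| ≤ 1) {x : ℝ} (hx : 0 ≤ x) :
    |(1 + x ^ 2) * ((gw x)⁻¹ * ∫ t in Set.Ioi x, k t * gw t) - x * k x| ≤ 25 := by
  set A := ∫ t in Set.Ioi x, gw t with hA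
  have h1 := (integrable_pow_gw 1).integrableOn (s := Set.Ioi x)
  have h0 := integrable_gw.integrableOn (s := Set.Ioi x)
  have hkI := (integrable_lip_gw hk hk0).integrableOn (s := Set.Ioi x)
  simp only [pow_one] at h1
  have herr : |(∫ t in Set.Ioi x, k t * gw t) - k x * A| ≤ gw x - x * A := by
    rw [hA, ← integral_const_mul, ← integral_const_mul, ← integral_sub hkI (h0.const_mul _),
      ← integral_Ioi_id_gw x, ← integral_sub h1 (h0.const_mul _)]
    refine (abs_integral_le_integral_abs).trans ?_
    refine setIntegral_mono_on (hkI.sub (h0.const_mul _)).abs (h1.sub (h0.const_mul _))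
      measurableSet_Ioi fun t ht => ?_
    have := hk.dist_le_mul t x
    simp only [Real.dist_eq, NNReal.coe_one, one_mul] at this
    rw [abs_of_pos (sub_pos.2 (show x < t from ht))] at this
    rw [← sub_mul, ← sub_mul, abs_mul, abs_of_pos (gw_pos t)]
    exact mul_le_mul_of_nonneg_right this (gw_pos t).le
  have hw := gw_pos x
  have hl := mills_lower x
  have hu := mills_upper x
  rw [← hA] at hl hu
  have hkx := abs_le_of_lip hk hk0 x
  rw [abs_of_nonneg hx] at hkx
  set I := ∫ t in Set.Ioi x, k t * gw t
  have hA0 : 0 ≤ A := setIntegral_nonneg measurableSet_Ioi fun t _ => (gw_pos t).le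
  have e : (1 + x ^ 2) * ((gw x)⁻¹ * I) - x * k x
      = (gw x)⁻¹ * ((1 + x ^ 2) * (I - k x * A) + k x * ((1 + x ^ 2) * A - x * gw x)) := by
    field_simp; ring
  have b1 : |(1 + x ^ 2) * (I - k x * A)| ≤ gw x := by
    rw [abs_mul, abs_of_pos (by positivity : 0 < 1 + x ^ 2)]
    nlinarith
  have b2 : (1 + x) * ((1 + x ^ 2) * A - x * gw x) ≤ 24 * gw x := by
    rcases le_total x 1 with h | h
    · have := mills_crude hx h
      rw [← hA] at this
      have e1 : (1 + x ^ 2) * A - x * gw x ≤ 12 * gw x := by nlinarith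
      nlinarith
    · have e1 : x * ((1 + x ^ 2) * A - x * gw x) ≤ gw x := by nlinarith
      nlinarith
  have b3 : |k x * ((1 + x ^ 2) * A - x * gw x)| ≤ 24 * gw x := by
    rw [abs_mul, abs_of_nonneg (by linarith : 0 ≤ (1 + x ^ 2) * A - x * gw x)]
    exact (mul_le_mul_of_nonneg_right hkx (by linarith)).trans b2
  rw [e, abs_mul, abs_of_pos (inv_pos.2 hw)]
  have := (abs_add_le ((1 + x ^ 2) * (I - k x * A)) (k x * ((1 + x ^ 2) * A - x * gw x)))
  calc _ ≤ (gw x)⁻¹ * (25 * gw x) := by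
        refine mul_le_mul_of_nonneg_left ?_ (inv_pos.2 hw).le
        linarith
    _ = 25 := by field_simp

/-- Solution of Stein's equation `f' - x f = k` for a Gaussian-centred Lipschitz `k`, with `f'`
Lipschitz. -/
lemma stein_solution_centered {k : ℝ → ℝ} (hk : LipschitzWith 1 k) (hk0 : |k 0| ≤ 1)
    (hint : ∫ t, k t * gw t = 0) :
    ∃ f g : ℝ → ℝ, (∀ x, HasDerivAt f (g x) x) ∧ LipschitzWith 26 g ∧
      ∀ x, g x - x * f x = k x := by
  have hkI := integrable_lip_gw hk hk0
  have hkc : Continuous fun t => k t * gw t := hk.continuous.mul continuous_gw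
  set I : ℝ → ℝ := fun x => ∫ t in Set.Iic x, k t * gw t with hI
  have hId : ∀ x, HasDerivAt I (k x * gw x) x := by
    intro x
    have e : I = fun x => I 0 + ∫ t in (0 : ℝ)..x, k t * gw t := by
      ext y
      rw [← intervalIntegral.integral_Iic_sub_Iic hkI.integrableOn hkI.integrableOn]
      simp [hI]
    rw [e]
    exact (intervalIntegral.integral_hasDerivAt_right (hkc.intervalIntegrable _ _)
      (hkc.stronglyMeasurableAtFilter _ _) hkc.continuousAt).const_add _
  set f : ℝ → ℝ := fun x => (gw x)⁻¹ * I x with hf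
  have hfd : ∀ x, HasDerivAt f (x * f x + k x) x := by
    intro x
    refine ((hasDerivAt_gw_inv x).fun_mul (hId x)).congr_deriv ?_
    have := (gw_pos x).ne'
    simp only [hf]; field_simp
  have hQ : ∀ x, |(1 + x ^ 2) * f x + x * k x| ≤ 25 := by
    intro x
    rcases le_total 0 x with hx | hx
    · have h := stein_tail hk hk0 hx
      have e : f x = -((gw x)⁻¹ * ∫ t in Set.Ioi x, k t * gw t) := by
        have := intervalIntegral.integral_Iic_add_Ioi (b := x) (f := fun t => k t * gw t)
          (μ := volume) hkI.integrableOn hkI.integrableOn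
        rw [hint] at this
        simp only [hf, hI]
        rw [eq_neg_of_add_eq_zero_left this]; ring
      rw [e, ← abs_neg]
      convert h using 2; ring
    · have hk' : LipschitzWith 1 fun t => k (-t) := by
        refine LipschitzWith.of_dist_le_mul fun s t => ?_
        have := hk.dist_le_mul (-s) (-t)
        rwa [dist_neg_neg] at this
      have h := stein_tail hk' (by simpa using hk0) (neg_nonneg.2 hx)
      have e : (∫ t in Set.Ioi (-x), k (-t) * gw t) = I x := by
        rw [← integral_comp_neg_Iic x (fun t => k (-t) * gw t)]
        simp [hI, gw_neg]
      rw [e, gw_neg] at h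
      convert h using 2; simp only [hf, neg_neg]; ring
  refine ⟨f, fun x => x * f x + k x, hfd, ?_, fun x => by ring⟩
  have hL : LipschitzWith 25 fun x => x * f x := by
    have hd : ∀ x, HasDerivAt (fun x => x * f x) ((1 + x ^ 2) * f x + x * k x) x := by
      intro x
      exact ((hasDerivAt_id' x).fun_mul (hfd x)).congr_deriv (by ring)
    refine lipschitzWith_of_nnnorm_deriv_le (fun x => (hd x).differentiableAt) fun x => ?_
    rw [(hd x).deriv, ← NNReal.coe_le_coe]
    simpa using hQ x
  have := hL.add hk
  rwa [show (25 : NNReal) + 1 = 26 by norm_num] at this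

/-- Every `1`-Lipschitz `h` admits a solution of Stein's equation with a `26`-Lipschitz
derivative. -/
lemma stein_solution {h : ℝ → ℝ} (hh : LipschitzWith 1 h) :
    ∃ f g : ℝ → ℝ, (∀ x, HasDerivAt f (g x) x) ∧ LipschitzWith 26 g ∧
      ∀ x, g x - x * f x = h x - ∫ t, h t ∂ProbabilityTheory.gaussianReal 0 1 := by
  set γ := ProbabilityTheory.gaussianReal 0 1 with hγ
  have hsq : Integrable (fun t : ℝ => t ^ 2) γ := by
    have := (ProbabilityTheory.memLp_id_gaussianReal (μ := 0) (v := 1) 2).integrable_sq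
    simpa using this
  have hsq1 : ∫ t, t ^ 2 ∂γ = 1 := by
    have h1 := ProbabilityTheory.variance_id_gaussianReal (μ := 0) (v := 1)
    rw [ProbabilityTheory.variance_eq_integral aemeasurable_id] at h1
    simpa [ProbabilityTheory.integral_id_gaussianReal] using h1
  have hlip : ∀ t, |h t - h 0| ≤ |t| := by
    intro t
    have := hh.dist_le_mul t 0
    simpa [Real.dist_eq] using this
  have hbd : ∀ t, |h t - h 0| ≤ (1 + t ^ 2) / 2 := by
    intro t
    have := hlip t
    nlinarith [sq_nonneg (|t| - 1), sq_abs t]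
  have hi0 : Integrable (fun t => h t - h 0) γ := by
    refine Integrable.mono' (((integrable_const 1).add hsq).div_const 2)
      (hh.continuous.sub continuous_const).aestronglyMeasurable (Eventually.of_forall hbd)
  have hi : Integrable h γ := by
    refine (hi0.add (integrable_const (h 0))).congr (Eventually.of_forall fun t => ?_)
    simp
  set m := ∫ t, h t ∂γ with hm
  have hk : LipschitzWith 1 fun t => h t - m := by
    refine LipschitzWith.of_dist_le_mul fun s t => ?_
    simpa using hh.dist_le_mul s t
  have hk0 : |h 0 - m| ≤ 1 := by
    have e : h 0 - m = - ∫ t, (h t - h 0) ∂γ := by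
      rw [integral_sub hi (integrable_const _)]; simp [hm]
    rw [e, abs_neg]
    refine abs_integral_le_integral_abs.trans ?_
    refine (integral_mono hi0.abs (((integrable_const 1).add hsq).div_const 2) hbd).trans ?_
    have : ∫ t, ((fun _ => (1 : ℝ)) t + t ^ 2) / 2 ∂γ = 1 := by
      rw [integral_div, integral_add (integrable_const _) hsq, hsq1]; simp
    exact this.le
  refine stein_solution_centered hk hk0 ?_
  have e : ∫ t, (h t - m) ∂γ = 0 := by
    rw [integral_sub hi (integrable_const _)]; simp [hm]
  rw [hγ, ProbabilityTheory.integral_gaussianReal_eq_integral_smul one_ne_zero] at e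
  have e2 : ∀ t, ProbabilityTheory.gaussianPDFReal 0 1 t • (h t - m)
      = (√(2 * Real.pi))⁻¹ * ((h t - m) * gw t) := by
    intro t
    simp only [ProbabilityTheory.gaussianPDFReal, gw, smul_eq_mul, NNReal.coe_one, mul_one,
      sub_zero]
    rw [show -t ^ 2 / 2 = -(1 / 2) * t ^ 2 by ring]; ring
  simp_rw [e2] at e
  rw [integral_const_mul] at e
  rcases mul_eq_zero.1 e with h' | h'
  · exact absurd h' (by positivity)
  · exact h'

/-! ### Independent copies of a bounded variable -/

/-- The law of `k` independent real variables with common distribution `μ`. -/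
noncomputable abbrev iidPi (k : ℕ) (μ : Measure ℝ) : Measure (Fin k → ℝ) :=
  Measure.pi fun _ : Fin k => μ

section iid

variable {k : ℕ} {μ : Measure ℝ} [IsProbabilityMeasure μ] {a b : ℝ}

lemma iidPi_ae_box (hμ : ∀ᵐ x ∂μ, x ∈ Set.Icc a b) :
    ∀ᵐ x ∂iidPi k μ, ∀ i, x i ∈ Set.Icc a b := by
  rw [ae_all_iff]
  intro i
  exact (measurePreserving_eval (fun _ : Fin k => μ) i).quasiMeasurePreserving.ae hμ

lemma integrable_of_continuous (hμ : ∀ᵐ x ∂μ, x ∈ Set.Icc a b) {g : ℝ → ℝ}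
    (hg : Continuous g) : Integrable g μ := by
  obtain ⟨C, hC⟩ := (isCompact_Icc (a := a) (b := b)).exists_bound_of_continuousOn hg.continuousOn
  exact Integrable.of_bound hg.aestronglyMeasurable C (hμ.mono fun x hx => hC x hx)

lemma iidPi_integrable (hμ : ∀ᵐ x ∂μ, x ∈ Set.Icc a b) {g : (Fin k → ℝ) → ℝ}
    (hg : Continuous g) : Integrable g (iidPi k μ) := by
  obtain ⟨C, hC⟩ := (isCompact_Icc (a := fun _ : Fin k => a)
    (b := fun _ => b)).exists_bound_of_continuousOn hg.continuousOn
  exact Integrable.of_bound hg.aestronglyMeasurable C ((iidPi_ae_box hμ).mono fun x hx =>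
    hC x ⟨fun i => (hx i).1, fun i => (hx i).2⟩)

lemma iidPi_eval {ψ : ℝ → ℝ} (hψ : AEStronglyMeasurable ψ μ) (i : Fin k) :
    ∫ x, ψ (x i) ∂iidPi k μ = ∫ u, ψ u ∂μ :=
  integral_comp_eval (μ := fun _ : Fin k => μ) hψ

/-- Replacing one coordinate by an independent copy does not change the joint law. -/
lemma measurePreserving_resample (i : Fin k) :
    MeasurePreserving (fun p : (Fin k → ℝ) × ℝ => Function.update p.1 i p.2)
      ((iidPi k μ).prod μ) (iidPi k μ) := by
  refine ⟨measurable_update', ?_⟩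
  symm
  refine Measure.pi_eq fun s hs => ?_
  rw [Measure.map_apply measurable_update' (MeasurableSet.univ_pi hs)]
  have e : (fun p : (Fin k → ℝ) × ℝ => Function.update p.1 i p.2) ⁻¹' (Set.univ.pi s)
      = (Set.univ.pi (Function.update s i Set.univ)) ×ˢ s i := by
    ext ⟨x, u⟩
    simp only [Set.mem_preimage, Set.mem_pi, Set.mem_univ, forall_const, Set.mem_prod]
    constructor
    · intro h
      refine ⟨fun j => ?_, by simpa using h i⟩
      by_cases hj : j = i
      · subst hj; simp
      · simpa [hj] using h j
    · rintro ⟨h1, h2⟩ j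
      by_cases hj : j = i
      · subst hj; simpa using h2
      · simpa [hj] using h1 j
  rw [e, Measure.prod_prod, Measure.pi_pi, ← Finset.mul_prod_erase _ _ (Finset.mem_univ i),
    ← Finset.mul_prod_erase Finset.univ (fun i => μ (s i)) (Finset.mem_univ i)]
  have : ∏ j ∈ Finset.univ.erase i, μ (Function.update s i Set.univ j)
      = ∏ j ∈ Finset.univ.erase i, μ (s j) :=
    Finset.prod_congr rfl fun j hj => by rw [Function.update_of_ne (Finset.ne_of_mem_erase hj)]
  rw [this]
  simp [mul_comm]

lemma iidPi_resample (i : Fin k) {G : (Fin k → ℝ) → ℝ} (hG : Integrable G (iidPi k μ)) :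
    ∫ x, G x ∂iidPi k μ = ∫ x, ∫ u, G (Function.update x i u) ∂μ ∂iidPi k μ := by
  have hmp := measurePreserving_resample (k := k) (μ := μ) i
  have h1 : ∫ p, G (Function.update p.1 i p.2) ∂((iidPi k μ).prod μ) = ∫ x, G x ∂iidPi k μ := by
    have h := integral_map (f := G) hmp.measurable.aemeasurable
      (by rw [hmp.map_eq]; exact hG.aestronglyMeasurable)
    rw [hmp.map_eq] at h
    exact h.symm
  rw [← h1, integral_prod]
  exact hmp.integrable_comp_of_integrable hG

/-- Independence: a function not depending on the `i`-th coordinate factors out. -/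
lemma iidPi_mul (i : Fin k) {H : (Fin k → ℝ) → ℝ} {ψ : ℝ → ℝ}
    (hH : ∀ x u, H (Function.update x i u) = H x)
    (hI : Integrable (fun x => H x * ψ (x i)) (iidPi k μ)) :
    ∫ x, H x * ψ (x i) ∂iidPi k μ = (∫ x, H x ∂iidPi k μ) * ∫ u, ψ u ∂μ := by
  rw [iidPi_resample i hI]
  simp only [hH, Function.update_self, integral_const_mul, integral_mul_const]

/-- Moments up to order four of a weighted sum of independent centred variables. -/
lemma iidPi_sum_moments (hμ : ∀ᵐ x ∂μ, x ∈ Set.Icc a b) {ψ : ℝ → ℝ} (hψ : Continuous ψ)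
    (h0 : ∫ u, ψ u ∂μ = 0) (β : Fin k → ℝ) (s : Finset (Fin k)) :
    (∫ x, ∑ i ∈ s, β i * ψ (x i) ∂iidPi k μ = 0) ∧
    (∫ x, (∑ i ∈ s, β i * ψ (x i)) ^ 2 ∂iidPi k μ = (∑ i ∈ s, β i ^ 2) * ∫ u, ψ u ^ 2 ∂μ) ∧
    (∫ x, (∑ i ∈ s, β i * ψ (x i)) ^ 4 ∂iidPi k μ
      ≤ (∑ i ∈ s, β i ^ 4) * (∫ u, ψ u ^ 4 ∂μ)
        + 3 * (∑ i ∈ s, β i ^ 2) ^ 2 * (∫ u, ψ u ^ 2 ∂μ) ^ 2) := by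
  classical
  induction s using Finset.induction_on with
  | empty => simp
  | insert j s hj ih =>
    obtain ⟨i1, i2, i4⟩ := ih
    set S : (Fin k → ℝ) → ℝ := fun x => ∑ i ∈ s, β i * ψ (x i) with hS
    have hSc : Continuous S := by fun_prop
    have hSu : ∀ x u, S (Function.update x j u) = S x := by
      intro x u
      refine Finset.sum_congr rfl fun i hi => ?_
      rw [Function.update_of_ne (by rintro rfl; exact hj hi)]
    have key : ∀ p q : ℕ, ∫ x, S x ^ p * ψ (x j) ^ q ∂iidPi k μ
        = (∫ x, S x ^ p ∂iidPi k μ) * ∫ u, ψ u ^ q ∂μ := fun p q =>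
      iidPi_mul (H := fun x => S x ^ p) (ψ := fun u => ψ u ^ q) j (fun x u => by simp only [hSu])
        (iidPi_integrable hμ (by fun_prop))
    have I : ∀ p q : ℕ, Integrable (fun x => S x ^ p * ψ (x j) ^ q) (iidPi k μ) := fun p q =>
      iidPi_integrable hμ (by fun_prop)
    simp only [Finset.sum_insert hj]
    change (∫ x, S x ∂_ = 0) at i1
    change (∫ x, S x ^ 2 ∂_ = _) at i2
    change (∫ x, S x ^ 4 ∂_ ≤ _) at i4
    have k01 := key 0 1
    have k10 := key 1 0
    have k20 := key 2 0
    have k11 := key 1 1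
    have k02 := key 0 2
    have k40 := key 4 0
    have k31 := key 3 1
    have k22 := key 2 2
    have k13 := key 1 3
    have k04 := key 0 4
    simp only [pow_zero, pow_one, one_mul, mul_one, integral_const, probReal_univ, smul_eq_mul,
      h0, i1, mul_zero, zero_mul] at k01 k10 k20 k11 k02 k40 k31 k22 k13 k04
    refine ⟨?_, ?_, ?_⟩
    · have e : ∀ x : Fin k → ℝ, β j * ψ (x j) + ∑ i ∈ s, β i * ψ (x i)
          = β j * (S x ^ 0 * ψ (x j) ^ 1) + (S x ^ 1 * ψ (x j) ^ 0) := by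
        intro x; simp [hS]
      simp_rw [e]
      rw [integral_add ((I 0 1).const_mul _) (I 1 0), integral_const_mul]
      simp [k01, i1]
    · have e : ∀ x : Fin k → ℝ, (β j * ψ (x j) + ∑ i ∈ s, β i * ψ (x i)) ^ 2
          = β j ^ 2 * (S x ^ 0 * ψ (x j) ^ 2) + (2 * β j * (S x ^ 1 * ψ (x j) ^ 1)
            + (S x ^ 2 * ψ (x j) ^ 0)) := by
        intro x; simp only [hS]; ring
      simp_rw [e]
      rw [integral_add ((I 0 2).const_mul _) (iidPi_integrable hμ (by fun_prop)),
        integral_add ((I 1 1).const_mul _) (I 2 0), integral_const_mul, integral_const_mul]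
      simp only [pow_zero, pow_one, one_mul, mul_one, k02, k11, i2]
      ring
    · have e : ∀ x : Fin k → ℝ, (β j * ψ (x j) + ∑ i ∈ s, β i * ψ (x i)) ^ 4
          = β j ^ 4 * (S x ^ 0 * ψ (x j) ^ 4) + (4 * β j ^ 3 * (S x ^ 1 * ψ (x j) ^ 3)
            + (6 * β j ^ 2 * (S x ^ 2 * ψ (x j) ^ 2) + (4 * β j * (S x ^ 3 * ψ (x j) ^ 1)
            + (S x ^ 4 * ψ (x j) ^ 0)))) := by
        intro x; simp only [hS]; ring
      simp_rw [e]
      rw [integral_add ((I 0 4).const_mul _) (iidPi_integrable hμ (by fun_prop)),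
        integral_add ((I 1 3).const_mul _) (iidPi_integrable hμ (by fun_prop)),
        integral_add ((I 2 2).const_mul _) (iidPi_integrable hμ (by fun_prop)),
        integral_add ((I 3 1).const_mul _) (I 4 0)]
      simp only [integral_const_mul]
      simp only [pow_zero, pow_one, one_mul, mul_one, k04, k13, k22, k31, i2]
      have := mul_nonneg (sq_nonneg (β j ^ 2)) (sq_nonneg (∫ u, ψ u ^ 2 ∂μ))
      nlinarith

end iid

lemma integral_mul_sq_le {Ω : Type*} [MeasurableSpace Ω] {P : Measure Ω} {f g : Ω → ℝ}
    (hf : Integrable (fun x => f x ^ 2) P) (hg : Integrable (fun x => g x ^ 2) P)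
    (hfg : Integrable (fun x => f x * g x) P) :
    (∫ x, f x * g x ∂P) ^ 2 ≤ (∫ x, f x ^ 2 ∂P) * ∫ x, g x ^ 2 ∂P := by
  have h : ∀ t : ℝ, 0 ≤ (∫ x, g x ^ 2 ∂P) * (t * t) + (2 * ∫ x, f x * g x ∂P) * t
      + ∫ x, f x ^ 2 ∂P := by
    intro t
    have h0 : 0 ≤ ∫ x, (f x + t * g x) ^ 2 ∂P := integral_nonneg fun x => sq_nonneg _
    have e : ∀ x, (f x + t * g x) ^ 2
        = t * t * g x ^ 2 + (2 * t * (f x * g x) + f x ^ 2) := fun x => by ring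
    simp_rw [e] at h0
    have J : Integrable (fun x => 2 * t * (f x * g x) + f x ^ 2) P := (hfg.const_mul _).add hf
    rw [integral_add (hg.const_mul _) J,
      integral_add (hfg.const_mul _) hf, integral_const_mul, integral_const_mul] at h0
    linarith
  have := discrim_le_zero h
  unfold discrim at this
  nlinarith

lemma sqrt_integral_add_sq_le {Ω : Type*} [MeasurableSpace Ω] {P : Measure Ω} {f g : Ω → ℝ}
    (hf : Integrable (fun x => f x ^ 2) P) (hg : Integrable (fun x => g x ^ 2) P)
    (hfg : Integrable (fun x => f x * g x) P) :
    √(∫ x, (f x + g x) ^ 2 ∂P) ≤ √(∫ x, f x ^ 2 ∂P) + √(∫ x, g x ^ 2 ∂P) := by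
  have hcs := integral_mul_sq_le hf hg hfg
  have hf0 : 0 ≤ ∫ x, f x ^ 2 ∂P := integral_nonneg fun x => sq_nonneg _
  have hg0 : 0 ≤ ∫ x, g x ^ 2 ∂P := integral_nonneg fun x => sq_nonneg _
  refine Real.sqrt_le_iff.2 ⟨by positivity, ?_⟩
  have e : ∀ x, (f x + g x) ^ 2 = f x ^ 2 + (2 * (f x * g x) + g x ^ 2) := fun x => by ring
  simp_rw [e]
  have J : Integrable (fun x => 2 * (f x * g x) + g x ^ 2) P := (hfg.const_mul _).add hg
  rw [integral_add hf J, integral_add (hfg.const_mul _) hg,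
    integral_const_mul, add_sq, Real.sq_sqrt hf0, Real.sq_sqrt hg0, mul_assoc,
    ← Real.sqrt_mul hf0]
  have := Real.abs_le_sqrt hcs
  have := le_abs_self (∫ x, f x * g x ∂P)
  linarith

/-! ### The Stein discrepancy: contraction and perturbation -/

/-- `W` satisfies Stein's identity up to `δ`: `|E[f'(W) - W f(W)]| ≤ δ` for every differentiable
`f` with `1`-Lipschitz derivative. For `W` centred with unit variance, the least such `δ` is the
Wasserstein distance from `W` to its zero-bias transform. -/
def SteinBound {Ω : Type*} [MeasurableSpace Ω] (P : Measure Ω) (W : Ω → ℝ) (δ : ℝ) : Prop :=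
  ∀ f g : ℝ → ℝ, (∀ x, HasDerivAt f (g x) x) → LipschitzWith 1 g →
    |∫ ω, (g (W ω) - W ω * f (W ω)) ∂P| ≤ δ

lemma SteinBound.mono {Ω : Type*} [MeasurableSpace Ω] {P : Measure Ω} {W : Ω → ℝ} {δ δ' : ℝ}
    (h : SteinBound P W δ) (hδ : δ ≤ δ') : SteinBound P W δ' :=
  fun f g hf hg => (h f g hf hg).trans hδ

lemma SteinBound.scaled {Ω : Type*} [MeasurableSpace Ω] {P : Measure Ω} {W : Ω → ℝ} {δ : ℝ}
    (h : SteinBound P W δ) {K : NNReal} (hK : 0 < K) {f g : ℝ → ℝ}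
    (hf : ∀ x, HasDerivAt f (g x) x) (hg : LipschitzWith K g) :
    |∫ ω, (g (W ω) - W ω * f (W ω)) ∂P| ≤ K * δ := by
  have hK' : (0 : ℝ) < K := hK
  have := h (fun x => (K : ℝ)⁻¹ * f x) (fun x => (K : ℝ)⁻¹ * g x)
    (fun x => (hf x).const_mul _) (by
      refine LipschitzWith.of_dist_le_mul fun x y => ?_
      have := hg.dist_le_mul x y
      rw [Real.dist_eq] at this ⊢
      rw [← mul_sub, abs_mul, abs_of_pos (inv_pos.2 hK'), NNReal.coe_one, one_mul,
        inv_mul_le_iff₀ hK']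
      exact this)
  have e : ∀ ω, (K : ℝ)⁻¹ * g (W ω) - W ω * ((K : ℝ)⁻¹ * f (W ω))
      = (K : ℝ)⁻¹ * (g (W ω) - W ω * f (W ω)) := fun ω => by ring
  simp_rw [e] at this
  rwa [integral_const_mul, abs_mul, abs_of_pos (inv_pos.2 hK'), inv_mul_le_iff₀ hK'] at this

/-- A weighted sum `∑ βᵢ Zᵢ` of independent copies with `∑ βᵢ² = 1` contracts the Stein
discrepancy by the factor `∑ |βᵢ|³`. -/
lemma SteinBound.contract {k : ℕ} {μ : Measure ℝ} [IsProbabilityMeasure μ] {a b : ℝ}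
    (hμ : ∀ᵐ x ∂μ, x ∈ Set.Icc a b) {Z : ℝ → ℝ} (hZ : Continuous Z) {δ : ℝ}
    (h : SteinBound μ Z δ) (β : Fin k → ℝ) (hβ : ∑ i, β i ^ 2 = 1) :
    SteinBound (iidPi k μ) (fun x => ∑ i, β i * Z (x i)) ((∑ i, |β i| ^ 3) * δ) := by
  intro f g hf hg
  have hfc : Continuous f := continuous_iff_continuousAt.2 fun x => (hf x).continuousAt
  have hgc : Continuous g := hg.continuous
  set T : (Fin k → ℝ) → ℝ := fun x => ∑ i, β i * Z (x i) with hT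
  have hTc : Continuous T := by fun_prop
  have e : ∀ x, g (T x) - T x * f (T x)
      = ∑ i, (β i ^ 2 * g (T x) - β i * Z (x i) * f (T x)) := by
    intro x
    rw [Finset.sum_sub_distrib, ← Finset.sum_mul, ← Finset.sum_mul, hβ, one_mul]
  change |∫ x, (g (T x) - T x * f (T x)) ∂_| ≤ _
  have hI : ∀ i, Integrable (fun x => β i ^ 2 * g (T x) - β i * Z (x i) * f (T x))
      (iidPi k μ) := fun i => iidPi_integrable hμ (by fun_prop)
  simp_rw [e]
  rw [integral_finsetSum _ fun i _ => hI i, Finset.sum_mul]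
  refine (Finset.abs_sum_le_sum_abs _ _).trans (Finset.sum_le_sum fun i _ => ?_)
  rcases eq_or_ne (β i) 0 with h0 | h0
  · simp [h0]
  rw [iidPi_resample i (hI i)]
  -- freezing the other coordinates, the `i`-th contribution is a Stein expression for `Z` and the
  -- rescaled function `w ↦ f (r + βᵢ w)`
  have hin : ∀ x, |∫ u, (β i ^ 2 * g (T (Function.update x i u))
      - β i * Z (Function.update x i u i) * f (T (Function.update x i u))) ∂μ|
      ≤ |β i| ^ 3 * δ := by
    intro x
    set r := ∑ j ∈ Finset.univ.erase i, β j * Z (x j) with hr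
    have hTu : ∀ u, T (Function.update x i u) = r + β i * Z u := by
      intro u
      simp only [hT]
      rw [← Finset.add_sum_erase _ _ (Finset.mem_univ i), Function.update_self, add_comm, hr]
      congr 1
      exact Finset.sum_congr rfl fun j hj => by
        rw [Function.update_of_ne (Finset.ne_of_mem_erase hj)]
    have hd : ∀ w, HasDerivAt (fun w => f (r + β i * w)) (β i * g (r + β i * w)) w := by
      intro w
      have h1 : HasDerivAt (fun w => r + β i * w) (β i) w := by
        simpa using ((hasDerivAt_id w).const_mul (β i)).const_add r
      exact ((hf (r + β i * w)).comp w h1).congr_deriv (by ring)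
    have hl : LipschitzWith (Real.toNNReal (β i ^ 2)) fun w => β i * g (r + β i * w) := by
      refine LipschitzWith.of_dist_le_mul fun s t => ?_
      have := hg.dist_le_mul (r + β i * s) (r + β i * t)
      rw [Real.dist_eq, Real.dist_eq, NNReal.coe_one, one_mul, add_sub_add_left_eq_sub,
        ← mul_sub, abs_mul] at this
      rw [Real.dist_eq, Real.dist_eq, Real.coe_toNNReal _ (sq_nonneg _), ← mul_sub, abs_mul,
        ← sq_abs (β i), sq, mul_assoc]
      exact mul_le_mul_of_nonneg_left this (abs_nonneg _)
    have hb := h.scaled (K := Real.toNNReal (β i ^ 2))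
      (Real.toNNReal_pos.2 (by positivity)) hd hl
    have e2 : ∀ u, β i ^ 2 * g (T (Function.update x i u))
        - β i * Z (Function.update x i u i) * f (T (Function.update x i u))
        = β i * (β i * g (r + β i * Z u) - Z u * f (r + β i * Z u)) := by
      intro u
      rw [hTu, Function.update_self]; ring
    simp_rw [e2]
    rw [integral_const_mul, abs_mul]
    rw [Real.coe_toNNReal _ (sq_nonneg _)] at hb
    calc _ ≤ |β i| * (β i ^ 2 * δ) := mul_le_mul_of_nonneg_left hb (abs_nonneg _)
      _ = |β i| ^ 3 * δ := by rw [← sq_abs (β i)]; ring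
  have := norm_integral_le_of_norm_le_const (μ := iidPi k μ) (C := |β i| ^ 3 * δ)
    (f := fun x => ∫ u, (β i ^ 2 * g (T (Function.update x i u))
      - β i * Z (Function.update x i u i) * f (T (Function.update x i u))) ∂μ)
    (Eventually.of_forall hin)
  simpa using this

/-- The Stein integrand `g - x f`, when `f` and `g = f'` vanish at the origin, is locally Lipschitz
with quadratically growing constant. -/
lemma stein_integrand_sub {f g : ℝ → ℝ} (hf : ∀ x, HasDerivAt f (g x) x)
    (hg : LipschitzWith 1 g) (hf0 : f 0 = 0) (hg0 : g 0 = 0) (x y : ℝ) :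
    |(g y - y * f y) - (g x - x * f x)| ≤ |y - x| * (1 + 2 * (x ^ 2 + y ^ 2)) := by
  have hgb : ∀ t, |g t| ≤ |t| := by
    intro t
    have := hg.dist_le_mul t 0
    simpa [Real.dist_eq, hg0] using this
  have hfb : ∀ t, |f t| ≤ |t| * |t| := by
    intro t
    have := (convex_uIcc (0 : ℝ) t).norm_image_sub_le_of_norm_hasDerivWithin_le (f := f) (f' := g)
      (C := |t|) (fun s _ => (hf s).hasDerivWithinAt)
      (fun s hs => (hgb s).trans (by
        have := Set.abs_sub_left_of_mem_uIcc hs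
        simpa using this)) Set.left_mem_uIcc Set.right_mem_uIcc
    simpa [hf0] using this
  have hd : ∀ t, HasDerivAt (fun t => t * f t) (f t + t * g t) t := fun t =>
    ((hasDerivAt_id' t).fun_mul (hf t)).congr_deriv (by ring)
  have h1 := (convex_uIcc x y).norm_image_sub_le_of_norm_hasDerivWithin_le
      (f := fun t => t * f t) (f' := fun t => f t + t * g t)
      (C := 2 * (x ^ 2 + y ^ 2)) (fun s _ => (hd s).hasDerivWithinAt)
      (fun s hs => by
        have h2 : s ^ 2 ≤ x ^ 2 + y ^ 2 := by
          rcases Set.mem_uIcc.1 hs with h | h <;> rcases le_total 0 s with h0 | h0 <;>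
            nlinarith [sq_nonneg x, sq_nonneg y]
        have h3 := hgb s
        have h4 := hfb s
        rw [Real.norm_eq_abs]
        calc _ ≤ |f s| + |s| * |g s| := by rw [← abs_mul]; exact abs_add_le _ _
          _ ≤ |s| * |s| + |s| * |s| :=
            add_le_add h4 (mul_le_mul_of_nonneg_left h3 (abs_nonneg _))
          _ ≤ _ := by rw [abs_mul_abs_self]; nlinarith)
      Set.left_mem_uIcc Set.right_mem_uIcc
  have h2 := hg.dist_le_mul y x
  rw [Real.dist_eq, Real.dist_eq, NNReal.coe_one, one_mul] at h2
  rw [Real.norm_eq_abs, Real.norm_eq_abs] at h1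
  calc _ = |(g y - g x) - (y * f y - x * f x)| := by ring_nf
    _ ≤ |g y - g x| + |y * f y - x * f x| := abs_sub _ _
    _ ≤ _ := by linarith

section perturb

variable {Ω : Type*} [MeasurableSpace Ω] [TopologicalSpace Ω] {P : Measure Ω}
  [IsProbabilityMeasure P]

/-- Subtracting an affine function from `f` does not change the Stein expectation of a centred
variable of unit variance. -/
lemma stein_normalize (hP : ∀ g : Ω → ℝ, Continuous g → Integrable g P) {W : Ω → ℝ}
    (hW : Continuous W) (hm : ∫ ω, W ω ∂P = 0) (hv : ∫ ω, W ω ^ 2 ∂P = 1) {f g : ℝ → ℝ}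
    (hfc : Continuous f) (hgc : Continuous g) :
    ∫ ω, ((g (W ω) - g 0) - W ω * (f (W ω) - f 0 - g 0 * W ω)) ∂P
      = ∫ ω, (g (W ω) - W ω * f (W ω)) ∂P := by
  have e : ∀ ω, (g (W ω) - g 0) - W ω * (f (W ω) - f 0 - g 0 * W ω)
      = (g (W ω) - W ω * f (W ω)) + (f 0 * W ω + (g 0 * W ω ^ 2 - g 0)) := fun ω => by ring
  simp_rw [e]
  rw [integral_add (hP _ (by fun_prop)) (hP _ (by fun_prop)),
    integral_add (hP _ (by fun_prop)) (hP _ (by fun_prop)),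
    integral_sub (f := fun ω => g 0 * W ω ^ 2) (hP _ (by fun_prop)) (hP _ (by fun_prop)),
    integral_const_mul, integral_const_mul, hm, hv]
  simp

lemma hasDerivAt_normalize {f g : ℝ → ℝ} (hf : ∀ x, HasDerivAt f (g x) x) (x : ℝ) :
    HasDerivAt (fun x => f x - f 0 - g 0 * x) (g x - g 0) x :=
  (((hf x).sub_const (f 0)).fun_sub ((hasDerivAt_id' x).const_mul (g 0))).congr_deriv (by simp)

lemma lipschitz_normalize {g : ℝ → ℝ} (hg : LipschitzWith 1 g) :
    LipschitzWith 1 fun x => g x - g 0 :=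
  LipschitzWith.of_dist_le_mul fun s t => by simpa using hg.dist_le_mul s t

/-- Stability of the Stein bound under replacing `T` by `W`: for mean zero and unit variance, the test
function may be normalized by an affine function so that the Stein integrand is locally Lipschitz with
a quadratically growing constant. -/
lemma SteinBound.perturb (hP : ∀ g : Ω → ℝ, Continuous g → Integrable g P) {T W : Ω → ℝ}
    (hT : Continuous T) (hW : Continuous W)
    (hTm : ∫ ω, T ω ∂P = 0) (hTv : ∫ ω, T ω ^ 2 ∂P = 1)
    (hWm : ∫ ω, W ω ∂P = 0) (hWv : ∫ ω, W ω ^ 2 ∂P = 1) {δ : ℝ} (h : SteinBound P T δ) :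
    SteinBound P W (δ + ∫ ω, |W ω - T ω| * (1 + 2 * (T ω ^ 2 + W ω ^ 2)) ∂P) := by
  intro f g hf hg
  have hfc : Continuous f := continuous_iff_continuousAt.2 fun x => (hf x).continuousAt
  have hgc : Continuous g := hg.continuous
  have h1 := h f g hf hg
  rw [← stein_normalize hP hT hTm hTv hfc hgc] at h1
  rw [← stein_normalize hP hW hWm hWv hfc hgc]
  set ψ : ℝ → ℝ := fun x => (g x - g 0) - x * (f x - f 0 - g 0 * x) with hψ
  have hψc : Continuous ψ := by fun_prop
  change |∫ ω, ψ (W ω) ∂P| ≤ _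
  change |∫ ω, ψ (T ω) ∂P| ≤ _ at h1
  have h2 : |∫ ω, (ψ (W ω) - ψ (T ω)) ∂P|
      ≤ ∫ ω, |W ω - T ω| * (1 + 2 * (T ω ^ 2 + W ω ^ 2)) ∂P := by
    refine abs_integral_le_integral_abs.trans (integral_mono (hP _ (by fun_prop))
      (hP _ (by fun_prop)) fun ω => ?_)
    exact stein_integrand_sub (hasDerivAt_normalize hf) (lipschitz_normalize hg) (by simp)
      (by simp) (T ω) (W ω)
  rw [integral_sub (hP _ (by fun_prop)) (hP _ (by fun_prop))] at h2
  have := abs_sub_abs_le_abs_sub (∫ ω, ψ (W ω) ∂P) (∫ ω, ψ (T ω) ∂P)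
  linarith

/-- A centred variable of unit variance with enough moments has finite Stein discrepancy. -/
lemma exists_steinBound (hP : ∀ g : Ω → ℝ, Continuous g → Integrable g P) {W : Ω → ℝ}
    (hW : Continuous W) (hWm : ∫ ω, W ω ∂P = 0) (hWv : ∫ ω, W ω ^ 2 ∂P = 1) :
    ∃ δ, 0 ≤ δ ∧ SteinBound P W δ := by
  refine ⟨∫ ω, |W ω| * (1 + 2 * W ω ^ 2) ∂P, integral_nonneg fun ω => by positivity, ?_⟩
  intro f g hf hg
  have hfc : Continuous f := continuous_iff_continuousAt.2 fun x => (hf x).continuousAt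
  have hgc : Continuous g := hg.continuous
  rw [← stein_normalize hP hW hWm hWv hfc hgc]
  refine abs_integral_le_integral_abs.trans (integral_mono (hP _ (by fun_prop))
    (hP _ (by fun_prop)) fun ω => ?_)
  have := stein_integrand_sub (hasDerivAt_normalize hf) (lipschitz_normalize hg) (by simp)
      (by simp) 0 (W ω)
  simpa using this

end perturb

/-! ### Inequalities between the sums of powers of the weights -/

section weights

variable {k : ℕ} {α : Fin k → ℝ}

lemma exists_ne_zero_of_not_basis (hk : 2 ≤ k)
    (hbasis : ¬ ∃ (i : Fin k) (r : ℝ), α = r • (Pi.single i 1 : Fin k → ℝ)) :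
    ∃ i j, i ≠ j ∧ α i ≠ 0 ∧ α j ≠ 0 := by
  by_contra hcon
  push Not at hcon
  apply hbasis
  by_cases h : ∃ i, α i ≠ 0
  · obtain ⟨i, hi⟩ := h
    refine ⟨i, α i, funext fun j => ?_⟩
    by_cases hj : j = i
    · subst hj; simp
    · simp [hj, hcon i j (Ne.symm hj) hi]
  · push Not at h
    exact ⟨⟨0, by omega⟩, 0, by ext j; simp [h]⟩

lemma sqrt_sum_sq_pos {i : Fin k} (hi : α i ≠ 0) : 0 < Real.sqrt (∑ i, α i ^ 2) := by
  refine Real.sqrt_pos.2 (lt_of_lt_of_le (by positivity : 0 < α i ^ 2) ?_)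
  exact Finset.single_le_sum (f := fun i => α i ^ 2) (fun j _ => sq_nonneg _) (Finset.mem_univ i)

lemma abs_lt_sqrt_sum_sq {i j : Fin k} (hij : i ≠ j) (hi : α i ≠ 0) (hj : α j ≠ 0) (l : Fin k) :
    |α l| < Real.sqrt (∑ i, α i ^ 2) := by
  obtain ⟨m, hm, hm0⟩ : ∃ m, m ≠ l ∧ α m ≠ 0 := by
    by_cases h : i = l
    · exact ⟨j, by rw [← h]; exact hij.symm, hj⟩
    · exact ⟨i, h, hi⟩
  refine Real.lt_sqrt_of_sq_lt ?_
  rw [sq_abs, ← Finset.add_sum_erase _ _ (Finset.mem_univ l)]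
  have h1 : α m ^ 2 ≤ ∑ x ∈ Finset.univ.erase l, α x ^ 2 :=
    Finset.single_le_sum (f := fun i => α i ^ 2) (fun j _ => sq_nonneg _)
      (Finset.mem_erase.2 ⟨hm, Finset.mem_univ m⟩)
  have : 0 < α m ^ 2 := by positivity
  linarith

lemma rpow_three_halves_eq (α : Fin k → ℝ) :
    (∑ i, α i ^ 2) ^ ((3 : ℝ) / 2) = Real.sqrt (∑ i, α i ^ 2) ^ 3 := by
  have h0 : 0 ≤ ∑ i, α i ^ 2 := Finset.sum_nonneg fun i _ => sq_nonneg _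
  rw [Real.sqrt_eq_rpow, ← Real.rpow_natCast, ← Real.rpow_mul h0]
  norm_num

/-- Power sums of order above two lie strictly below the corresponding power of the `ℓ²` norm when two
weights are nonzero; order three gives `φ < 1`, order four keeps standardized fourth moments bounded. -/
lemma sum_pow_lt {i j : Fin k} (hij : i ≠ j) (hi : α i ≠ 0) (hj : α j ≠ 0) (p : ℕ) (hp : p ≠ 0) :
    ∑ l, |α l| ^ (p + 2) < Real.sqrt (∑ i, α i ^ 2) ^ (p + 2) := by
  have h0 : 0 ≤ ∑ i, α i ^ 2 := Finset.sum_nonneg fun i _ => sq_nonneg _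
  have e : Real.sqrt (∑ i, α i ^ 2) ^ (p + 2)
      = ∑ l, Real.sqrt (∑ i, α i ^ 2) ^ p * |α l| ^ 2 := by
    rw [← Finset.mul_sum, pow_add, Real.sq_sqrt h0]
    simp only [sq_abs]
  rw [e]
  refine Finset.sum_lt_sum (fun l _ => ?_) ⟨i, Finset.mem_univ i, ?_⟩
  · rw [pow_add]
    have := (abs_lt_sqrt_sum_sq hij hi hj l).le
    gcongr
  · rw [pow_add]
    have := abs_lt_sqrt_sum_sq hij hi hj i
    have h2 : 0 < |α i| ^ 2 := by positivity
    exact mul_lt_mul_of_pos_right (pow_lt_pow_left₀ this (abs_nonneg _) hp) h2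

/-- The contraction ratio `φ` lies in `(0, 1)`. -/
lemma phi_mem {i j : Fin k} (hij : i ≠ j) (hi : α i ≠ 0) (hj : α j ≠ 0) :
    0 < (∑ i, |α i| ^ 3) / Real.sqrt (∑ i, α i ^ 2) ^ 3 ∧
    (∑ i, |α i| ^ 3) / Real.sqrt (∑ i, α i ^ 2) ^ 3 < 1 := by
  have hl := sqrt_sum_sq_pos hi
  refine ⟨div_pos ?_ (by positivity), ?_⟩
  · refine lt_of_lt_of_le (by positivity : 0 < |α i| ^ 3) ?_
    exact Finset.single_le_sum (f := fun i => |α i| ^ 3) (fun j _ => by positivity)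
      (Finset.mem_univ i)
  · rw [div_lt_one (by positivity)]
    exact sum_pow_lt hij hi hj 1 one_ne_zero

/-- For probability weights, `(∑ αᵢ²)^{1/2} ≤ φ`, i.e. `(∑ αᵢ²)² ≤ ∑ αᵢ³`. -/
lemma sqrt_le_phi (h0 : ∀ i, 0 ≤ α i) (h1 : ∑ i, α i = 1) {i : Fin k} (hi : α i ≠ 0) :
    Real.sqrt (∑ i, α i ^ 2) ≤ (∑ i, |α i| ^ 3) / Real.sqrt (∑ i, α i ^ 2) ^ 3 := by
  have hl := sqrt_sum_sq_pos hi
  have hS : 0 ≤ ∑ i, α i ^ 2 := Finset.sum_nonneg fun i _ => sq_nonneg _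
  rw [le_div_iff₀ (by positivity)]
  have e : Real.sqrt (∑ i, α i ^ 2) * Real.sqrt (∑ i, α i ^ 2) ^ 3 = (∑ i, α i ^ 2) ^ 2 := by
    rw [← pow_succ', show 3 + 1 = 2 * 2 from rfl, pow_mul, Real.sq_sqrt hS]
  rw [e]
  have cs := Finset.sum_sq_le_sum_mul_sum_of_sq_le_mul Finset.univ (r := fun i => α i ^ 2)
    (f := α) (g := fun i => |α i| ^ 3) (fun i _ => h0 i) (fun i _ => by positivity)
    (fun i _ => by rw [abs_of_nonneg (h0 i)]; exact le_of_eq (by ring))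
  rwa [h1, one_mul] at cs

lemma normalized_weights {i : Fin k} (hi : α i ≠ 0) :
    (∑ l, (α l / Real.sqrt (∑ i, α i ^ 2)) ^ 2 = 1) ∧
    (∑ l, |α l / Real.sqrt (∑ i, α i ^ 2)| ^ 3
      = (∑ i, |α i| ^ 3) / Real.sqrt (∑ i, α i ^ 2) ^ 3) := by
  have hl := sqrt_sum_sq_pos hi
  have hS : 0 ≤ ∑ i, α i ^ 2 := Finset.sum_nonneg fun i _ => sq_nonneg _
  constructor
  · simp only [div_pow]
    rw [← Finset.sum_div, Real.sq_sqrt hS, div_self]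
    intro h; rw [h] at hl; simp at hl
  · simp only [abs_div, div_pow, abs_of_pos hl]
    rw [← Finset.sum_div]

end weights

/-! ### A quantitative first order expansion on the box -/

section taylor

variable {k : ℕ} {a b c : ℝ} {F : (Fin k → ℝ) → ℝ}

/-- First order expansion around the diagonal point `(c,…,c)` with an increment error that is
controlled by the distance `ρ` to that point. -/
lemma taylor_box (hab : a < b)
    (hF : ContDiffOn ℝ 2 F (Set.Icc (fun _ : Fin k => a) (fun _ => b)))
    (hc : c ∈ Set.Icc a b) :
    ∃ B : ℝ, 0 ≤ B ∧ ∀ x y : Fin k → ℝ, (∀ i, x i ∈ Set.Icc a b) → (∀ i, y i ∈ Set.Icc a b) →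
      ∀ ρ : ℝ, 0 ≤ ρ → (∀ i, |x i - c| ≤ ρ) → (∀ i, |y i - c| ≤ ρ) →
      |F x - F y - ∑ i, fderivWithin ℝ F (Set.Icc (fun _ : Fin k => a) (fun _ => b))
        (fun _ => c) (Pi.single i 1) * (x i - y i)| ≤ B * ρ * ∑ i, |x i - y i| := by
  set K : Set (Fin k → ℝ) := Set.Icc (fun _ : Fin k => a) (fun _ => b) with hK
  have hKc : IsCompact K := isCompact_Icc
  have hconv : Convex ℝ K := convex_Icc _ _
  have hmem : ∀ x : Fin k → ℝ, (∀ i, x i ∈ Set.Icc a b) → x ∈ K := fun x hx =>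
    ⟨fun i => (hx i).1, fun i => (hx i).2⟩
  have hint : (interior K).Nonempty := by
    refine ⟨fun _ => (a + b) / 2, ?_⟩
    rw [hK, ← Set.pi_univ_Icc, interior_pi_set Set.finite_univ]
    intro i _
    rw [interior_Icc]
    constructor <;> linarith
  have hud : UniqueDiffOn ℝ K := uniqueDiffOn_convex hconv hint
  have h1 : ContDiffOn ℝ 1 (fderivWithin ℝ F K) K := hF.fderivWithin hud (by norm_num)
  have hcont : ContinuousOn (fun x => fderivWithin ℝ (fderivWithin ℝ F K) K x) K :=
    h1.continuousOn_fderivWithin hud le_rfl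
  have hcn : ContinuousOn (fun x => ‖fderivWithin ℝ (fderivWithin ℝ F K) K x‖) K := by
    exact (continuous_norm (E := (Fin k → ℝ) →L[ℝ] (Fin k → ℝ) →L[ℝ] ℝ)).comp_continuousOn hcont
  obtain ⟨B, hB⟩ := hKc.exists_bound_of_continuousOn hcn
  replace hB : ∀ x ∈ K, ‖fderivWithin ℝ (fderivWithin ℝ F K) K x‖ ≤ B := fun x hx =>
    (le_abs_self _).trans (hB x hx)
  have hcK : (fun _ => c) ∈ K := hmem _ fun _ => hc
  have hB0 : 0 ≤ B := le_trans (by exact norm_nonneg (E := (Fin k → ℝ) →L[ℝ] (Fin k → ℝ) →L[ℝ] ℝ) _) (hB _ hcK)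
  have hlip : ∀ x ∈ K, ‖fderivWithin ℝ F K x - fderivWithin ℝ F K (fun _ => c)‖
      ≤ B * ‖x - fun _ => c‖ := fun x hx =>
    hconv.norm_image_sub_le_of_norm_fderivWithin_le (h1.differentiableOn one_ne_zero) hB hcK hx
  refine ⟨B, hB0, fun x y hx hy ρ hρ hxρ hyρ => ?_⟩
  set φ := fderivWithin ℝ F K (fun _ => c) with hφ
  have hlin : ∀ v : Fin k → ℝ, φ v = ∑ i, φ (Pi.single i 1) * v i := by
    intro v
    conv_lhs => rw [pi_eq_sum_univ' v]
    rw [map_sum]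
    refine Finset.sum_congr rfl fun i _ => ?_
    rw [map_smul, smul_eq_mul, mul_comm]
  have hball : ∀ z : Fin k → ℝ, (∀ i, |z i - c| ≤ ρ) → z ∈ Metric.closedBall (fun _ => c) ρ := by
    intro z hz
    rw [mem_closedBall_iff_norm, pi_norm_le_iff_of_nonneg hρ]
    exact hz
  have key := (hconv.inter (convex_closedBall (fun _ : Fin k => c) ρ)).norm_image_sub_le_of_norm_hasFDerivWithin_le'
    (f := F) (f' := fderivWithin ℝ F K) (φ := φ) (C := B * ρ) (x := y) (y := x)
    (fun z hz => ((hF.differentiableOn two_ne_zero z hz.1).hasFDerivWithinAt).mono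
      Set.inter_subset_left)
    (fun z hz => (hlip z hz.1).trans (by
      have := mem_closedBall_iff_norm.1 hz.2
      gcongr)) ⟨hmem y hy, hball y hyρ⟩ ⟨hmem x hx, hball x hxρ⟩
  rw [hlin, Real.norm_eq_abs] at key
  refine key.trans ?_
  gcongr
  rw [pi_norm_le_iff_of_nonneg (Finset.sum_nonneg fun i _ => abs_nonneg _)]
  intro i
  exact Finset.single_le_sum (f := fun i => |x i - y i|) (fun j _ => abs_nonneg _)
    (Finset.mem_univ i)

end taylor

/-! ### Hierarchical sequences of laws -/

/-- The mean of a law on `ℝ`. -/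
noncomputable def lawMean (μ : Measure ℝ) : ℝ := ∫ y, y ∂μ

/-- The variance of a law on `ℝ`. -/
noncomputable def lawVar (μ : Measure ℝ) : ℝ := ∫ y, (y - lawMean μ) ^ 2 ∂μ

/-- The fourth central moment of a law on `ℝ`. -/
noncomputable def lawFourth (μ : Measure ℝ) : ℝ := ∫ y, (y - lawMean μ) ^ 4 ∂μ

/-- The data of a hierarchical sequence of laws `ν n` on `[a,b]` converging in probability to `c`:
`G` is a continuous function on the whole of `ℝᵏ` generating the sequence, and `α` is its gradient
at `(c,…,c)`, in the sense of the quantitative first order expansion `taylor` on the box. -/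
structure Hier (a b c B : ℝ) {k : ℕ} (G : (Fin k → ℝ) → ℝ) (α : Fin k → ℝ)
    (ν : ℕ → Measure ℝ) : Prop where
  lt : a < b
  cont : Continuous G
  ae : ∀ n, ∀ᵐ x ∂ν n, x ∈ Set.Icc a b
  succ : ∀ n, ν (n + 1) = Measure.map G (iidPi k (ν n))
  c_mem : c ∈ Set.Icc a b
  B_nonneg : 0 ≤ B
  taylor : ∀ x y : Fin k → ℝ, (∀ i, x i ∈ Set.Icc a b) → (∀ i, y i ∈ Set.Icc a b) →
      ∀ ρ : ℝ, 0 ≤ ρ → (∀ i, |x i - c| ≤ ρ) → (∀ i, |y i - c| ≤ ρ) →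
      |G x - G y - ∑ i, α i * (x i - y i)| ≤ B * ρ * ∑ i, |x i - y i|
  tendsto_prob : ∀ ε : ℝ, 0 < ε →
      Tendsto (fun n => (ν n).real {x : ℝ | ε < |x - c|}) atTop (nhds 0)

lemma abs_sub_le_of_mem_Icc {a b x y : ℝ} (hx : x ∈ Set.Icc a b) (hy : y ∈ Set.Icc a b) :
    |x - y| ≤ b - a := by
  rw [abs_le]; constructor <;> linarith [hx.1, hx.2, hy.1, hy.2]

lemma lawVar_nonneg {μ : Measure ℝ} : 0 ≤ lawVar μ := integral_nonneg fun _ => sq_nonneg _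

lemma lawFourth_nonneg {μ : Measure ℝ} : 0 ≤ lawFourth μ :=
  integral_nonneg fun _ => by positivity

section moments

variable {μ : Measure ℝ} [IsProbabilityMeasure μ] {a b : ℝ}

lemma lawMean_mem (hμ : ∀ᵐ x ∂μ, x ∈ Set.Icc a b) : lawMean μ ∈ Set.Icc a b := by
  have hI := integrable_of_continuous hμ continuous_id
  constructor
  · have := integral_mono_ae (integrable_const a) hI (hμ.mono fun x hx => hx.1)
    simpa [lawMean] using this
  · have := integral_mono_ae hI (integrable_const b) (hμ.mono fun x hx => hx.2)
    simpa [lawMean] using this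

lemma integral_sub_lawMean (hμ : ∀ᵐ x ∂μ, x ∈ Set.Icc a b) : ∫ y, (y - lawMean μ) ∂μ = 0 := by
  have hI : Integrable (fun y : ℝ => y) μ := integrable_of_continuous hμ continuous_id
  rw [integral_sub hI (integrable_const _), integral_const, probReal_univ, smul_eq_mul, one_mul]
  exact sub_self _

lemma integral_sub_sq (hμ : ∀ᵐ x ∂μ, x ∈ Set.Icc a b) (t : ℝ) :
    ∫ y, (y - t) ^ 2 ∂μ = lawVar μ + (lawMean μ - t) ^ 2 := by
  have e : ∀ y : ℝ, (y - t) ^ 2 = (y - lawMean μ) ^ 2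
      + (2 * (lawMean μ - t) * (y - lawMean μ) + (lawMean μ - t) ^ 2) := fun y => by ring
  rw [integral_congr_ae (Eventually.of_forall e),
    integral_add (integrable_of_continuous hμ (by fun_prop))
    (integrable_of_continuous hμ (by fun_prop)),
    integral_add (integrable_of_continuous hμ (by fun_prop)) (integrable_const _),
    integral_const_mul, integral_sub_lawMean hμ, integral_const, lawVar]
  simp only [probReal_univ, smul_eq_mul, mul_zero, zero_add, one_mul]

lemma lawVar_eq_zero (hμ : ∀ᵐ x ∂μ, x ∈ Set.Icc a b) (h : lawVar μ = 0) :
    ∀ᵐ x ∂μ, x = lawMean μ := by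
  have := (integral_eq_zero_iff_of_nonneg (fun _ => sq_nonneg _)
    (integrable_of_continuous hμ (g := fun y => (y - lawMean μ) ^ 2) (by fun_prop))).1 h
  filter_upwards [this] with x hx
  have : x - lawMean μ = 0 := by simpa using hx
  linarith

lemma lawVar_pos_of_not_dirac (hμ : ∀ᵐ x ∂μ, x ∈ Set.Icc a b)
    (h : ∀ r : ℝ, μ ≠ Measure.dirac r) : 0 < lawVar μ := by
  refine lt_of_le_of_ne lawVar_nonneg fun h0 => h (lawMean μ) ?_
  have h1 := lawVar_eq_zero hμ h0.symm
  have h2 : μ = Measure.map (fun x => x) μ := by simp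
  have h3 : Measure.map (fun x => x) μ = Measure.dirac (lawMean μ) := by
    rw [Measure.map_congr (g := fun _ => lawMean μ) h1, Measure.map_const]
    simp
  exact h2.trans h3

end moments

namespace Hier

variable {a b c B : ℝ} {k : ℕ} {G : (Fin k → ℝ) → ℝ} {α : Fin k → ℝ} {ν : ℕ → Measure ℝ}

lemma lip (H : Hier a b c B G α ν) : ∃ L : ℝ, 0 ≤ L ∧ ∀ x y : Fin k → ℝ,
    (∀ i, x i ∈ Set.Icc a b) → (∀ i, y i ∈ Set.Icc a b) →
    |G x - G y| ≤ L * ∑ i, |x i - y i| := by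
  have hB := H.B_nonneg
  have hba : 0 ≤ b - a := sub_nonneg.2 H.lt.le
  refine ⟨B * (b - a) + ∑ i, |α i|, add_nonneg (by positivity) (by positivity),
    fun x y hx hy => ?_⟩
  have h1 := H.taylor x y hx hy (b - a) hba (fun i => abs_sub_le_of_mem_Icc (hx i) H.c_mem)
    (fun i => abs_sub_le_of_mem_Icc (hy i) H.c_mem)
  have h2 : |∑ i, α i * (x i - y i)| ≤ (∑ i, |α i|) * ∑ i, |x i - y i| := by
    refine (Finset.abs_sum_le_sum_abs _ _).trans ?_
    rw [Finset.mul_sum]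
    refine Finset.sum_le_sum fun i _ => ?_
    rw [abs_mul]
    gcongr
    exact Finset.single_le_sum (f := fun i => |α i|) (fun j _ => abs_nonneg _)
      (Finset.mem_univ i)
  have h3 := abs_sub_abs_le_abs_sub (G x - G y) (∑ i, α i * (x i - y i))
  linarith

lemma integral_succ (H : Hier a b c B G α ν) (n : ℕ) {ψ : ℝ → ℝ} (hψ : Measurable ψ) :
    ∫ y, ψ y ∂ν (n + 1) = ∫ x, ψ (G x) ∂iidPi k (ν n) := by
  rw [H.succ, integral_map H.cont.aemeasurable hψ.aestronglyMeasurable]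

variable [∀ n, IsProbabilityMeasure (ν n)]

lemma tendsto_abs (H : Hier a b c B G α ν) :
    Tendsto (fun n => ∫ y, |y - c| ∂ν n) atTop (nhds 0) := by
  have hba : 0 < b - a := sub_pos.2 H.lt
  rw [Metric.tendsto_atTop]
  intro ε hε
  have h1 := H.tendsto_prob (ε / 2) (by positivity)
  rw [Metric.tendsto_atTop] at h1
  obtain ⟨N, hN⟩ := h1 (ε / 2 / (b - a)) (by positivity)
  refine ⟨N, fun n hn => ?_⟩
  have h2 := hN n hn
  rw [Real.dist_eq, sub_zero, abs_of_nonneg measureReal_nonneg] at h2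
  rw [Real.dist_eq, sub_zero, abs_of_nonneg (integral_nonneg fun _ => abs_nonneg _)]
  have hm : MeasurableSet {x : ℝ | ε / 2 < |x - c|} :=
    measurableSet_lt measurable_const (by fun_prop)
  have h3 : ∫ y, |y - c| ∂ν n ≤ ∫ y, (ε / 2 +
      (b - a) * Set.indicator {x : ℝ | ε / 2 < |x - c|} 1 y) ∂ν n := by
    refine integral_mono_ae (integrable_of_continuous (H.ae n) (by fun_prop))
      ((integrable_const _).add (((integrable_const 1).indicator hm).const_mul _)) ?_
    filter_upwards [H.ae n] with y hy
    by_cases h : ε / 2 < |y - c|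
    · rw [Set.indicator_of_mem (by exact h)]
      have := abs_sub_le_of_mem_Icc hy H.c_mem
      simp only [Pi.one_apply]; linarith
    · rw [Set.indicator_of_notMem (by exact h)]
      simp only [not_lt] at h; linarith
  rw [integral_add (integrable_const _) (((integrable_const 1).indicator hm).const_mul _),
    integral_const_mul, integral_indicator_one hm] at h3
  rw [lt_div_iff₀ hba] at h2
  simp at h3
  linarith

lemma abs_mean_sub_le (H : Hier a b c B G α ν) (n : ℕ) :
    |lawMean (ν n) - c| ≤ ∫ y, |y - c| ∂ν n := by
  have hI : Integrable (fun y : ℝ => y) (ν n) := integrable_of_continuous (H.ae n) continuous_id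
  have : lawMean (ν n) - c = ∫ y, (y - c) ∂ν n := by
    rw [integral_sub hI (integrable_const _)]; simp [lawMean]
  rw [this]
  exact abs_integral_le_integral_abs

lemma tendsto_mean (H : Hier a b c B G α ν) :
    Tendsto (fun n => |lawMean (ν n) - c|) atTop (nhds 0) :=
  squeeze_zero (fun _ => abs_nonneg _) H.abs_mean_sub_le H.tendsto_abs

lemma tendsto_var (H : Hier a b c B G α ν) :
    Tendsto (fun n => lawVar (ν n)) atTop (nhds 0) := by
  have h := H.tendsto_abs.const_mul (b - a)
  rw [mul_zero] at h
  refine squeeze_zero (fun _ => lawVar_nonneg) (fun n => ?_) h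
  have h1 : lawVar (ν n) ≤ ∫ y, (y - c) ^ 2 ∂ν n := by
    rw [integral_sub_sq (H.ae n)]
    linarith [sq_nonneg (lawMean (ν n) - c)]
  refine h1.trans ?_
  rw [← integral_const_mul]
  refine integral_mono_ae (integrable_of_continuous (H.ae n) (by fun_prop))
    (integrable_of_continuous (H.ae n) (by fun_prop)) ?_
  filter_upwards [H.ae n] with y hy
  rw [← sq_abs, sq]
  have := abs_sub_le_of_mem_Icc hy H.c_mem
  gcongr

/-- The limit is a fixed point of the diagonal map. -/
lemma fixed_c (H : Hier a b c B G α ν) : G (fun _ => c) = c := by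
  obtain ⟨L, hL, hlip⟩ := H.lip
  have hbound : ∀ n, |G (fun _ => c) - c| ≤ L * (k * ∫ y, |y - c| ∂ν n)
      + ∫ y, |y - c| ∂ν (n + 1) := by
    intro n
    rw [H.integral_succ n (ψ := fun y => |y - c|) (by fun_prop)]
    have hG := H.cont
    have e : (k : ℝ) * ∫ y, |y - c| ∂ν n = ∫ x, ∑ i, |x i - c| ∂iidPi k (ν n) := by
      rw [integral_finsetSum _ fun i _ => iidPi_integrable (H.ae n) (by fun_prop)]
      have : ∀ i : Fin k, ∫ x, |x i - c| ∂iidPi k (ν n) = ∫ y, |y - c| ∂ν n := fun i =>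
        iidPi_eval (ψ := fun y => |y - c|) (by fun_prop) i
      simp [this]
    rw [e, ← integral_const_mul, ← integral_add (iidPi_integrable (H.ae n) (by fun_prop))
      (iidPi_integrable (H.ae n) (by fun_prop))]
    have h0 : |G (fun _ => c) - c| = ∫ _x, |G (fun _ => c) - c| ∂iidPi k (ν n) := by simp
    rw [h0]
    refine integral_mono_ae (integrable_const _) (iidPi_integrable (H.ae n) (by fun_prop)) ?_
    filter_upwards [iidPi_ae_box (H.ae n)] with x hx
    have h1 := hlip x (fun _ => c) hx (fun _ => H.c_mem)
    have h2 := abs_sub_le (G fun _ => c) (G x) c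
    rw [abs_sub_comm (G fun _ => c) (G x)] at h2
    linarith
  have hlim := ((H.tendsto_abs.const_mul (k : ℝ)).const_mul L).add
    (H.tendsto_abs.comp (tendsto_add_atTop_nat 1))
  simp only [mul_zero, add_zero] at hlim
  have := ge_of_tendsto' hlim hbound
  have := abs_nonpos_iff.1 this
  linarith

end Hier

/-- Clamping the arguments to `[a,b]` extends a function on the box to the whole space. -/
def clampExt (a b : ℝ) {k : ℕ} (F : (Fin k → ℝ) → ℝ) : (Fin k → ℝ) → ℝ :=
  fun x => F fun i => max a (min b (x i))

lemma clampExt_eq {a b : ℝ} {k : ℕ} (F : (Fin k → ℝ) → ℝ) {x : Fin k → ℝ}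
    (hx : ∀ i, x i ∈ Set.Icc a b) : clampExt a b F x = F x := by
  unfold clampExt
  congr 1
  funext i
  rw [min_eq_right (hx i).2, max_eq_right (hx i).1]

/-- The hierarchical sequence of `F` on the box is that of the extension `clampExt a b F` to all of
`ℝᵏ`, whose linearization at `(c,…,c)` is given by the derivative of `F` within the box. -/
lemma hier_of {a b : ℝ} (hab : a < b) {k : ℕ} {F : (Fin k → ℝ) → ℝ}
    (hmaps : ∀ x ∈ Set.Icc (fun _ : Fin k => a) (fun _ => b), F x ∈ Set.Icc a b)
    (hF : ContDiffOn ℝ 2 F (Set.Icc (fun _ : Fin k => a) (fun _ => b)))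
    {ν : ℕ → Measure ℝ} [∀ n, IsProbabilityMeasure (ν n)]
    (hν0 : ν 0 (Set.Icc a b) = 1)
    (hrec : ∀ n, ν (n + 1) = Measure.map F (Measure.pi fun _ : Fin k => ν n))
    {c : ℝ}
    (hprob : ∀ ε : ℝ, 0 < ε →
      Tendsto (fun n => ν n {x : ℝ | ε < |x - c|}) atTop (nhds 0)) :
    ∃ B, Hier a b c B (clampExt a b F) (fun i => fderivWithin ℝ F
      (Set.Icc (fun _ : Fin k => a) (fun _ => b)) (fun _ => c) (Pi.single i 1)) ν := by
  have hbox : ∀ x : Fin k → ℝ, (fun i => max a (min b (x i))) ∈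
      Set.Icc (fun _ : Fin k => a) (fun _ => b) := fun x =>
    ⟨fun i => le_max_left _ _, fun i => max_le hab.le (min_le_left _ _)⟩
  have hcont : Continuous (clampExt a b F) :=
    hF.continuousOn.comp_continuous (by fun_prop) hbox
  have hmapG : ∀ x, clampExt a b F x ∈ Set.Icc a b := fun x => hmaps _ (hbox x)
  have hsucc : ∀ n, (∀ᵐ x ∂ν n, x ∈ Set.Icc a b) →
      ν (n + 1) = Measure.map (clampExt a b F) (iidPi k (ν n)) := by
    intro n hn
    rw [hrec]
    refine Measure.map_congr ?_
    filter_upwards [iidPi_ae_box hn] with x hx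
    rw [clampExt_eq F hx]
  have hae : ∀ n, ∀ᵐ x ∂ν n, x ∈ Set.Icc a b := by
    intro n
    induction n with
    | zero => rw [← mem_ae_iff_prob_eq_one measurableSet_Icc] at hν0; exact hν0
    | succ n ih =>
      rw [hsucc n ih, ae_map_iff (p := fun x => x ∈ Set.Icc a b) hcont.aemeasurable measurableSet_Icc]
      exact Eventually.of_forall hmapG
  have hc : c ∈ Set.Icc a b := by
    by_contra hcon
    obtain ⟨ε, hε, hball⟩ := Metric.isOpen_iff.1 (isClosed_Icc (a := a) (b := b)).isOpen_compl c hcon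
    have h1 : ∀ n, ν n {x : ℝ | ε / 2 < |x - c|} = 1 := by
      intro n
      refine le_antisymm prob_le_one ?_
      rw [← measure_univ (μ := ν n)]
      refine measure_mono_ae ?_
      filter_upwards [hae n] with x hx _
      change ε / 2 < |x - c|
      by_contra h
      exact hball (by rw [Metric.mem_ball, Real.dist_eq]; linarith) hx
    have := hprob (ε / 2) (by positivity)
    simp only [h1] at this
    exact one_ne_zero (tendsto_nhds_unique tendsto_const_nhds this)
  obtain ⟨B, hB, hT⟩ := taylor_box hab hF hc
  refine ⟨B, hab, hcont, hae, fun n => hsucc n (hae n), hc, hB, ?_, ?_⟩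
  · intro x y hx hy ρ hρ h1 h2
    rw [clampExt_eq F hx, clampExt_eq F hy]
    exact hT x y hx hy ρ hρ h1 h2
  · intro ε hε
    have := (ENNReal.tendsto_toReal (by simp)).comp (hprob ε hε)
    exact this

/-! ### Averaging functions: weights, non-degeneracy, and the homogeneous case -/

/-- The consequences of the averaging property that are used: the function is the identity on the
diagonal, monotone, and strictly contracts configurations with a single deviating coordinate. -/
structure IsAvg (a b : ℝ) {k : ℕ} (G : (Fin k → ℝ) → ℝ) : Prop where
  fixed : ∀ t ∈ Set.Icc a b, G (fun _ => t) = t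
  mono : ∀ x y : Fin k → ℝ, (∀ i, x i ∈ Set.Icc a b) → (∀ i, y i ∈ Set.Icc a b) →
    (∀ i, x i ≤ y i) → G x ≤ G y
  up : ∀ x ∈ Set.Icc a b, ∀ y ∈ Set.Icc a b, x < y → ∀ i,
    G (Function.update (fun _ => x) i y) < y
  down : ∀ x ∈ Set.Icc a b, ∀ y ∈ Set.Icc a b, x < y → ∀ i,
    x < G (Function.update (fun _ => y) i x)

lemma update_mem_Icc {a b : ℝ} {k : ℕ} {x : Fin k → ℝ} (hx : ∀ i, x i ∈ Set.Icc a b) (i : Fin k)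
    {y : ℝ} (hy : y ∈ Set.Icc a b) (j : Fin k) : Function.update x i y j ∈ Set.Icc a b := by
  by_cases h : j = i
  · subst h; simpa using hy
  · simpa [h] using hx j

lemma IsAvg.congr {a b : ℝ} {k : ℕ} {F G : (Fin k → ℝ) → ℝ} (h : IsAvg a b F)
    (e : ∀ x, (∀ i, x i ∈ Set.Icc a b) → G x = F x) : IsAvg a b G where
  fixed t ht := by rw [e _ fun _ => ht]; exact h.fixed t ht
  mono x y hx hy hxy := by rw [e x hx, e y hy]; exact h.mono x y hx hy hxy
  up x hx y hy hxy i := by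
    rw [e _ (update_mem_Icc (fun _ => hx) i hy)]; exact h.up x hx y hy hxy i
  down x hx y hy hxy i := by
    rw [e _ (update_mem_Icc (fun _ => hy) i hx)]; exact h.down x hx y hy hxy i

lemma Averaging.isAvg {a b : ℝ} {k : ℕ} (hk : 2 ≤ k) {F : (Fin k → ℝ) → ℝ}
    (h : Averaging (Set.Icc a b) k F) : IsAvg a b F := by
  obtain ⟨h1, h2, h3⟩ := h
  have : Nontrivial (Fin k) := Fin.nontrivial_iff_two_le.2 hk
  refine ⟨fun t ht => ?_, h2, fun x hx y hy hxy i => ?_, fun x hx y hy hxy i => ?_⟩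
  · obtain ⟨⟨_, p⟩, _, q⟩ := h1 (fun _ => t) fun _ => ht
    exact le_antisymm q p
  · obtain ⟨j, hj⟩ := exists_ne i
    obtain ⟨z, hz, _, hzi, _, hlt⟩ := h3 x hx y hy hxy j i hj
    refine lt_of_le_of_lt (h2 _ z (update_mem_Icc (fun _ => hx) i hy) (fun l => ?_) fun l => ?_) hlt
    · rcases hz l with e | e <;> rw [e] <;> assumption
    · by_cases hl : l = i
      · subst hl; simp [hzi]
      · rcases hz l with e | e <;> simp [hl, e, hxy.le]
  · obtain ⟨j, hj⟩ := exists_ne i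
    obtain ⟨z, hz, hzi, _, hlt, _⟩ := h3 x hx y hy hxy i j hj.symm
    refine lt_of_lt_of_le hlt (h2 z _ (fun l => ?_) (update_mem_Icc (fun _ => hy) i hx) fun l => ?_)
    · rcases hz l with e | e <;> rw [e] <;> assumption
    · by_cases hl : l = i
      · subst hl; simp [hzi]
      · rcases hz l with e | e <;> simp [hl, e, hxy.le]

lemma nonpos_of_forall_le_mul {X K h₀ : ℝ} (hh : 0 < h₀)
    (h : ∀ t, 0 < t → t ≤ h₀ → X ≤ K * t) : X ≤ 0 := by
  have hlim : Tendsto (fun t : ℝ => K * t) (nhdsWithin 0 (Set.Ioi 0)) (nhds 0) := by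
    have : Tendsto (fun t : ℝ => K * t) (nhds 0) (nhds (K * 0)) :=
      (continuous_const.mul continuous_id).tendsto 0
    rw [mul_zero] at this
    exact this.mono_left nhdsWithin_le_nhds
  refine ge_of_tendsto hlim ?_
  filter_upwards [Ioc_mem_nhdsGT hh] with t ht
  exact h t ht.1 ht.2

namespace Hier

variable {a b c B : ℝ} {k : ℕ} {G : (Fin k → ℝ) → ℝ} {α : Fin k → ℝ} {ν : ℕ → Measure ℝ}

/-- The gradient of an averaging function on the diagonal is a probability vector. -/
lemma weights (H : Hier a b c B G α ν) (hA : IsAvg a b G) : (∀ i, 0 ≤ α i) ∧ ∑ i, α i = 1 := by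
  have hc := H.c_mem
  have hGc := hA.fixed c hc
  -- one of the two directions `σ = ±1` points into `[a, b]` from `c`
  obtain ⟨σ, hσ, h₀, hh₀, hin⟩ : ∃ σ : ℝ, |σ| = 1 ∧ ∃ h₀ : ℝ, 0 < h₀ ∧
      ∀ t, 0 < t → t ≤ h₀ → c + σ * t ∈ Set.Icc a b := by
    rcases hc.2.lt_or_eq with h | h
    · exact ⟨1, by simp, b - c, sub_pos.2 h, fun t h0 h1 => ⟨by linarith [hc.1], by linarith⟩⟩
    · exact ⟨-1, by simp, c - a, by linarith [H.lt], fun t h0 h1 =>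
        ⟨by linarith, by linarith [hc.2]⟩⟩
  have habs : ∀ t, 0 < t → |c + σ * t - c| = t := fun t ht => by
    rw [add_sub_cancel_left, abs_mul, hσ, one_mul, abs_of_pos ht]
  have hσ2 : σ * σ = 1 := by rw [← abs_mul_abs_self, hσ, one_mul]
  constructor
  · intro i
    suffices -α i ≤ 0 by linarith
    refine nonpos_of_forall_le_mul (K := B) hh₀ fun t ht0 ht1 => ?_
    have hu := update_mem_Icc (fun _ : Fin k => hc) i (hin t ht0 ht1)
    have hT := H.taylor (Function.update (fun _ => c) i (c + σ * t)) (fun _ => c) hu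
      (fun _ => hc) t ht0.le (fun j => by
        by_cases h : j = i
        · subst h; simp only [Function.update_self]; exact (habs t ht0).le
        · simp [h, ht0.le]) (fun j => by simp [ht0.le])
    rw [Finset.sum_eq_single i (fun j _ hj => by simp [hj]) (by simp),
      Finset.sum_eq_single i (fun j _ hj => by simp [hj]) (by simp)] at hT
    simp only [Function.update_self, habs t ht0] at hT
    rw [add_sub_cancel_left, hGc] at hT
    have hm : 0 ≤ σ * (G (Function.update (fun _ => c) i (c + σ * t)) - c) := by
      rcases eq_or_eq_neg_of_abs_eq hσ with h | h
      · have := hA.mono (fun _ => c) _ (fun _ => hc) hu (fun j => by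
          by_cases hj : j = i
          · subst hj; simp [h, ht0.le]
          · simp [hj])
        rw [hGc] at this; rw [h] at this ⊢; linarith
      · have := hA.mono _ (fun _ => c) hu (fun _ => hc) (fun j => by
          by_cases hj : j = i
          · subst hj; simp [h, ht0.le]
          · simp [hj])
        rw [hGc] at this; rw [h] at this ⊢; linarith
    set X := G (Function.update (fun _ => c) i (c + σ * t)) - c with hX
    have h3 : |σ * X - α i * t| ≤ B * t * t := by
      have e : σ * X - α i * t = σ * (X - α i * (σ * t)) := by linear_combination α i * t * hσ2
      rwa [e, abs_mul, hσ, one_mul]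
    have h4 := (abs_le.1 h3).2
    have h5 : -α i * t ≤ B * t * t := by linarith
    exact le_of_mul_le_mul_right h5 ht0
  · suffices |1 - ∑ i, α i| ≤ 0 by
      have := abs_nonpos_iff.1 this; linarith
    refine nonpos_of_forall_le_mul (K := B * k) hh₀ fun t ht0 ht1 => ?_
    have hT := H.taylor (fun _ => c + σ * t) (fun _ => c) (fun _ => hin t ht0 ht1)
      (fun _ => hc) t ht0.le (fun j => (habs t ht0).le) (fun j => by simp [ht0.le])
    simp only [habs t ht0] at hT
    rw [hGc, hA.fixed _ (hin t ht0 ht1), add_sub_cancel_left, ← Finset.sum_mul, Finset.sum_const,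
      Finset.card_univ, Fintype.card_fin, nsmul_eq_mul] at hT
    have e : σ * t - (∑ i, α i) * (σ * t) = (1 - ∑ i, α i) * (σ * t) := by ring
    rw [e, abs_mul, abs_mul, hσ, one_mul, abs_of_pos ht0] at hT
    have : |1 - ∑ i, α i| * t ≤ (B * k * t) * t := by linarith
    exact le_of_mul_le_mul_right this ht0

end Hier

/-- A scaled averaging homogeneous function generating a convergent sequence is either averaging
itself, or the limit is `0` and the function is linear. -/
lemma avg_or_linear {a b c B : ℝ} {k : ℕ} (hk : 2 ≤ k) {F : (Fin k → ℝ) → ℝ} {α : Fin k → ℝ}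
    {ν : ℕ → Measure ℝ} [∀ n, IsProbabilityMeasure (ν n)]
    (H : Hier a b c B (clampExt a b F) α ν)
    (havg : Averaging (Set.Icc a b) k F ∨
      (Averaging (Set.Icc a b) k (fun x => F x / F (fun _ => 1)) ∧
        ∀ t : ℝ, 0 < t → ∀ x : Fin k → ℝ,
          (∀ i, x i ∈ Set.Icc a b) → (∀ i, t * x i ∈ Set.Icc a b) →
          F (fun i => t * x i) = t * F x)) :
    IsAvg a b (clampExt a b F) ∨
      ∀ x, (∀ i, x i ∈ Set.Icc a b) → clampExt a b F x = ∑ i, α i * x i := by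
  have hab := H.lt
  rcases havg with h | ⟨h, hhom⟩
  · exact Or.inl ((h.isAvg hk).congr fun x hx => clampExt_eq F hx)
  have h' := h.isAvg hk
  set s := F fun _ => 1 with hs
  have hs0 : s ≠ 0 := by
    intro h0
    have h1 := h'.fixed a ⟨le_rfl, hab.le⟩
    have h2 := h'.fixed b ⟨hab.le, le_rfl⟩
    simp only [h0, div_zero] at h1 h2
    linarith
  have hc := H.c_mem
  have hFc : F (fun _ => c) = c := by
    rw [← clampExt_eq (a := a) (b := b) F fun _ => hc]; exact H.fixed_c
  have hsc : c = s * c := by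
    have := h'.fixed c hc
    simp only [hFc] at this
    rw [div_eq_iff hs0] at this
    linarith
  by_cases hc0 : c = 0
  · right
    subst hc0
    intro x hx
    suffices |clampExt a b F x - ∑ i, α i * x i| ≤ 0 by
      have := abs_nonpos_iff.1 this; linarith
    refine nonpos_of_forall_le_mul (K := B * (b - a) * ∑ i, |x i|) one_pos fun t ht0 ht1 => ?_
    have htx : ∀ i, t * x i ∈ Set.Icc a b := fun i =>
      ⟨by nlinarith [hc.1, (hx i).1], by nlinarith [hc.2, (hx i).2]⟩
    have hxa : ∀ i, |t * x i| ≤ t * (b - a) := fun i => by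
      rw [abs_mul, abs_of_pos ht0]
      have := abs_sub_le_of_mem_Icc (hx i) hc
      rw [sub_zero] at this
      gcongr
    have hba : 0 ≤ b - a := by linarith
    have hT := H.taylor (fun i => t * x i) (fun _ => 0) htx (fun _ => hc) (t * (b - a))
      (by positivity) (fun i => by simpa using hxa i) (fun i => by simp; positivity)
    rw [H.fixed_c, clampExt_eq F htx, hhom t ht0 x hx htx, ← clampExt_eq F hx] at hT
    simp only [sub_zero, abs_mul, abs_of_pos ht0] at hT
    have e1 : ∑ i, α i * (t * x i) = t * ∑ i, α i * x i := by
      rw [Finset.mul_sum]; exact Finset.sum_congr rfl fun i _ => by ring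
    rw [e1, ← mul_sub, abs_mul, abs_of_pos ht0, ← Finset.mul_sum] at hT
    have : t * |clampExt a b F x - ∑ i, α i * x i|
        ≤ t * (B * (b - a) * (∑ i, |x i|) * t) := by linarith
    exact le_of_mul_le_mul_left this ht0
  · left
    have hs1 : s = 1 := by
      have : (s - 1) * c = 0 := by linarith
      rcases mul_eq_zero.1 this with h | h
      · linarith
      · exact absurd h hc0
    refine h'.congr fun x hx => ?_
    rw [clampExt_eq F hx, hs1, div_one]

/-- A law that charges both sides of some threshold. -/
def Charges (μ : Measure ℝ) : Prop := ∃ t, μ (Set.Iic t) ≠ 0 ∧ μ (Set.Ioi t) ≠ 0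

lemma Charges.lawVar_pos {μ : Measure ℝ} [IsProbabilityMeasure μ] {a b : ℝ}
    (hμ : ∀ᵐ x ∂μ, x ∈ Set.Icc a b) (h : Charges μ) : 0 < lawVar μ := by
  refine lt_of_le_of_ne lawVar_nonneg fun h0 => ?_
  have h1 := lawVar_eq_zero hμ h0.symm
  obtain ⟨t, p, q⟩ := h
  rcases le_or_gt (lawMean μ) t with hl | hl
  · refine q (measure_mono_null ?_ h1)
    intro x hx hxm
    have hx' : t < x := hx
    have hxm' : x = lawMean μ := hxm
    linarith
  · refine p (measure_mono_null ?_ h1)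
    intro x hx hxm
    have hx' : x ≤ t := hx
    have hxm' : x = lawMean μ := hxm
    linarith

lemma charges_of_lawVar_pos {μ : Measure ℝ} [IsProbabilityMeasure μ] {a b : ℝ}
    (hμ : ∀ᵐ x ∂μ, x ∈ Set.Icc a b) (h : 0 < lawVar μ) : Charges μ := by
  by_contra hcon
  have hI : Integrable (fun y => y - lawMean μ) μ := integrable_of_continuous hμ (by fun_prop)
  have key : ∀ᵐ x ∂μ, x = lawMean μ := by
    by_cases h1 : μ (Set.Iic (lawMean μ)) = 0
    · have hpos : ∀ᵐ x ∂μ, lawMean μ < x := by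
        rw [ae_iff]; simpa [Set.Iic] using h1
      have := (integral_eq_zero_iff_of_nonneg_ae (hpos.mono fun x hx => by
        simp only [Pi.zero_apply]; linarith) hI).1 (integral_sub_lawMean hμ)
      filter_upwards [this] with x hx
      simp only [Pi.zero_apply] at hx; linarith
    · have h2 : μ (Set.Ioi (lawMean μ)) = 0 := by
        by_contra h2; exact hcon ⟨_, h1, h2⟩
      have hneg : ∀ᵐ x ∂μ, x ≤ lawMean μ := by
        rw [ae_iff]; simpa [Set.Ioi] using h2
      have h3 : ∫ y, -(y - lawMean μ) ∂μ = 0 := by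
        rw [integral_neg, integral_sub_lawMean hμ, neg_zero]
      have := (integral_eq_zero_iff_of_nonneg_ae (hneg.mono fun x hx => by
        change 0 ≤ -(x - lawMean μ); linarith) hI.neg).1 h3
      filter_upwards [this] with x hx
      simp only [Pi.zero_apply, Pi.neg_apply] at hx; linarith
  have h0 : lawVar μ = 0 := by
    unfold lawVar
    rw [integral_eq_zero_iff_of_nonneg (fun _ => sq_nonneg _)
      (integrable_of_continuous hμ (g := fun y => (y - lawMean μ) ^ 2) (by fun_prop))]
    filter_upwards [key] with x hx
    simp only [Pi.zero_apply]; rw [hx]; simp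
  linarith

namespace Hier

variable {a b c B : ℝ} {k : ℕ} {G : (Fin k → ℝ) → ℝ} {α : Fin k → ℝ} {ν : ℕ → Measure ℝ}
  [∀ n, IsProbabilityMeasure (ν n)]

/-- An averaging function preserves nondegeneracy: if all arguments lie on one side of a
threshold, so does the value. -/
lemma charges (H : Hier a b c B G α ν) (hA : IsAvg a b G) (hk : 2 ≤ k) (h0 : 0 < lawVar (ν 0))
    (n : ℕ) : Charges (ν n) := by
  have : Nonempty (Fin k) := ⟨⟨0, by omega⟩⟩
  induction n with
  | zero => exact charges_of_lawVar_pos (H.ae 0) h0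
  | succ n ih =>
    obtain ⟨t, p, q⟩ := ih
    have hbox := iidPi_ae_box (k := k) (H.ae n)
    have hprod : ∀ s : Set ℝ, ν n s ≠ 0 → iidPi k (ν n) (Set.univ.pi fun _ => s) ≠ 0 := by
      intro s hs
      rw [Measure.pi_pi]
      exact Finset.prod_ne_zero_iff.2 fun _ _ => hs
    refine ⟨t, ?_, ?_⟩
    · rw [H.succ, Measure.map_apply H.cont.measurable measurableSet_Iic]
      refine fun h => hprod _ p (le_antisymm (le_trans (measure_mono_ae ?_) h.le) zero_le)
      filter_upwards [hbox] with x hx hxt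
      obtain ⟨j, hj⟩ := Finite.exists_max x
      change G x ≤ t
      calc G x ≤ G (fun _ => x j) := hA.mono x _ hx (fun _ => hx j) hj
        _ = x j := hA.fixed _ (hx j)
        _ ≤ t := hxt j trivial
    · rw [H.succ, Measure.map_apply H.cont.measurable measurableSet_Ioi]
      refine fun h => hprod _ q (le_antisymm (le_trans (measure_mono_ae ?_) h.le) zero_le)
      filter_upwards [hbox] with x hx hxt
      obtain ⟨j, hj⟩ := Finite.exists_min x
      change t < G x
      calc t < x j := hxt j trivial
        _ = G (fun _ => x j) := (hA.fixed _ (hx j)).symm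
        _ ≤ G x := hA.mono _ x (fun _ => hx j) hx hj

end Hier

/-! ### Lower bound for the variance -/

namespace Hier

variable {a b c B : ℝ} {k : ℕ} {G : (Fin k → ℝ) → ℝ} {α : Fin k → ℝ} {ν : ℕ → Measure ℝ}

lemma taylor_update (H : Hier a b c B G α ν) {x : Fin k → ℝ} (hx : ∀ j, x j ∈ Set.Icc a b)
    {i : Fin k} {u ρ : ℝ} (hu : u ∈ Set.Icc a b) (hρ : 0 ≤ ρ) (hxρ : ∀ j, |x j - c| ≤ ρ)
    (huρ : |u - c| ≤ ρ) :
    |G x - G (Function.update x i u) - α i * (x i - u)| ≤ B * ρ * |x i - u| := by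
  have hT := H.taylor x (Function.update x i u) hx (update_mem_Icc hx i hu) ρ hρ hxρ (fun j => by
    by_cases h : j = i
    · subst h; simpa using huρ
    · simpa [h] using hxρ j)
  rw [Finset.sum_eq_single i (fun j _ hj => by simp [hj]) (by simp),
    Finset.sum_eq_single i (fun j _ hj => by simp [hj]) (by simp)] at hT
  simpa using hT

lemma mono_update (hA : IsAvg a b G) {x : Fin k → ℝ} (hx : ∀ j, x j ∈ Set.Icc a b)
    {i : Fin k} {u v : ℝ} (hu : u ∈ Set.Icc a b) (hv : v ∈ Set.Icc a b) (huv : u ≤ v) :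
    G (Function.update x i u) ≤ G (Function.update x i v) := by
  refine hA.mono _ _ (update_mem_Icc hx i hu) (update_mem_Icc hx i hv) fun j => ?_
  by_cases h : j = i
  · subst h; simpa using huv
  · simp [h]

/-- If the other coordinates are close to `c`, moving the `i`-th coordinate away from a value near
`c` changes `G` at a linear rate: by differentiability close to `c`, by monotonicity beyond. -/
lemma increment_lower (H : Hier a b c B G α ν) (hA : IsAvg a b G) {i : Fin k} (hi : 0 < α i) :
    ∃ r : ℝ, 0 < r ∧ ∃ κ : ℝ, 0 < κ ∧ ∀ x : Fin k → ℝ, (∀ j, x j ∈ Set.Icc a b) →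
      ∀ u ∈ Set.Icc a b, |u - c| ≤ r / 2 → (∀ j, j ≠ i → |x j - c| ≤ r) →
      κ * (x i - u) ^ 2 ≤ (G x - G (Function.update x i u)) * (x i - u) := by
  have hB := H.B_nonneg
  have hba : 0 < b - a := sub_pos.2 H.lt
  set r := α i / (2 * (B + 1)) with hr
  have hr0 : 0 < r := by positivity
  have hBr : B * r ≤ α i / 2 := by
    rw [hr, ← mul_div_assoc, div_le_div_iff₀ (by positivity) (by positivity)]
    nlinarith
  set κ := min (α i / 2) (α i / 2 * (r / 2) / (b - a)) with hκ
  have hκ0 : 0 < κ := lt_min (by positivity) (by positivity)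
  have hκ1 : κ ≤ α i / 2 := min_le_left _ _
  have hκ2 : κ * (b - a) ≤ α i / 2 * (r / 2) := by
    rw [← le_div_iff₀ hba]; exact min_le_right _ _
  refine ⟨r, hr0, κ, hκ0, fun x hx u hu huc hxj => ?_⟩
  have hur : |u - c| ≤ r := huc.trans (by linarith)
  have hucl := abs_le.1 huc
  -- increments between two values within distance `r` of `c`
  have near : ∀ v ∈ Set.Icc a b, |v - c| ≤ r →
      |G (Function.update x i v) - G (Function.update x i u) - α i * (v - u)|
        ≤ α i / 2 * |v - u| := by
    intro v hv hvr
    have := H.taylor_update (update_mem_Icc hx i hv) (i := i) hu hr0.le (fun j => by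
      by_cases h : j = i
      · subst h; simpa using hvr
      · simpa [h] using hxj j h) hur
    simp only [Function.update_self, Function.update_idem] at this
    exact this.trans (by gcongr)
  have hxi := hx i
  have hself : Function.update x i (x i) = x := Function.update_eq_self i x
  by_cases h : |x i - c| ≤ r
  · have h1 := near (x i) hxi h
    rw [hself] at h1
    have h2 := abs_le.1 h1
    rcases le_total u (x i) with h3 | h3
    · rw [abs_of_nonneg (by linarith : 0 ≤ x i - u)] at h2
      nlinarith [h2.1, mul_nonneg (sub_nonneg.2 h3) (sub_nonneg.2 h3)]
    · rw [abs_of_nonpos (by linarith : x i - u ≤ 0)] at h2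
      nlinarith [h2.2, mul_nonneg (sub_nonneg.2 h3) (sub_nonneg.2 h3)]
  · rw [not_le, lt_abs] at h
    rcases h with h | h
    · have hw : c + r ∈ Set.Icc a b := ⟨by linarith [H.c_mem.1], by linarith [hxi.2]⟩
      have h1 := near (c + r) hw (by rw [add_sub_cancel_left, abs_of_pos hr0])
      rw [abs_of_nonneg (by linarith : 0 ≤ c + r - u)] at h1
      have h2 := (abs_le.1 h1).1
      have h3 := mono_update hA hx (i := i) hw hxi (by linarith)
      rw [hself] at h3
      have h4 : x i - u ≤ b - a := by linarith [hxi.2, hu.1]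
      have h5 : 0 ≤ x i - u := by linarith
      have h6 : κ * (x i - u) ≤ G x - G (Function.update x i u) := by nlinarith
      nlinarith
    · have hw : c - r ∈ Set.Icc a b := ⟨by linarith [hxi.1], by linarith [H.c_mem.2]⟩
      have h1 := near (c - r) hw (by rw [sub_sub_cancel_left, abs_neg, abs_of_pos hr0])
      rw [abs_of_nonpos (by linarith : c - r - u ≤ 0)] at h1
      have h2 := (abs_le.1 h1).2
      have h3 := mono_update hA hx (i := i) hxi hw (by linarith)
      rw [hself] at h3
      have h4 : u - x i ≤ b - a := by linarith [hxi.1, hu.2]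
      have h5 : 0 ≤ u - x i := by linarith
      have h6 : κ * (u - x i) ≤ G (Function.update x i u) - G x := by nlinarith
      nlinarith

lemma var_succ_eq (H : Hier a b c B G α ν) (n : ℕ) :
    lawVar (ν (n + 1)) = ∫ x, (G x - lawMean (ν (n + 1))) ^ 2 ∂iidPi k (ν n) :=
  H.integral_succ n (ψ := fun y => (y - lawMean (ν (n + 1))) ^ 2) (by fun_prop)

variable [∀ n, IsProbabilityMeasure (ν n)]

/-- The variance decays at most geometrically. -/
lemma var_lower (H : Hier a b c B G α ν) (hA : IsAvg a b G) {i : Fin k} (hi : 0 < α i) :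
    ∃ κ : ℝ, 0 < κ ∧ ∀ᶠ n in atTop, κ * lawVar (ν n) ≤ lawVar (ν (n + 1)) := by
  obtain ⟨r, hr, κ, hκ, hinc⟩ := H.increment_lower hA hi
  refine ⟨(κ / 2) ^ 2, by positivity, ?_⟩
  have hk0 : (0 : ℝ) < k := by
    have := i.pos; exact_mod_cast this
  have e1 : ∀ᶠ n in atTop, (ν n).real {x : ℝ | r < |x - c|} < 1 / (2 * k) :=
    (H.tendsto_prob r hr).eventually_lt_const (by positivity)
  have e2 : ∀ᶠ n in atTop, |lawMean (ν n) - c| < r / 2 :=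
    H.tendsto_mean.eventually_lt_const (by positivity)
  filter_upwards [e1, e2] with n hp hm
  set μ := ν n with hμ
  set m := lawMean μ with hmdef
  have hae := H.ae n
  have hmI : m ∈ Set.Icc a b := lawMean_mem hae
  have hG := H.cont
  set E : Set ℝ := {x : ℝ | r < |x - c|} with hE
  have hEm : MeasurableSet E := measurableSet_lt measurable_const (by fun_prop)
  -- a lower bound for the indicator of the event that the other coordinates are close to `c`
  set Hf : (Fin k → ℝ) → ℝ := fun x => 1 - ∑ j ∈ Finset.univ.erase i, E.indicator 1 (x j) with hHf
  have hIE : ∀ j : Fin k, Integrable (fun x : Fin k → ℝ => E.indicator (1 : ℝ → ℝ) (x j))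
      (iidPi k μ) := by
    intro j
    refine Integrable.of_bound ((measurable_one.indicator hEm).comp
      (measurable_pi_apply j)).aestronglyMeasurable 1 (Eventually.of_forall fun x => ?_)
    by_cases h : x j ∈ E <;> simp [h]
  have hHI : Integrable Hf (iidPi k μ) :=
    (integrable_const _).sub (integrable_finsetSum _ fun j _ => hIE j)
  have hHint : 1 / 2 ≤ ∫ x, Hf x ∂iidPi k μ := by
    simp only [hHf]
    rw [integral_sub (integrable_const _) (integrable_finsetSum _ fun j _ => hIE j),
      integral_finsetSum _ fun j _ => hIE j]
    have : ∀ j : Fin k, ∫ x, E.indicator (1 : ℝ → ℝ) (x j) ∂iidPi k μ = μ.real E := by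
      intro j
      rw [iidPi_eval (ψ := E.indicator 1) (measurable_one.indicator hEm).aestronglyMeasurable,
        integral_indicator_one hEm]
    simp only [this, integral_const, probReal_univ, smul_eq_mul, one_mul, Finset.sum_const,
      nsmul_eq_mul]
    have hc : ((Finset.univ.erase i).card : ℝ) ≤ k := by
      exact_mod_cast (Finset.card_le_univ _).trans (by simp)
    rw [lt_div_iff₀ (by positivity)] at hp
    have := mul_le_mul_of_nonneg_right hc (measureReal_nonneg (μ := μ) (s := E))
    linarith
  have hHu : ∀ x u, Hf (Function.update x i u) = Hf x := by
    intro x u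
    simp only [hHf]
    congr 1
    exact Finset.sum_congr rfl fun j hj => by
      rw [Function.update_of_ne (Finset.ne_of_mem_erase hj)]
  have hHle : ∀ x, Hf x ≤ 1 := fun x => by
    simp only [hHf]
    have : 0 ≤ ∑ j ∈ Finset.univ.erase i, E.indicator (1 : ℝ → ℝ) (x j) :=
      Finset.sum_nonneg fun j _ => Set.indicator_nonneg (fun _ _ => zero_le_one) _
    linarith
  have hIprod : Integrable (fun x => Hf x * (x i - m) ^ 2) (iidPi k μ) := by
    refine (iidPi_integrable hae (g := fun x => (x i - m) ^ 2) (by fun_prop)).bdd_mul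
      (c := 1 + k) hHI.aestronglyMeasurable (Eventually.of_forall fun x => ?_)
    have h1 : ∑ j ∈ Finset.univ.erase i, E.indicator (1 : ℝ → ℝ) (x j) ≤ k := by
      refine (Finset.sum_le_sum (g := fun _ => (1 : ℝ)) fun j _ =>
        Set.indicator_le_self' (fun _ _ => zero_le_one) _).trans ?_
      simp only [Finset.sum_const, nsmul_eq_mul, mul_one]
      exact_mod_cast (Finset.card_le_univ _).trans (by simp)
    rw [Real.norm_eq_abs, abs_le]
    have h2 := hHle x
    constructor
    · simp only [hHf] at *; linarith
    · linarith
  have hgood : ∀ x, Hf x * (x i - m) ^ 2 ≤ 0 ∨ ∀ j, j ≠ i → |x j - c| ≤ r := by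
    intro x
    by_cases h : ∀ j, j ≠ i → |x j - c| ≤ r
    · exact Or.inr h
    · left
      push Not at h
      obtain ⟨j, hj, hjr⟩ := h
      have h1 : (1 : ℝ) ≤ ∑ l ∈ Finset.univ.erase i, E.indicator (1 : ℝ → ℝ) (x l) := by
        have := Finset.single_le_sum (f := fun l => E.indicator (1 : ℝ → ℝ) (x l))
          (fun l _ => Set.indicator_nonneg (fun _ _ => zero_le_one) _)
          (Finset.mem_erase.2 ⟨hj, Finset.mem_univ j⟩)
        rwa [Set.indicator_of_mem (by exact hjr)] at this
      refine mul_nonpos_of_nonpos_of_nonneg ?_ (sq_nonneg _)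
      simp only [hHf]; linarith
  have hptw : ∀ᵐ x ∂iidPi k μ, κ * (Hf x * (x i - m) ^ 2)
      ≤ (G x - G (Function.update x i m)) * (x i - m) := by
    filter_upwards [iidPi_ae_box hae] with x hx
    rcases hgood x with h | h
    · have h1 : 0 ≤ (G x - G (Function.update x i m)) * (x i - m) := by
        have hself : Function.update x i (x i) = x := Function.update_eq_self i x
        rcases le_total m (x i) with h2 | h2
        · have := mono_update hA hx (i := i) hmI (hx i) h2
          rw [hself] at this
          exact mul_nonneg (by linarith) (by linarith)
        · have := mono_update hA hx (i := i) (hx i) hmI h2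
          rw [hself] at this
          exact mul_nonneg_of_nonpos_of_nonpos (by linarith) (by linarith)
      have h2 : κ * (Hf x * (x i - m) ^ 2) ≤ 0 := mul_nonpos_of_nonneg_of_nonpos hκ.le h
      linarith
    · refine le_trans ?_ (hinc x hx m hmI hm.le h)
      have := mul_le_mul_of_nonneg_right (hHle x) (sq_nonneg (x i - m))
      nlinarith
  have hupd : Continuous fun x : Fin k → ℝ => G (Function.update x i m) :=
    hG.comp (continuous_id.update i continuous_const)
  have h1 : ∫ x, κ * (Hf x * (x i - m) ^ 2) ∂iidPi k μ
      ≤ ∫ x, (G x - G (Function.update x i m)) * (x i - m) ∂iidPi k μ :=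
    integral_mono_ae (hIprod.const_mul _) (iidPi_integrable hae (by fun_prop)) hptw
  rw [integral_const_mul, iidPi_mul (H := Hf) (ψ := fun u => (u - m) ^ 2) i hHu hIprod] at h1
  -- the frozen term and the mean do not contribute, leaving a covariance
  have h2 : ∫ x, (G x - G (Function.update x i m)) * (x i - m) ∂iidPi k μ
      = ∫ x, (G x - lawMean (ν (n + 1))) * (x i - m) ∂iidPi k μ := by
    have z1 : ∫ x, G (Function.update x i m) * (x i - m) ∂iidPi k μ = 0 := by
      rw [iidPi_mul (H := fun x => G (Function.update x i m)) (ψ := fun u => u - m) i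
        (fun x u => by rw [Function.update_idem]) (iidPi_integrable hae (by fun_prop)),
        integral_sub_lawMean hae, mul_zero]
    have z2 : ∫ x : Fin k → ℝ, lawMean (ν (n + 1)) * (x i - m) ∂iidPi k μ = 0 := by
      rw [integral_const_mul, iidPi_eval (ψ := fun u => u - m) (by fun_prop),
        integral_sub_lawMean hae, mul_zero]
    simp only [sub_mul (G _)]
    rw [integral_sub (iidPi_integrable hae (by fun_prop)) (iidPi_integrable hae (by fun_prop)),
      integral_sub (iidPi_integrable hae (by fun_prop)) (iidPi_integrable hae (by fun_prop)),
      z1, z2]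
  have h3 := integral_mul_sq_le (P := iidPi k μ) (f := fun x => G x - lawMean (ν (n + 1)))
    (g := fun x => x i - m) (iidPi_integrable hae (by fun_prop))
    (iidPi_integrable hae (by fun_prop)) (iidPi_integrable hae (by fun_prop))
  rw [← H.var_succ_eq, iidPi_eval (ψ := fun u => (u - m) ^ 2) (by fun_prop)] at h3
  rw [h2] at h1
  change (_ : ℝ) ≤ lawVar (ν (n + 1)) * lawVar μ at h3
  change κ * ((∫ x, Hf x ∂_) * lawVar μ) ≤ _ at h1
  set cov := ∫ x, (G x - lawMean (ν (n + 1))) * (x i - m) ∂iidPi k μ with hcov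
  have hV : 0 ≤ lawVar μ := lawVar_nonneg
  have h4 : κ / 2 * lawVar μ ≤ cov := by
    refine le_trans ?_ h1
    have := mul_le_mul_of_nonneg_right hHint hV
    nlinarith
  rcases hV.eq_or_lt with h0 | h0
  · rw [← h0, mul_zero]; exact lawVar_nonneg
  · have h5 : (κ / 2 * lawVar μ) ^ 2 ≤ cov ^ 2 := by gcongr
    have h6 : (κ / 2) ^ 2 * lawVar μ * lawVar μ ≤ lawVar (ν (n + 1)) * lawVar μ := by nlinarith
    exact le_of_mul_le_mul_right h6 h0

end Hier

/-! ### Large deviations are of the order of the squared variance -/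

lemma integrable_indicator_eval {k : ℕ} {μ : Measure ℝ} [IsProbabilityMeasure μ] {E : Set ℝ}
    (hE : MeasurableSet E) (j : Fin k) :
    Integrable (fun x : Fin k → ℝ => E.indicator (1 : ℝ → ℝ) (x j)) (iidPi k μ) := by
  refine Integrable.of_bound ((measurable_one.indicator hE).comp
    (measurable_pi_apply j)).aestronglyMeasurable 1 (Eventually.of_forall fun x => ?_)
  by_cases h : x j ∈ E <;> simp [h]

lemma integral_indicator_eval {k : ℕ} {μ : Measure ℝ} [IsProbabilityMeasure μ] {E : Set ℝ}
    (hE : MeasurableSet E) (j : Fin k) :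
    ∫ x, E.indicator (1 : ℝ → ℝ) (x j) ∂iidPi k μ = μ.real E := by
  rw [iidPi_eval (ψ := E.indicator 1) (measurable_one.indicator hE).aestronglyMeasurable,
    integral_indicator_one hE]

namespace Hier

variable {a b c B : ℝ} {k : ℕ} {G : (Fin k → ℝ) → ℝ} {α : Fin k → ℝ} {ν : ℕ → Measure ℝ}
  [∀ n, IsProbabilityMeasure (ν n)]

/-- If a single coordinate raised to `y` keeps the value below `w` while the others are at `x₀`,
then exceeding `w` needs either one coordinate above `y` or two above `x₀`. -/
lemma tail_step (H : Hier a b c B G α ν) (hA : IsAvg a b G) (hk : 0 < k) {x₀ y w : ℝ}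
    (hx₀ : x₀ ∈ Set.Icc a b) (hy : y ∈ Set.Icc a b)
    (hw : ∀ i, G (Function.update (fun _ => x₀) i y) ≤ w) (n : ℕ) :
    (ν (n + 1)).real (Set.Ioi w) ≤ k * (ν n).real (Set.Ioi y)
      + k ^ 2 * (ν n).real (Set.Ioi x₀) ^ 2 := by
  set μ := ν n with hμ
  have hae := H.ae n
  set f : ℝ → ℝ := (Set.Ioi y).indicator 1 with hf
  set g : ℝ → ℝ := (Set.Ioi x₀).indicator 1 with hg
  have hg0 : ∀ u, 0 ≤ g u := fun u => Set.indicator_nonneg (fun _ _ => zero_le_one) u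
  have hf0 : ∀ u, 0 ≤ f u := fun u => Set.indicator_nonneg (fun _ _ => zero_le_one) u
  have hg1 : ∀ u, g u ≤ 1 := fun u => Set.indicator_le_self' (fun _ _ => zero_le_one) u
  have hgm : Measurable g := measurable_one.indicator measurableSet_Ioi
  have hgI : ∀ i j : Fin k, Integrable (fun x : Fin k → ℝ => g (x i) * g (x j)) (iidPi k μ) := by
    intro i j
    refine Integrable.of_bound (by fun_prop) 1 (Eventually.of_forall fun x => ?_)
    rw [Real.norm_eq_abs, abs_of_nonneg (mul_nonneg (hg0 _) (hg0 _))]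
    exact mul_le_one₀ (hg1 _) (hg0 _) (hg1 _)
  have hfI : ∀ i : Fin k, Integrable (fun x : Fin k → ℝ => f (x i)) (iidPi k μ) :=
    fun i => integrable_indicator_eval measurableSet_Ioi i
  have hgg : ∀ i, ∀ j ∈ Finset.univ.erase i, ∫ x, g (x i) * g (x j) ∂iidPi k μ
      = μ.real (Set.Ioi x₀) ^ 2 := by
    intro i j hj
    have hne := (Finset.ne_of_mem_erase hj).symm
    rw [iidPi_mul (H := fun x => g (x i)) (ψ := g) j
      (fun x u => by rw [Function.update_of_ne hne]) (hgI i j),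
      integral_indicator_eval measurableSet_Ioi, integral_indicator_one measurableSet_Ioi, sq]
  have hmeas : MeasurableSet {x : Fin k → ℝ | w < G x} :=
    measurableSet_lt measurable_const H.cont.measurable
  have h1 : (ν (n + 1)).real (Set.Ioi w)
      = ∫ x, {x : Fin k → ℝ | w < G x}.indicator 1 x ∂iidPi k μ := by
    rw [integral_indicator_one hmeas, H.succ,
      map_measureReal_apply H.cont.measurable measurableSet_Ioi]
    rfl
  have hI1 : Integrable (fun x : Fin k → ℝ => ∑ i, f (x i)) (iidPi k μ) :=
    integrable_finsetSum _ fun i _ => hfI i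
  have hI2 : Integrable (fun x : Fin k → ℝ => ∑ i, ∑ j ∈ Finset.univ.erase i, g (x i) * g (x j))
      (iidPi k μ) := integrable_finsetSum _ fun i _ => integrable_finsetSum _ fun j _ => hgI i j
  have h2 : ∫ x, {x : Fin k → ℝ | w < G x}.indicator 1 x ∂iidPi k μ
      ≤ ∫ x, (∑ i, f (x i) + ∑ i, ∑ j ∈ Finset.univ.erase i, g (x i) * g (x j)) ∂iidPi k μ := by
    refine integral_mono_ae ((integrable_const 1).indicator hmeas) (hI1.add hI2) ?_
    filter_upwards [iidPi_ae_box hae] with x hx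
    have n1 : 0 ≤ ∑ i, f (x i) := Finset.sum_nonneg fun i _ => hf0 _
    have n2 : 0 ≤ ∑ i, ∑ j ∈ Finset.univ.erase i, g (x i) * g (x j) :=
      Finset.sum_nonneg fun i _ => Finset.sum_nonneg fun j _ => mul_nonneg (hg0 _) (hg0 _)
    by_cases hGx : w < G x
    swap
    · rw [Set.indicator_of_notMem (by exact hGx)]; linarith
    rw [Set.indicator_of_mem (by exact hGx), Pi.one_apply]
    by_cases hbig : ∃ i, y < x i
    · obtain ⟨i, hi⟩ := hbig
      have := Finset.single_le_sum (f := fun i => f (x i)) (fun i _ => hf0 _) (Finset.mem_univ i)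
      simp only [hf] at this n1 ⊢
      rw [Set.indicator_of_mem (by exact hi), Pi.one_apply] at this
      linarith
    push Not at hbig
    obtain ⟨i, j, hij, hi, hj⟩ : ∃ i j, i ≠ j ∧ x₀ < x i ∧ x₀ < x j := by
      by_contra hcon
      push Not at hcon
      obtain ⟨i, hi⟩ : ∃ i : Fin k, ∀ j, j ≠ i → x j ≤ x₀ := by
        by_cases h : ∃ i, x₀ < x i
        · obtain ⟨i, hi⟩ := h
          exact ⟨i, fun j hj => hcon i j hj.symm hi⟩
        · push Not at h
          exact ⟨⟨0, hk⟩, fun j _ => h j⟩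
      have := hA.mono x (Function.update (fun _ => x₀) i y) hx
        (update_mem_Icc (fun _ => hx₀) i hy) (fun j => by
          by_cases hj : j = i
          · subst hj; simpa using hbig j
          · simpa [hj] using hi j hj)
      exact absurd (this.trans (hw i)) (not_le.2 hGx)
    have s1 := Finset.single_le_sum (f := fun j => g (x i) * g (x j))
      (fun j _ => mul_nonneg (hg0 _) (hg0 _)) (Finset.mem_erase.2 ⟨hij.symm, Finset.mem_univ j⟩)
    have s2 := Finset.single_le_sum
      (f := fun i => ∑ j ∈ Finset.univ.erase i, g (x i) * g (x j))
      (fun i _ => Finset.sum_nonneg fun j _ => mul_nonneg (hg0 _) (hg0 _)) (Finset.mem_univ i)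
    have e1 : g (x i) = 1 := Set.indicator_of_mem (by exact hi) _
    have e2 : g (x j) = 1 := Set.indicator_of_mem (by exact hj) _
    simp only [e1, e2, mul_one] at s1
    simp only [e1] at s2
    linarith
  rw [h1]
  refine h2.trans ?_
  rw [integral_add hI1 hI2, integral_finsetSum _ fun i _ => hfI i,
    integral_finsetSum _ fun i _ => integrable_finsetSum _ fun j _ => hgI i j]
  have e3 : ∀ i : Fin k, ∫ x, f (x i) ∂iidPi k μ = μ.real (Set.Ioi y) := fun i =>
    integral_indicator_eval measurableSet_Ioi i
  have e4 : ∀ i : Fin k, ∫ x, ∑ j ∈ Finset.univ.erase i, g (x i) * g (x j) ∂iidPi k μ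
      ≤ k * μ.real (Set.Ioi x₀) ^ 2 := by
    intro i
    rw [integral_finsetSum _ fun j _ => hgI i j, Finset.sum_congr rfl (hgg i), Finset.sum_const,
      nsmul_eq_mul]
    refine mul_le_mul_of_nonneg_right ?_ (sq_nonneg _)
    exact_mod_cast (Finset.card_le_univ _).trans (by simp)
  have e5 := Finset.sum_le_sum fun i (_ : i ∈ (Finset.univ : Finset (Fin k))) => e4 i
  simp only [e3, Finset.sum_const, Finset.card_univ, Fintype.card_fin, nsmul_eq_mul] at e5 ⊢
  linarith

lemma chebyshev (H : Hier a b c B G α ν) {ε : ℝ} (hε : 0 < ε) :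
    ∀ᶠ n in atTop, (ν n).real (Set.Ioi (c + ε)) ≤ 4 / ε ^ 2 * lawVar (ν n) := by
  filter_upwards [H.tendsto_mean.eventually_lt_const (half_pos hε)] with n hm
  rw [← integral_indicator_one measurableSet_Ioi, lawVar, ← integral_const_mul]
  refine integral_mono ((integrable_const 1).indicator measurableSet_Ioi)
    (integrable_of_continuous (H.ae n) (by fun_prop)) fun y => ?_
  by_cases hy : c + ε < y
  · rw [Set.indicator_of_mem (by exact hy), Pi.one_apply]
    dsimp only
    rw [div_mul_eq_mul_div, le_div_iff₀ (by positivity)]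
    have := (abs_lt.1 hm).2
    nlinarith
  · rw [Set.indicator_of_notMem (by exact hy)]
    positivity

/-- Deviations above `c` by a fixed amount have probability of the order of the squared variance. -/
lemma upper_tail (H : Hier a b c B G α ν) (hA : IsAvg a b G) {i : Fin k} (hi : 0 < α i)
    {ε : ℝ} (hε : 0 < ε) :
    ∃ C : ℝ, 0 ≤ C ∧ ∀ᶠ n in atTop, (ν n).real (Set.Ioi (c + ε)) ≤ C * lawVar (ν n) ^ 2 := by
  have hnull : ∀ y, b ≤ y → ∀ n, (ν n).real (Set.Ioi y) = 0 := by
    intro y hy n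
    rw [measureReal_def, measure_mono_null (s := Set.Ioi y) (fun x hx => ?_) (H.ae n), ENNReal.toReal_zero]
    intro hx'
    exact absurd (hy.trans_lt (Set.mem_Ioi.1 hx)) (not_lt.2 hx'.2)
  rcases le_or_gt b (c + ε / 2) with hb | hb
  · exact ⟨0, le_rfl, Eventually.of_forall fun n => by rw [hnull _ (by linarith)]; simp⟩
  set x₀ := c + ε / 2 with hx₀def
  have hx₀ : x₀ ∈ Set.Icc a b := ⟨by linarith [H.c_mem.1], hb.le⟩
  obtain ⟨κ, hκ, hκV⟩ := H.var_lower hA hi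
  have hcheb := H.chebyshev (half_pos hε)
  set C₁ := 4 / (ε / 2) ^ 2 with hC₁
  set A : Set ℝ := {y | y ∈ Set.Icc x₀ b ∧ ∃ C : ℝ, 0 ≤ C ∧
    ∀ᶠ n in atTop, (ν n).real (Set.Ioi y) ≤ C * lawVar (ν n) ^ 2} with hAdef
  have hbA : b ∈ A := ⟨⟨hb.le, le_rfl⟩, 0, le_rfl,
    Eventually.of_forall fun n => by rw [hnull b le_rfl]; simp⟩
  have hstep : ∀ y ∈ A, ∀ w ∈ Set.Icc x₀ b,
      (∀ i, G (Function.update (fun _ => x₀) i y) ≤ w) → w ∈ A := by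
    rintro y ⟨hy, C, hC, hyC⟩ w hw hGw
    refine ⟨hw, (k * C + k ^ 2 * C₁ ^ 2) / κ ^ 2, by positivity, ?_⟩
    have hev : ∀ᶠ n in atTop, (ν (n + 1)).real (Set.Ioi w)
        ≤ (k * C + k ^ 2 * C₁ ^ 2) / κ ^ 2 * lawVar (ν (n + 1)) ^ 2 := by
      filter_upwards [hyC, hκV, hcheb] with n h1 h2 h3
      have hyI : y ∈ Set.Icc a b := ⟨hx₀.1.trans hy.1, hy.2⟩
      have h4 := H.tail_step hA i.pos hx₀ hyI hGw n
      have hV : 0 ≤ lawVar (ν n) := lawVar_nonneg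
      have h5 : (ν n).real (Set.Ioi x₀) ^ 2 ≤ (C₁ * lawVar (ν n)) ^ 2 := by
        have : 0 ≤ (ν n).real (Set.Ioi x₀) := measureReal_nonneg
        gcongr
      have h6 : (κ * lawVar (ν n)) ^ 2 ≤ lawVar (ν (n + 1)) ^ 2 := by gcongr
      calc (ν (n + 1)).real (Set.Ioi w)
          ≤ k * (C * lawVar (ν n) ^ 2) + k ^ 2 * (C₁ * lawVar (ν n)) ^ 2 := by
            refine h4.trans ?_; gcongr
        _ = (k * C + k ^ 2 * C₁ ^ 2) / κ ^ 2 * (κ * lawVar (ν n)) ^ 2 := by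
            field_simp
        _ ≤ _ := by gcongr
    obtain ⟨N, hN⟩ := eventually_atTop.1 hev
    refine eventually_atTop.2 ⟨N + 1, fun n hn => ?_⟩
    obtain ⟨m, rfl⟩ : ∃ m, n = m + 1 := ⟨n - 1, by omega⟩
    exact hN m (by omega)
  have hbdd : BddBelow A := ⟨x₀, fun y hy => hy.1.1⟩
  set ys := sInf A with hys
  have hys0 : x₀ ≤ ys := le_csInf ⟨b, hbA⟩ fun y hy => hy.1.1
  have hysb : ys ≤ b := csInf_le hbdd hbA
  have hcl : ∃ᶠ y in nhds ys, y ∈ A := mem_closure_iff_frequently.1 (csInf_mem_closure ⟨b, hbA⟩ hbdd)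
  have hinf : ys = x₀ := by
    by_contra hne
    have hlt : x₀ < ys := lt_of_le_of_ne hys0 (Ne.symm hne)
    have hysI : ys ∈ Set.Icc a b := ⟨hx₀.1.trans hys0, hysb⟩
    -- the infimum could be lowered because a single deviating coordinate is strictly contracted
    have e1 : ∀ᶠ w in nhdsWithin ys (Set.Iio ys),
        (∀ i, G (Function.update (fun _ => x₀) i ys) < w) ∧ x₀ < w ∧ w < ys := by
      refine Eventually.and (eventually_all.2 fun i => ?_) (Eventually.and ?_ ?_)
      · exact mem_nhdsWithin_of_mem_nhds (lt_mem_nhds (hA.up x₀ hx₀ ys hysI hlt i))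
      · exact mem_nhdsWithin_of_mem_nhds (lt_mem_nhds hlt)
      · exact self_mem_nhdsWithin
    obtain ⟨w, hw1, hw2, hw3⟩ := e1.exists
    have e2 : ∀ᶠ y in nhds ys, ∀ i, G (Function.update (fun _ => x₀) i y) < w := by
      refine eventually_all.2 fun i => ?_
      have : Continuous fun y : ℝ => G (Function.update (fun _ => x₀) i y) :=
        H.cont.comp (continuous_const.update i continuous_id)
      exact (this.tendsto ys).eventually_lt_const (hw1 i)
    obtain ⟨y, hyA, hy⟩ := (hcl.and_eventually e2).exists
    have := csInf_le hbdd (hstep y hyA w ⟨hw2.le, hw3.le.trans hysb⟩ fun i => (hy i).le)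
    linarith
  rw [hinf] at hcl
  have hlt2 : ∀ᶠ y in nhds x₀, y < c + ε := gt_mem_nhds (by rw [hx₀def]; linarith)
  obtain ⟨y, ⟨_, C, hC, hyC⟩, hy⟩ := (hcl.and_eventually hlt2).exists
  refine ⟨C, hC, hyC.mono fun n hn => le_trans ?_ hn⟩
  exact measureReal_mono (Set.Ioi_subset_Ioi hy.le)

/-- Reflection of a hierarchical sequence. -/
lemma neg (H : Hier a b c B G α ν) :
    Hier (-b) (-a) (-c) B (fun x => -G fun i => -x i) α (fun n => Measure.map Neg.neg (ν n)) where
  lt := neg_lt_neg H.lt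
  cont := (H.cont.comp (by fun_prop)).neg
  ae n := by
    rw [ae_map_iff (p := fun x => x ∈ Set.Icc (-b) (-a)) measurable_neg.aemeasurable
      measurableSet_Icc]
    filter_upwards [H.ae n] with x hx
    exact ⟨neg_le_neg hx.2, neg_le_neg hx.1⟩
  succ n := by
    have hG := H.cont
    have hm : Measurable fun x : Fin k → ℝ => -G fun i => -x i :=
      ((hG.comp (by fun_prop)).neg).measurable
    have e : iidPi k (Measure.map Neg.neg (ν n))
        = Measure.map (fun (x : Fin k → ℝ) i => -x i) (iidPi k (ν n)) :=
      (Measure.pi_map_pi (μ := fun _ : Fin k => ν n) (f := fun _ => Neg.neg)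
        fun _ => measurable_neg.aemeasurable).symm
    rw [e, Measure.map_map hm (by fun_prop), H.succ, Measure.map_map measurable_neg hG.measurable]
    congr 1
    funext x
    simp
  c_mem := ⟨neg_le_neg H.c_mem.2, neg_le_neg H.c_mem.1⟩
  B_nonneg := H.B_nonneg
  taylor x y hx hy ρ hρ hxρ hyρ := by
    have e : ∀ u : ℝ, |-u - c| = |u - -c| := fun u => by
      rw [← abs_neg]; congr 1; ring
    have h := H.taylor (fun i => -x i) (fun i => -y i)
      (fun i => ⟨by linarith [(hx i).2], by linarith [(hx i).1]⟩)
      (fun i => ⟨by linarith [(hy i).2], by linarith [(hy i).1]⟩) ρ hρ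
      (fun i => by rw [e]; exact hxρ i) (fun i => by rw [e]; exact hyρ i)
    have e1 : ∀ i, |(-x i) - (-y i)| = |x i - y i| := fun i => by
      rw [← abs_neg]; congr 1; ring
    have e2 : ∑ i, α i * (-x i - -y i) = -∑ i, α i * (x i - y i) := by
      rw [← Finset.sum_neg_distrib]; exact Finset.sum_congr rfl fun i _ => by ring
    simp only [e1, e2] at h
    rw [← abs_neg] at h
    refine le_trans (le_of_eq ?_) h
    congr 1; ring
  tendsto_prob ε hε := by
    refine (H.tendsto_prob ε hε).congr fun n => ?_
    rw [map_measureReal_apply measurable_neg (measurableSet_lt measurable_const (by fun_prop))]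
    congr 1
    ext x
    change ε < |x - c| ↔ ε < |-x - -c|
    rw [← abs_neg, neg_sub_neg, neg_sub]

end Hier

lemma IsAvg.neg {a b : ℝ} {k : ℕ} {G : (Fin k → ℝ) → ℝ} (hA : IsAvg a b G) :
    IsAvg (-b) (-a) (fun x => -G fun i => -x i) := by
  have hI : ∀ u, u ∈ Set.Icc (-b) (-a) → -u ∈ Set.Icc a b := fun u hu =>
    ⟨by linarith [hu.2], by linarith [hu.1]⟩
  have hU : ∀ (x y : ℝ) (i : Fin k), (fun j => -Function.update (fun _ => x) i y j)
      = Function.update (fun _ => -x) i (-y) := fun x y i => by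
    funext j
    by_cases h : j = i
    · subst h; simp
    · simp [h]
  refine ⟨fun t ht => ?_, fun x y hx hy hxy => ?_, fun x hx y hy hxy i => ?_,
    fun x hx y hy hxy i => ?_⟩
  · have := hA.fixed (-t) (hI t ht); dsimp only; rw [this, neg_neg]
  · exact neg_le_neg (hA.mono _ _ (fun i => hI _ (hy i)) (fun i => hI _ (hx i))
      fun i => neg_le_neg (hxy i))
  · have := hA.down (-y) (hI y hy) (-x) (hI x hx) (neg_lt_neg hxy) i
    rw [hU]; linarith
  · have := hA.up (-y) (hI y hy) (-x) (hI x hx) (neg_lt_neg hxy) i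
    rw [hU]; linarith

lemma lawVar_map_neg (μ : Measure ℝ) : lawVar (Measure.map Neg.neg μ) = lawVar μ := by
  have hm : lawMean (Measure.map Neg.neg μ) = -lawMean μ := by
    unfold lawMean
    rw [integral_map measurable_neg.aemeasurable (by fun_prop), integral_neg]
  unfold lawVar
  rw [hm, integral_map measurable_neg.aemeasurable (by fun_prop)]
  exact integral_congr_ae (Eventually.of_forall fun x => by ring)

namespace Hier

variable {a b c B : ℝ} {k : ℕ} {G : (Fin k → ℝ) → ℝ} {α : Fin k → ℝ} {ν : ℕ → Measure ℝ}
  [∀ n, IsProbabilityMeasure (ν n)]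

/-- Deviations from `c` by a fixed amount have probability of the order of the squared variance. -/
lemma tail (H : Hier a b c B G α ν) (hA : IsAvg a b G) {i : Fin k} (hi : 0 < α i)
    {ε : ℝ} (hε : 0 < ε) : ∃ C : ℝ, 0 ≤ C ∧
    ∀ᶠ n in atTop, (ν n).real {x : ℝ | ε < |x - c|} ≤ C * lawVar (ν n) ^ 2 := by
  obtain ⟨C₁, hC₁, h₁⟩ := H.upper_tail hA hi hε
  have : ∀ n, IsProbabilityMeasure (Measure.map Neg.neg (ν n)) := fun n =>
    Measure.isProbabilityMeasure_map measurable_neg.aemeasurable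
  obtain ⟨C₂, hC₂, h₂⟩ := H.neg.upper_tail hA.neg hi hε
  refine ⟨C₁ + C₂, by positivity, ?_⟩
  filter_upwards [h₁, h₂] with n p q
  rw [lawVar_map_neg, map_measureReal_apply measurable_neg measurableSet_Ioi] at q
  have hsub : {x : ℝ | ε < |x - c|} ⊆ Set.Ioi (c + ε) ∪ Neg.neg ⁻¹' Set.Ioi (-c + ε) := by
    intro x hx
    rcases lt_abs.1 (show ε < |x - c| from hx) with h | h
    · left; change c + ε < x; linarith
    · right; change -c + ε < -x; linarith
  have := (measureReal_mono hsub).trans (measureReal_union_le (μ := ν n) _ _)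
  linarith

end Hier

/-! ### The linearization error -/

/-- The error of the linear approximation of `G` around the diagonal point given by the mean. -/
noncomputable def linRem {k : ℕ} (G : (Fin k → ℝ) → ℝ) (α : Fin k → ℝ) (μ : Measure ℝ) :
    (Fin k → ℝ) → ℝ :=
  fun x => G x - lawMean μ - ∑ i, α i * (x i - lawMean μ)

lemma sum_abs_sq_le {k : ℕ} (v : Fin k → ℝ) : (∑ i, |v i|) ^ 2 ≤ k * ∑ i, v i ^ 2 := by
  have := sq_sum_le_card_mul_sum_sq (s := Finset.univ) (f := fun i => |v i|)
  simpa using this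

lemma sum_abs_pow_four_le {k : ℕ} (v : Fin k → ℝ) :
    (∑ i, |v i|) ^ 4 ≤ k ^ 3 * ∑ i, v i ^ 4 := by
  have h1 := sum_abs_sq_le v
  have h2 := sq_sum_le_card_mul_sum_sq (s := Finset.univ) (f := fun i => v i ^ 2)
  simp only [Finset.card_univ, Fintype.card_fin, ← pow_mul] at h2
  calc (∑ i, |v i|) ^ 4 = ((∑ i, |v i|) ^ 2) ^ 2 := by ring
    _ ≤ (k * ∑ i, v i ^ 2) ^ 2 := by gcongr
    _ = k ^ 2 * (∑ i, v i ^ 2) ^ 2 := by ring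
    _ ≤ k ^ 2 * (k * ∑ i, v i ^ (2 * 2)) := by gcongr
    _ = k ^ 3 * ∑ i, v i ^ 4 := by ring

/-- Centring does not increase the fourth moment by more than a factor `16`. -/
lemma integral_centre_pow_four_le {Ω : Type*} [MeasurableSpace Ω] {P : Measure Ω}
    [IsProbabilityMeasure P] {f : Ω → ℝ} (h1 : Integrable f P)
    (h2 : Integrable (fun x => f x ^ 2) P) (h4 : Integrable (fun x => f x ^ 4) P)
    (h5 : Integrable (fun x => (f x - ∫ y, f y ∂P) ^ 4) P) :
    ∫ x, (f x - ∫ y, f y ∂P) ^ 4 ∂P ≤ 16 * ∫ x, f x ^ 4 ∂P := by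
  set m := ∫ y, f y ∂P with hm
  have c1 : m ^ 2 ≤ ∫ x, f x ^ 2 ∂P := by
    have := integral_mul_sq_le (P := P) (f := f) (g := fun _ => 1) h2 (integrable_const _)
      (by simpa using h1)
    simpa using this
  have c2 : (∫ x, f x ^ 2 ∂P) ^ 2 ≤ ∫ x, f x ^ 4 ∂P := by
    have e : ∀ x, (f x ^ 2) ^ 2 = f x ^ 4 := fun x => by ring
    have := integral_mul_sq_le (P := P) (f := fun x => f x ^ 2) (g := fun _ => 1)
      (by simpa only [e] using h4) (integrable_const _) (by simpa using h2)
    simpa [e] using this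
  have c3 : m ^ 4 ≤ ∫ x, f x ^ 4 ∂P := by
    calc m ^ 4 = (m ^ 2) ^ 2 := by ring
      _ ≤ (∫ x, f x ^ 2 ∂P) ^ 2 := by gcongr
      _ ≤ _ := c2
  have c4 : ∫ x, (f x - m) ^ 4 ∂P ≤ ∫ x, (8 * f x ^ 4 + 8 * m ^ 4) ∂P := by
    refine integral_mono h5 ((h4.const_mul _).add (integrable_const _)) fun x => ?_
    have : 8 * f x ^ 4 + 8 * m ^ 4 - (f x - m) ^ 4
        = (f x + m) ^ 2 * (7 * f x ^ 2 - 10 * f x * m + 7 * m ^ 2)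
          := by ring
    nlinarith [sq_nonneg (f x - m), sq_nonneg (f x + m), mul_nonneg (sq_nonneg (f x + m))
      (by nlinarith [sq_nonneg (f x - m), sq_nonneg (f x), sq_nonneg m] :
        (0 : ℝ) ≤ 7 * f x ^ 2 - 10 * f x * m + 7 * m ^ 2)]
  rw [integral_add (h4.const_mul _) (integrable_const _), integral_const_mul] at c4
  simp only [integral_const, probReal_univ, smul_eq_mul, one_mul] at c4
  linarith

lemma integral_centre_sq_le {Ω : Type*} [MeasurableSpace Ω] {P : Measure Ω}
    [IsProbabilityMeasure P] {f : Ω → ℝ} (h1 : Integrable f P)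
    (h2 : Integrable (fun x => f x ^ 2) P) :
    ∫ x, (f x - ∫ y, f y ∂P) ^ 2 ∂P ≤ ∫ x, f x ^ 2 ∂P := by
  set m := ∫ y, f y ∂P with hm
  have e : ∀ x, (f x - m) ^ 2 = f x ^ 2 + (-2 * m * f x + m ^ 2) := fun x => by ring
  have J : Integrable (fun x => -2 * m * f x + m ^ 2) P :=
    (h1.const_mul _).add (integrable_const _)
  rw [integral_congr_ae (Eventually.of_forall e), integral_add h2 J,
    integral_add (h1.const_mul _) (integrable_const _), integral_const_mul, ← hm]
  simp only [integral_const, probReal_univ, smul_eq_mul, one_mul]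
  nlinarith [sq_nonneg m]

namespace Hier

variable {a b c B : ℝ} {k : ℕ} {G : (Fin k → ℝ) → ℝ} {α : Fin k → ℝ} {ν : ℕ → Measure ℝ}

lemma continuous_linRem (H : Hier a b c B G α ν) (μ : Measure ℝ) : Continuous (linRem G α μ) := by
  have := H.cont
  unfold linRem
  fun_prop

/-- The linearization error of an averaging function. -/
lemma linRem_le (H : Hier a b c B G α ν) (hA : IsAvg a b G) {n : ℕ}
    (hm : lawMean (ν n) ∈ Set.Icc a b) {x : Fin k → ℝ} (hx : ∀ i, x i ∈ Set.Icc a b) {ρ : ℝ}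
    (hρ : 0 ≤ ρ) (hxρ : ∀ i, |x i - c| ≤ ρ) (hmρ : |lawMean (ν n) - c| ≤ ρ) :
    |linRem G α (ν n) x| ≤ B * ρ * ∑ i, |x i - lawMean (ν n)| := by
  have := H.taylor x (fun _ => lawMean (ν n)) hx (fun _ => hm) ρ hρ hxρ (fun _ => hmρ)
  rwa [hA.fixed _ hm] at this

lemma linRem_le_quad (H : Hier a b c B G α ν) (hA : IsAvg a b G) {n : ℕ}
    (hm : lawMean (ν n) ∈ Set.Icc a b) {x : Fin k → ℝ} (hx : ∀ i, x i ∈ Set.Icc a b) :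
    |linRem G α (ν n) x| ≤ B * (|lawMean (ν n) - c| + ∑ i, |x i - lawMean (ν n)|)
      * ∑ i, |x i - lawMean (ν n)| := by
  have hS : ∀ i, |x i - lawMean (ν n)| ≤ ∑ i, |x i - lawMean (ν n)| := fun i =>
    Finset.single_le_sum (f := fun i => |x i - lawMean (ν n)|) (fun _ _ => abs_nonneg _)
      (Finset.mem_univ i)
  have hS0 : 0 ≤ ∑ i, |x i - lawMean (ν n)| := Finset.sum_nonneg fun _ _ => abs_nonneg _
  refine H.linRem_le hA hm hx (by positivity) (fun i => ?_) (by linarith)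
  have := abs_sub_le (x i) (lawMean (ν n)) c
  linarith [hS i]

variable [∀ n, IsProbabilityMeasure (ν n)]

/-- The linear part has the expected second moment and a controlled fourth moment. -/
lemma linear_moments (H : Hier a b c B G α ν) (n : ℕ) (β : Fin k → ℝ) :
    (∫ x, ∑ i, β i * (x i - lawMean (ν n)) ∂iidPi k (ν n) = 0) ∧
    (∫ x, (∑ i, β i * (x i - lawMean (ν n))) ^ 2 ∂iidPi k (ν n)
      = (∑ i, β i ^ 2) * lawVar (ν n)) ∧
    (∫ x, (∑ i, β i * (x i - lawMean (ν n))) ^ 4 ∂iidPi k (ν n)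
      ≤ (∑ i, β i ^ 4) * lawFourth (ν n) + 3 * (∑ i, β i ^ 2) ^ 2 * lawVar (ν n) ^ 2) :=
  iidPi_sum_moments (H.ae n) (ψ := fun y => y - lawMean (ν n)) (by fun_prop)
    (integral_sub_lawMean (H.ae n)) β Finset.univ

lemma mean_succ (H : Hier a b c B G α ν) (n : ℕ) :
    lawMean (ν (n + 1)) = lawMean (ν n) + ∫ x, linRem G α (ν n) x ∂iidPi k (ν n) := by
  have hG := H.cont
  have hae := H.ae n
  have h1 : lawMean (ν (n + 1)) = ∫ x, G x ∂iidPi k (ν n) :=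
    H.integral_succ n (ψ := fun y => y) measurable_id
  rw [h1]
  unfold linRem
  rw [integral_sub (iidPi_integrable hae (by fun_prop)) (iidPi_integrable hae (by fun_prop)),
    integral_sub (iidPi_integrable hae (by fun_prop)) (integrable_const _),
    (H.linear_moments n α).1]
  simp

lemma decomp (H : Hier a b c B G α ν) (n : ℕ) (x : Fin k → ℝ) :
    G x - lawMean (ν (n + 1)) = (∑ i, α i * (x i - lawMean (ν n)))
      + (linRem G α (ν n) x - ∫ y, linRem G α (ν n) y ∂iidPi k (ν n)) := by
  rw [H.mean_succ]; unfold linRem; ring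

lemma var_centre_le (H : Hier a b c B G α ν) (n : ℕ) :
    ∫ x, (linRem G α (ν n) x - ∫ y, linRem G α (ν n) y ∂iidPi k (ν n)) ^ 2 ∂iidPi k (ν n)
      ≤ ∫ x, linRem G α (ν n) x ^ 2 ∂iidPi k (ν n) := by
  have hR := H.continuous_linRem (ν n)
  exact integral_centre_sq_le (iidPi_integrable (H.ae n) hR)
    (iidPi_integrable (H.ae n) (by fun_prop))

/-- The standard deviation is multiplied by `(∑ αᵢ²)^{1/2}`, up to the `L²` size of the error of
the linear approximation. -/
lemma sigma_close (H : Hier a b c B G α ν) (n : ℕ) :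
    |√(lawVar (ν (n + 1))) - √(∑ i, α i ^ 2) * √(lawVar (ν n))|
      ≤ √(∫ x, linRem G α (ν n) x ^ 2 ∂iidPi k (ν n)) := by
  have hG := H.cont
  have hae := H.ae n
  have hR := H.continuous_linRem (ν n)
  set m := lawMean (ν n) with hm
  set m' := lawMean (ν (n + 1)) with hm'
  set r := ∫ y, linRem G α (ν n) y ∂iidPi k (ν n) with hr
  have hQ := Real.sqrt_le_sqrt (H.var_centre_le n)
  have hL := (H.linear_moments n α).2.1
  have hLs : √(∫ x, (∑ i, α i * (x i - m)) ^ 2 ∂iidPi k (ν n))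
      = √(∑ i, α i ^ 2) * √(lawVar (ν n)) := by
    rw [hL, Real.sqrt_mul (Finset.sum_nonneg fun i _ => sq_nonneg _)]
  have hd := H.decomp n
  rw [← hLs, H.var_succ_eq n, abs_le]
  constructor
  · have h := sqrt_integral_add_sq_le (P := iidPi k (ν n)) (f := fun x => G x - m')
      (g := fun x => -(linRem G α (ν n) x - r)) (iidPi_integrable hae (by fun_prop))
      (iidPi_integrable hae (by fun_prop)) (iidPi_integrable hae (by fun_prop))
    have e : ∀ x, G x - m' + -(linRem G α (ν n) x - r) = ∑ i, α i * (x i - m) := fun x => by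
      rw [hm', hd x]; ring
    simp only [e, neg_sq] at h
    linarith
  · have h := sqrt_integral_add_sq_le (P := iidPi k (ν n))
      (f := fun x => ∑ i, α i * (x i - m))
      (g := fun x => linRem G α (ν n) x - r) (iidPi_integrable hae (by fun_prop))
      (iidPi_integrable hae (by fun_prop)) (iidPi_integrable hae (by fun_prop))
    have e : ∀ x, (∑ i, α i * (x i - m)) + (linRem G α (ν n) x - r) = G x - m' := fun x => by
      rw [hm', hd x]
    simp only [e] at h
    linarith

lemma integral_S_sq (H : Hier a b c B G α ν) (n : ℕ) :
    ∫ x : Fin k → ℝ, (∑ i, |x i - lawMean (ν n)|) ^ 2 ∂iidPi k (ν n)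
      ≤ k ^ 2 * lawVar (ν n) := by
  have hae := H.ae n
  have h1 : ∫ x : Fin k → ℝ, (∑ i, |x i - lawMean (ν n)|) ^ 2 ∂iidPi k (ν n)
      ≤ ∫ x : Fin k → ℝ, k * ∑ i, (x i - lawMean (ν n)) ^ 2 ∂iidPi k (ν n) :=
    integral_mono (iidPi_integrable hae (by fun_prop)) (iidPi_integrable hae (by fun_prop))
      fun x => sum_abs_sq_le _
  refine h1.trans (le_of_eq ?_)
  rw [integral_const_mul, integral_finsetSum _ fun i _ => iidPi_integrable hae (by fun_prop)]
  have : ∀ i : Fin k, ∫ x : Fin k → ℝ, (x i - lawMean (ν n)) ^ 2 ∂iidPi k (ν n) = lawVar (ν n) :=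
    fun i => iidPi_eval (ψ := fun y => (y - lawMean (ν n)) ^ 2) (by fun_prop) i
  simp only [this, Finset.sum_const, Finset.card_univ, Fintype.card_fin, nsmul_eq_mul]
  ring

lemma integral_S_four (H : Hier a b c B G α ν) (n : ℕ) :
    ∫ x : Fin k → ℝ, (∑ i, |x i - lawMean (ν n)|) ^ 4 ∂iidPi k (ν n)
      ≤ k ^ 4 * lawFourth (ν n) := by
  have hae := H.ae n
  have h1 : ∫ x : Fin k → ℝ, (∑ i, |x i - lawMean (ν n)|) ^ 4 ∂iidPi k (ν n)
      ≤ ∫ x : Fin k → ℝ, k ^ 3 * ∑ i, (x i - lawMean (ν n)) ^ 4 ∂iidPi k (ν n) :=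
    integral_mono (iidPi_integrable hae (by fun_prop)) (iidPi_integrable hae (by fun_prop))
      fun x => sum_abs_pow_four_le _
  refine h1.trans (le_of_eq ?_)
  rw [integral_const_mul, integral_finsetSum _ fun i _ => iidPi_integrable hae (by fun_prop)]
  have : ∀ i : Fin k, ∫ x : Fin k → ℝ, (x i - lawMean (ν n)) ^ 4 ∂iidPi k (ν n)
      = lawFourth (ν n) :=
    fun i => iidPi_eval (ψ := fun y => (y - lawMean (ν n)) ^ 4) (by fun_prop) i
  simp only [this, Finset.sum_const, Finset.card_univ, Fintype.card_fin, nsmul_eq_mul]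
  ring

/-- A crude second moment bound, sharp once the mean and the fourth moment are under control. -/
lemma rem_sq_quad (H : Hier a b c B G α ν) (hA : IsAvg a b G) (n : ℕ) :
    ∫ x, linRem G α (ν n) x ^ 2 ∂iidPi k (ν n)
      ≤ 2 * B ^ 2 * k ^ 2 * |lawMean (ν n) - c| ^ 2 * lawVar (ν n)
        + 2 * B ^ 2 * k ^ 4 * lawFourth (ν n) := by
  have hae := H.ae n
  have hR := H.continuous_linRem (ν n)
  set e := |lawMean (ν n) - c| with he
  have h1 : ∫ x, linRem G α (ν n) x ^ 2 ∂iidPi k (ν n)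
      ≤ ∫ x : Fin k → ℝ, (2 * B ^ 2 * e ^ 2 * (∑ i, |x i - lawMean (ν n)|) ^ 2
        + 2 * B ^ 2 * (∑ i, |x i - lawMean (ν n)|) ^ 4) ∂iidPi k (ν n) := by
    refine integral_mono_ae (iidPi_integrable hae (by fun_prop))
      (iidPi_integrable hae (by fun_prop)) ?_
    filter_upwards [iidPi_ae_box hae] with x hx
    have h := H.linRem_le_quad hA (lawMean_mem hae) hx
    rw [← sq_abs]
    set S := ∑ i, |x i - lawMean (ν n)| with hS
    calc |linRem G α (ν n) x| ^ 2 ≤ (B * (e + S) * S) ^ 2 := by gcongr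
      _ = B ^ 2 * S ^ 2 * (e + S) ^ 2 := by ring
      _ ≤ B ^ 2 * S ^ 2 * (2 * (e ^ 2 + S ^ 2)) := by
        gcongr; nlinarith [sq_nonneg (e - S)]
      _ = _ := by ring
  rw [integral_add (iidPi_integrable hae (by fun_prop)) (iidPi_integrable hae (by fun_prop)),
    integral_const_mul, integral_const_mul] at h1
  have h2 := mul_le_mul_of_nonneg_left (H.integral_S_sq n)
    (by positivity : 0 ≤ 2 * B ^ 2 * e ^ 2)
  have h3 := mul_le_mul_of_nonneg_left (H.integral_S_four n) (by positivity : 0 ≤ 2 * B ^ 2)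
  linarith

/-- Even moments of the linearization error, split at distance `ε` from the limit. -/
lemma rem_pow (H : Hier a b c B G α ν) (hA : IsAvg a b G) {ε : ℝ} (hε : 0 < ε) {n : ℕ}
    (hm : |lawMean (ν n) - c| ≤ ε) (p : ℕ) :
    ∫ x, linRem G α (ν n) x ^ (2 * p) ∂iidPi k (ν n)
      ≤ (B * ε) ^ (2 * p) * (∫ x : Fin k → ℝ, (∑ i, |x i - lawMean (ν n)|) ^ (2 * p)
          ∂iidPi k (ν n))
        + (B * ((b - a) + k * (b - a)) * (k * (b - a))) ^ (2 * p)
          * (k * (ν n).real {x : ℝ | ε < |x - c|}) := by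
  have hae := H.ae n
  have hB := H.B_nonneg
  have hba : 0 < b - a := sub_pos.2 H.lt
  have hR := H.continuous_linRem (ν n)
  have hmI := lawMean_mem hae
  set E : Set ℝ := {x : ℝ | ε < |x - c|} with hE
  have hEm : MeasurableSet E := measurableSet_lt measurable_const (by fun_prop)
  set K := B * ((b - a) + k * (b - a)) * (k * (b - a)) with hK
  have hInd : Integrable (fun x : Fin k → ℝ => ∑ i, E.indicator (1 : ℝ → ℝ) (x i))
      (iidPi k (ν n)) := integrable_finsetSum _ fun i _ => integrable_indicator_eval hEm i
  have h1 : ∫ x, linRem G α (ν n) x ^ (2 * p) ∂iidPi k (ν n)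
      ≤ ∫ x : Fin k → ℝ, ((B * ε) ^ (2 * p) * (∑ i, |x i - lawMean (ν n)|) ^ (2 * p)
        + K ^ (2 * p) * ∑ i, E.indicator (1 : ℝ → ℝ) (x i)) ∂iidPi k (ν n) := by
    refine integral_mono_ae (iidPi_integrable hae (by fun_prop))
      ((iidPi_integrable hae (by fun_prop)).add (hInd.const_mul _)) ?_
    filter_upwards [iidPi_ae_box hae] with x hx
    have hev : |linRem G α (ν n) x| ^ (2 * p) = linRem G α (ν n) x ^ (2 * p) :=
      (even_two_mul p).pow_abs _
    rw [← hev]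
    have n1 : ∀ i, 0 ≤ E.indicator (1 : ℝ → ℝ) (x i) := fun i =>
      Set.indicator_nonneg (fun _ _ => zero_le_one) _
    by_cases h : ∀ i, |x i - c| ≤ ε
    · have h2 := H.linRem_le hA hmI hx hε.le h hm
      have h3 := pow_le_pow_left₀ (abs_nonneg _) h2 (2 * p)
      rw [mul_pow] at h3
      have h4 : 0 ≤ K ^ (2 * p) * ∑ i, E.indicator (1 : ℝ → ℝ) (x i) :=
        mul_nonneg (by positivity) (Finset.sum_nonneg fun i _ => n1 i)
      linarith
    · push Not at h
      obtain ⟨i, hi⟩ := h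
      have h2 := H.linRem_le_quad hA hmI hx
      have hS : ∑ i, |x i - lawMean (ν n)| ≤ k * (b - a) := by
        have := Finset.sum_le_sum fun i (_ : i ∈ (Finset.univ : Finset (Fin k))) =>
          abs_sub_le_of_mem_Icc (hx i) hmI
        simpa only [Finset.sum_const, Finset.card_univ, Fintype.card_fin, nsmul_eq_mul] using this
      have hS0 : 0 ≤ ∑ i, |x i - lawMean (ν n)| := Finset.sum_nonneg fun _ _ => abs_nonneg _
      have hm2 := abs_sub_le_of_mem_Icc hmI H.c_mem
      have h3 : |linRem G α (ν n) x| ≤ K := h2.trans (by rw [hK]; gcongr)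
      have h4 := pow_le_pow_left₀ (abs_nonneg _) h3 (2 * p)
      have h5 : (1 : ℝ) ≤ ∑ i, E.indicator (1 : ℝ → ℝ) (x i) := by
        have := Finset.single_le_sum (f := fun i => E.indicator (1 : ℝ → ℝ) (x i))
          (fun i _ => n1 i) (Finset.mem_univ i)
        rwa [Set.indicator_of_mem (by exact hi)] at this
      have h6 : K ^ (2 * p) * 1 ≤ K ^ (2 * p) * ∑ i, E.indicator (1 : ℝ → ℝ) (x i) := by
        gcongr
      have h7 : 0 ≤ (B * ε) ^ (2 * p) * (∑ i, |x i - lawMean (ν n)|) ^ (2 * p) := by positivity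
      linarith
  rw [integral_add (iidPi_integrable hae (by fun_prop)) (hInd.const_mul _), integral_const_mul,
    integral_const_mul, integral_finsetSum _ fun i _ => integrable_indicator_eval hEm i] at h1
  simpa only [integral_indicator_eval hEm, Finset.sum_const, Finset.card_univ, Fintype.card_fin,
    nsmul_eq_mul] using h1

/-- The linearization error is negligible in `L²` compared with the standard deviation. -/
lemma rem_sq_small (H : Hier a b c B G α ν) (hA : IsAvg a b G) {i : Fin k} (hi : 0 < α i)
    {η : ℝ} (hη : 0 < η) :
    ∀ᶠ n in atTop, ∫ x, linRem G α (ν n) x ^ 2 ∂iidPi k (ν n) ≤ η * lawVar (ν n) := by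
  have hB := H.B_nonneg
  obtain ⟨ε, hε, hεη⟩ : ∃ ε : ℝ, 0 < ε ∧ (B * ε) ^ 2 * k ^ 2 ≤ η / 2 := by
    have : Continuous fun ε : ℝ => (B * ε) ^ 2 * k ^ 2 := by fun_prop
    have h := (this.tendsto 0).eventually_lt_const (u := η / 2) (by simpa using half_pos hη)
    have h' : ∀ᶠ ε : ℝ in nhdsWithin 0 (Set.Ioi 0), (B * ε) ^ 2 * k ^ 2 < η / 2 ∧ 0 < ε :=
      (h.filter_mono nhdsWithin_le_nhds).and self_mem_nhdsWithin
    obtain ⟨ε, h1, h2⟩ := h'.exists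
    exact ⟨ε, h2, h1.le⟩
  obtain ⟨C, hC, htail⟩ := H.tail hA hi hε
  set K := (B * ((b - a) + k * (b - a)) * (k * (b - a))) ^ (2 * 1) with hK
  have hV : Tendsto (fun n => K * (k * C) * lawVar (ν n)) atTop (nhds 0) := by
    simpa using H.tendsto_var.const_mul (K * (k * C))
  filter_upwards [htail, H.tendsto_mean.eventually_lt_const hε,
    hV.eventually_lt_const (half_pos hη)] with n h1 h2 h3
  have h4 := H.rem_pow hA hε h2.le 1
  rw [mul_one] at h4
  have h5 := H.integral_S_sq n
  have hV0 : 0 ≤ lawVar (ν n) := lawVar_nonneg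
  have hK0 : 0 ≤ K := by rw [hK, pow_mul]; positivity
  calc _ ≤ (B * ε) ^ 2 * (k ^ 2 * lawVar (ν n)) + K * (k * (C * lawVar (ν n) ^ 2)) := by
        refine h4.trans ?_
        gcongr
    _ = ((B * ε) ^ 2 * k ^ 2) * lawVar (ν n) + (K * (k * C) * lawVar (ν n)) * lawVar (ν n) := by
        ring
    _ ≤ η / 2 * lawVar (ν n) + η / 2 * lawVar (ν n) := by gcongr
    _ = _ := by ring

lemma rem_four_small (H : Hier a b c B G α ν) (hA : IsAvg a b G) {i : Fin k} (hi : 0 < α i)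
    {η : ℝ} (hη : 0 < η) : ∃ C : ℝ, 0 ≤ C ∧
    ∀ᶠ n in atTop, ∫ x, linRem G α (ν n) x ^ 4 ∂iidPi k (ν n)
      ≤ η * lawFourth (ν n) + C * lawVar (ν n) ^ 2 := by
  have hB := H.B_nonneg
  obtain ⟨ε, hε, hεη⟩ : ∃ ε : ℝ, 0 < ε ∧ (B * ε) ^ 4 * k ^ 4 ≤ η := by
    have : Continuous fun ε : ℝ => (B * ε) ^ 4 * k ^ 4 := by fun_prop
    have h := (this.tendsto 0).eventually_lt_const (u := η) (by simpa using hη)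
    have h' : ∀ᶠ ε : ℝ in nhdsWithin 0 (Set.Ioi 0), (B * ε) ^ 4 * k ^ 4 < η ∧ 0 < ε :=
      (h.filter_mono nhdsWithin_le_nhds).and self_mem_nhdsWithin
    obtain ⟨ε, h1, h2⟩ := h'.exists
    exact ⟨ε, h2, h1.le⟩
  obtain ⟨C, hC, htail⟩ := H.tail hA hi hε
  set K := (B * ((b - a) + k * (b - a)) * (k * (b - a))) ^ (2 * 2) with hK
  have hK0 : 0 ≤ K := by rw [hK, pow_mul]; positivity
  refine ⟨K * (k * C), by positivity, ?_⟩
  filter_upwards [htail, H.tendsto_mean.eventually_lt_const hε] with n h1 h2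
  have h4 := H.rem_pow hA hε h2.le 2
  rw [← hK, show 2 * 2 = 4 from rfl] at h4
  have h5 := H.integral_S_four n
  have hM0 : 0 ≤ lawFourth (ν n) := lawFourth_nonneg
  calc _ ≤ (B * ε) ^ 4 * (k ^ 4 * lawFourth (ν n)) + K * (k * (C * lawVar (ν n) ^ 2)) := by
        refine h4.trans ?_
        gcongr
    _ = ((B * ε) ^ 4 * k ^ 4) * lawFourth (ν n) + (K * (k * C)) * lawVar (ν n) ^ 2 := by
        ring
    _ ≤ _ := by gcongr

end Hier

/-! ### Growth of variance, fourth moment and mean -/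

lemma add_pow_four_le {s : ℝ} (hs : 0 < s) (x y : ℝ) :
    (x + y) ^ 4 ≤ (1 + s) ^ 3 * x ^ 4 + (1 + s⁻¹) ^ 3 * y ^ 4 := by
  have key : ∀ u v : ℝ, (u + v) ^ 2 ≤ (1 + s) * u ^ 2 + (1 + s⁻¹) * v ^ 2 := fun u v => by
    have e : (1 + s) * u ^ 2 + (1 + s⁻¹) * v ^ 2 - (u + v) ^ 2 = s⁻¹ * (s * u - v) ^ 2 := by
      field_simp; ring
    have : 0 ≤ s⁻¹ * (s * u - v) ^ 2 := by positivity
    linarith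
  calc (x + y) ^ 4 = ((x + y) ^ 2) ^ 2 := by ring
    _ ≤ ((1 + s) * x ^ 2 + (1 + s⁻¹) * y ^ 2) ^ 2 := by gcongr; exact key x y
    _ ≤ (1 + s) * ((1 + s) * x ^ 2) ^ 2 + (1 + s⁻¹) * ((1 + s⁻¹) * y ^ 2) ^ 2 := key _ _
    _ = _ := by ring

namespace Hier

variable {a b c B : ℝ} {k : ℕ} {G : (Fin k → ℝ) → ℝ} {α : Fin k → ℝ} {ν : ℕ → Measure ℝ}
  [∀ n, IsProbabilityMeasure (ν n)]

lemma sigma_ratio (H : Hier a b c B G α ν) (hA : IsAvg a b G) {i : Fin k} (hi : 0 < α i)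
    {l₁ l₂ : ℝ} (h1 : l₁ < √(∑ i, α i ^ 2)) (h2 : √(∑ i, α i ^ 2) < l₂) :
    ∀ᶠ n in atTop, l₁ * √(lawVar (ν n)) ≤ √(lawVar (ν (n + 1))) ∧
      √(lawVar (ν (n + 1))) ≤ l₂ * √(lawVar (ν n)) := by
  set l := √(∑ i, α i ^ 2) with hl
  set g := min (l - l₁) (l₂ - l) with hg
  have hg0 : 0 < g := lt_min (by linarith) (by linarith)
  have g1 : g ≤ l - l₁ := min_le_left _ _
  have g2 : g ≤ l₂ - l := min_le_right _ _
  filter_upwards [H.rem_sq_small hA hi (η := g ^ 2) (by positivity)] with n hn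
  have h3 := (H.sigma_close n).trans (Real.sqrt_le_sqrt hn)
  rw [Real.sqrt_mul (sq_nonneg _), Real.sqrt_sq hg0.le, ← hl, abs_le] at h3
  have hs := Real.sqrt_nonneg (lawVar (ν n))
  have p1 := mul_le_mul_of_nonneg_right g1 hs
  have p2 := mul_le_mul_of_nonneg_right g2 hs
  constructor <;> nlinarith [h3.1, h3.2]

/-- One-step recursion for the fourth central moment. As `∑ αᵢ⁴` is below the fourth power of the `ℓ²`
norm of `α`, the moment contracts faster than the squared variance, which bounds their ratio. -/
lemma fourth_step (H : Hier a b c B G α ν) (hA : IsAvg a b G) {i : Fin k} (hi : 0 < α i)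
    {θ : ℝ} (hθ : ∑ i, α i ^ 4 < θ) : ∃ C : ℝ, 0 ≤ C ∧ ∀ᶠ n in atTop,
      lawFourth (ν (n + 1)) ≤ θ * lawFourth (ν n) + C * lawVar (ν n) ^ 2 := by
  set A := ∑ i, α i ^ 4 with hAdef
  have hG := H.cont
  obtain ⟨s, hs, hsA⟩ : ∃ s : ℝ, 0 < s ∧ (1 + s) ^ 3 * A ≤ (A + θ) / 2 := by
    have : Continuous fun s : ℝ => (1 + s) ^ 3 * A := by fun_prop
    have h := (this.tendsto 0).eventually_lt_const (u := (A + θ) / 2) (by simp; linarith)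
    have h' : ∀ᶠ s : ℝ in nhdsWithin 0 (Set.Ioi 0), (1 + s) ^ 3 * A < (A + θ) / 2 ∧ 0 < s :=
      (h.filter_mono nhdsWithin_le_nhds).and self_mem_nhdsWithin
    obtain ⟨s, h1, h2⟩ := h'.exists
    exact ⟨s, h2, h1.le⟩
  set K := (1 + s⁻¹) ^ 3 with hK
  have hK0 : 0 < K := by positivity
  obtain ⟨C, hC, hrem⟩ := H.rem_four_small hA hi (η := (θ - A) / 2 / (16 * K))
    (div_pos (by linarith) (by positivity))
  refine ⟨(1 + s) ^ 3 * (3 * (∑ i, α i ^ 2) ^ 2) + K * 16 * C, by positivity, ?_⟩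
  filter_upwards [hrem] with n hn
  have hae := H.ae n
  have hR := H.continuous_linRem (ν n)
  set r := ∫ y, linRem G α (ν n) y ∂iidPi k (ν n) with hr
  have h1 : lawFourth (ν (n + 1)) = ∫ x, (G x - lawMean (ν (n + 1))) ^ 4 ∂iidPi k (ν n) :=
    H.integral_succ n (ψ := fun y => (y - lawMean (ν (n + 1))) ^ 4) (by fun_prop)
  have h2 : ∫ x, (G x - lawMean (ν (n + 1))) ^ 4 ∂iidPi k (ν n)
      ≤ ∫ x, ((1 + s) ^ 3 * (∑ i, α i * (x i - lawMean (ν n))) ^ 4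
        + K * (linRem G α (ν n) x - r) ^ 4) ∂iidPi k (ν n) := by
    refine integral_mono (iidPi_integrable hae (by fun_prop))
      (iidPi_integrable hae (by fun_prop)) fun x => ?_
    simp only
    rw [H.decomp n x]
    exact add_pow_four_le hs _ _
  rw [integral_add (iidPi_integrable hae (by fun_prop)) (iidPi_integrable hae (by fun_prop)),
    integral_const_mul, integral_const_mul] at h2
  have h3 := (H.linear_moments n α).2.2
  have h4 := (integral_centre_pow_four_le (P := iidPi k (ν n)) (f := linRem G α (ν n))
    (iidPi_integrable hae hR) (iidPi_integrable hae (by fun_prop))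
    (iidPi_integrable hae (by fun_prop)) (iidPi_integrable hae (by fun_prop))).trans
      (mul_le_mul_of_nonneg_left hn (by norm_num))
  have hM : 0 ≤ lawFourth (ν n) := lawFourth_nonneg
  rw [h1]
  refine h2.trans ?_
  calc _ ≤ (1 + s) ^ 3 * (A * lawFourth (ν n) + 3 * (∑ i, α i ^ 2) ^ 2 * lawVar (ν n) ^ 2)
        + K * (16 * ((θ - A) / 2 / (16 * K) * lawFourth (ν n) + C * lawVar (ν n) ^ 2)) := by
        gcongr
    _ = ((1 + s) ^ 3 * A) * lawFourth (ν n) + (θ - A) / 2 * lawFourth (ν n)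
        + ((1 + s) ^ 3 * (3 * (∑ i, α i ^ 2) ^ 2) + K * 16 * C) * lawVar (ν n) ^ 2 := by
        field_simp; ring
    _ ≤ (A + θ) / 2 * lawFourth (ν n) + (θ - A) / 2 * lawFourth (ν n)
        + ((1 + s) ^ 3 * (3 * (∑ i, α i ^ 2) ^ 2) + K * 16 * C) * lawVar (ν n) ^ 2 := by
        gcongr
    _ = _ := by ring

/-- The standardized fourth moments are bounded: since `∑ αᵢ⁴ < (∑ αᵢ²)²`, the fourth moment
decays faster than the squared variance, up to a multiple of the latter. -/
lemma fourth_bound (H : Hier a b c B G α ν) (hA : IsAvg a b G) {i j : Fin k} (hij : i ≠ j)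
    (hi : 0 < α i) (hj : 0 < α j) (hV : ∀ n, 0 < lawVar (ν n)) :
    ∃ D : ℝ, 0 ≤ D ∧ ∀ᶠ n in atTop, lawFourth (ν n) ≤ D * lawVar (ν n) ^ 2 := by
  set l := √(∑ i, α i ^ 2) with hl
  set A := ∑ i, α i ^ 4 with hAdef
  have hA4 : A < l ^ 4 := by
    have h := sum_pow_lt hij hi.ne' hj.ne' 2 two_ne_zero
    have e : ∀ l, |α l| ^ (2 + 2) = α l ^ 4 := fun l => Even.pow_abs (by decide) _
    simpa only [e] using h
  have hl0 : 0 < l := sqrt_sum_sq_pos hi.ne'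
  obtain ⟨l₁, h1, h2, h3⟩ : ∃ l₁ : ℝ, A < l₁ ^ 4 ∧ 0 < l₁ ∧ l₁ < l := by
    have : Continuous fun s : ℝ => s ^ 4 := by fun_prop
    have h := (this.tendsto l).eventually_const_lt hA4
    have h' : ∀ᶠ s : ℝ in nhdsWithin l (Set.Iio l), (A < s ^ 4 ∧ 0 < s) ∧ s < l :=
      ((h.and (lt_mem_nhds hl0)).filter_mono nhdsWithin_le_nhds).and self_mem_nhdsWithin
    obtain ⟨s, h1, h2⟩ := h'.exists
    exact ⟨s, h1.1, h1.2, h2⟩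
  obtain ⟨C, hC, hstep⟩ := H.fourth_step hA hi (θ := (A + l₁ ^ 4) / 2) (by linarith)
  obtain ⟨N, hN⟩ := (hstep.and (H.sigma_ratio hA hi h3 (lt_add_one _))).exists_forall_of_atTop
  set θ := (A + l₁ ^ 4) / 2 with hθ
  have hA0 : 0 ≤ A := Finset.sum_nonneg fun i _ => by positivity
  have hgap : 0 < l₁ ^ 4 - θ := by linarith
  set D := max (lawFourth (ν N) / lawVar (ν N) ^ 2) (C / (l₁ ^ 4 - θ)) with hD
  have hD0 : 0 ≤ D := le_max_of_le_right (by positivity)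
  have hCD : C ≤ D * (l₁ ^ 4 - θ) := (div_le_iff₀ hgap).1 (le_max_right _ _)
  refine ⟨D, hD0, eventually_atTop.2 ⟨N, fun n hn => ?_⟩⟩
  induction n, hn using Nat.le_induction with
  | base => exact (div_le_iff₀ (pow_pos (hV N) 2)).1 (le_max_left _ _)
  | succ n hn ih =>
    obtain ⟨p, q, -⟩ := hN n hn
    have hs := Real.sqrt_nonneg (lawVar (ν n))
    have e4 : ∀ m, √(lawVar (ν m)) ^ 4 = lawVar (ν m) ^ 2 := fun m => by
      rw [show 4 = 2 * 2 from rfl, pow_mul, Real.sq_sqrt lawVar_nonneg]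
    have q4 : l₁ ^ 4 * lawVar (ν n) ^ 2 ≤ lawVar (ν (n + 1)) ^ 2 := by
      have := pow_le_pow_left₀ (by positivity) q 4
      rwa [mul_pow, e4, e4] at this
    have hθ0 : 0 ≤ θ := by positivity
    calc _ ≤ θ * lawFourth (ν n) + C * lawVar (ν n) ^ 2 := p
      _ ≤ θ * (D * lawVar (ν n) ^ 2) + D * (l₁ ^ 4 - θ) * lawVar (ν n) ^ 2 := by gcongr
      _ = D * (l₁ ^ 4 * lawVar (ν n) ^ 2) := by ring
      _ ≤ _ := by gcongr

/-- The mean converges to `c` at least as fast as the standard deviation converges to `0`. -/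
lemma mean_bound (H : Hier a b c B G α ν) (hA : IsAvg a b G) {i : Fin k} (hi : 0 < α i)
    (hl : √(∑ i, α i ^ 2) < 1) :
    ∃ D : ℝ, 0 ≤ D ∧ ∀ᶠ n in atTop, |lawMean (ν n) - c| ≤ D * √(lawVar (ν n)) := by
  obtain ⟨l₂, h1, h2⟩ := exists_between hl
  have hD : 0 < 1 - l₂ := by linarith
  obtain ⟨N, hN⟩ := ((H.rem_sq_small hA hi one_pos).and
    (H.sigma_ratio hA hi (sub_one_lt _) h1)).exists_forall_of_atTop
  refine ⟨(1 - l₂)⁻¹, by positivity, eventually_atTop.2 ⟨N, fun n hn => ?_⟩⟩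
  have step : ∀ m, N ≤ m → |lawMean (ν (m + 1)) - lawMean (ν m)|
      ≤ (1 - l₂)⁻¹ * (√(lawVar (ν m)) - √(lawVar (ν (m + 1)))) := by
    intro m hm
    obtain ⟨p, -, q⟩ := hN m hm
    have hae := H.ae m
    have hR := H.continuous_linRem (ν m)
    rw [one_mul] at p
    have r1 : |lawMean (ν (m + 1)) - lawMean (ν m)| ≤ √(lawVar (ν m)) := by
      rw [H.mean_succ, add_sub_cancel_left]
      refine Real.abs_le_sqrt (le_trans ?_ p)
      have := integral_mul_sq_le (P := iidPi k (ν m)) (f := linRem G α (ν m)) (g := fun _ => 1)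
        (iidPi_integrable hae (by fun_prop)) (integrable_const _)
        (by simpa using iidPi_integrable hae hR)
      simpa using this
    rw [inv_mul_eq_div, le_div_iff₀ hD]
    nlinarith [mul_le_mul_of_nonneg_right r1 hD.le]
  have tele : ∀ j, |lawMean (ν (n + j)) - lawMean (ν n)|
      ≤ (1 - l₂)⁻¹ * (√(lawVar (ν n)) - √(lawVar (ν (n + j)))) := by
    intro j
    induction j with
    | zero => simp
    | succ j ih =>
      have h := step (n + j) (by omega)
      have t := abs_sub_le (lawMean (ν (n + j + 1))) (lawMean (ν (n + j))) (lawMean (ν n))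
      rw [← add_assoc]
      linarith
  have hlim : Tendsto (fun j => |lawMean (ν (n + j)) - c| + (1 - l₂)⁻¹ * √(lawVar (ν n))) atTop
      (nhds (0 + (1 - l₂)⁻¹ * √(lawVar (ν n)))) := by
    refine Tendsto.add_const _ ?_
    have := (tendsto_add_atTop_iff_nat n).2 H.tendsto_mean
    simpa only [add_comm] using this
  rw [zero_add] at hlim
  refine ge_of_tendsto' hlim fun j => ?_
  have h := tele j
  have t := abs_sub_le (lawMean (ν n)) (lawMean (ν (n + j))) c
  rw [abs_sub_comm (lawMean (ν n)) (lawMean (ν (n + j)))] at t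
  have : 0 ≤ (1 - l₂)⁻¹ * √(lawVar (ν (n + j))) := by positivity
  linarith

/-- The Taylor remainder is quadratic in the deviations from `c`, so bounded standardized fourth moments
and `|E Xₙ - c| = O(σₙ)` bound its `L²` norm by a multiple of the variance. -/
lemma rem_sq_fine (H : Hier a b c B G α ν) (hA : IsAvg a b G) {i j : Fin k} (hij : i ≠ j)
    (hi : 0 < α i) (hj : 0 < α j) (hV : ∀ n, 0 < lawVar (ν n)) (hl : √(∑ i, α i ^ 2) < 1) :
    ∃ C : ℝ, 0 ≤ C ∧ ∀ᶠ n in atTop,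
      ∫ x, linRem G α (ν n) x ^ 2 ∂iidPi k (ν n) ≤ C * lawVar (ν n) ^ 2 := by
  obtain ⟨D, hD, h1⟩ := H.fourth_bound hA hij hi hj hV
  obtain ⟨E, hE, h2⟩ := H.mean_bound hA hi hl
  have hB := H.B_nonneg
  refine ⟨2 * B ^ 2 * k ^ 2 * E ^ 2 + 2 * B ^ 2 * k ^ 4 * D, by positivity, ?_⟩
  filter_upwards [h1, h2] with n p q
  have hV0 := hV n
  have q2 : |lawMean (ν n) - c| ^ 2 ≤ E ^ 2 * lawVar (ν n) := by
    have := pow_le_pow_left₀ (abs_nonneg _) q 2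
    rwa [mul_pow, Real.sq_sqrt lawVar_nonneg] at this
  refine (H.rem_sq_quad hA n).trans ?_
  calc _ ≤ 2 * B ^ 2 * k ^ 2 * (E ^ 2 * lawVar (ν n)) * lawVar (ν n)
        + 2 * B ^ 2 * k ^ 4 * (D * lawVar (ν n) ^ 2) := by gcongr
    _ = _ := by ring

end Hier

/-! ### Recursion for the Stein discrepancy -/

/-- The affine map that standardizes the law `μ`. -/
noncomputable def stdize (μ : Measure ℝ) (y : ℝ) : ℝ := (y - lawMean μ) / √(lawVar μ)

lemma continuous_stdize (μ : Measure ℝ) : Continuous (stdize μ) := by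
  unfold stdize
  fun_prop

lemma stdize_moments {μ : Measure ℝ} [IsProbabilityMeasure μ] {a b : ℝ}
    (hμ : ∀ᵐ x ∂μ, x ∈ Set.Icc a b) (hV : 0 < lawVar μ) :
    (∫ y, stdize μ y ∂μ = 0) ∧ (∫ y, stdize μ y ^ 2 ∂μ = 1) ∧
      (∫ y, stdize μ y ^ 4 ∂μ = lawFourth μ / lawVar μ ^ 2) := by
  have e2 : √(lawVar μ) ^ 2 = lawVar μ := Real.sq_sqrt hV.le
  have e4 : √(lawVar μ) ^ 4 = lawVar μ ^ 2 := by
    rw [show 4 = 2 * 2 from rfl, pow_mul, e2]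
  unfold stdize
  simp only [div_pow, integral_div, integral_sub_lawMean hμ, zero_div, e2, e4, true_and]
  exact ⟨div_self hV.ne', rfl⟩

/-- A sequence of predicates satisfying an approximate contraction, with geometrically small error,
holds with geometrically small parameter. -/
lemma geometric_of_step {S : ℕ → ℝ → Prop} {φ γ : ℝ} (hφ : 0 ≤ φ) (hφγ : φ < γ)
    (hmono : ∀ n δ δ', δ ≤ δ' → S n δ → S n δ') (hex : ∀ n, ∃ δ, 0 ≤ δ ∧ S n δ)
    {N : ℕ} {s : ℕ → ℝ} (hs : ∀ n, N ≤ n → s (n + 1) ≤ γ * s n)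
    (hstep : ∀ n, N ≤ n → ∀ δ, S n δ → S (n + 1) (φ * δ + s n)) :
    ∃ K : ℝ, ∀ n, N ≤ n → S n (K * γ ^ n) := by
  have hγ : 0 < γ := hφ.trans_lt hφγ
  obtain ⟨δ, hδ, hSδ⟩ := hex N
  set K := max (δ / γ ^ N) (s N / γ ^ N / (γ - φ)) with hK
  have hg : 0 < γ - φ := by linarith
  have hsK : s N / γ ^ N ≤ K * (γ - φ) := (div_le_iff₀ hg).1 (le_max_right _ _)
  have hsn : ∀ n, N ≤ n → s n ≤ K * (γ - φ) * γ ^ n := by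
    intro n hn
    induction n, hn using Nat.le_induction with
    | base => exact (div_le_iff₀ (by positivity)).1 hsK
    | succ n hn ih =>
      calc s (n + 1) ≤ γ * s n := hs n hn
        _ ≤ γ * (K * (γ - φ) * γ ^ n) := by gcongr
        _ = _ := by ring
  refine ⟨K, fun n hn => ?_⟩
  induction n, hn using Nat.le_induction with
  | base => exact hmono _ _ _ ((div_le_iff₀ (by positivity)).1 (le_max_left _ _)) hSδ
  | succ n hn ih =>
    refine hmono _ _ _ ?_ (hstep n hn _ ih)
    have := hsn n hn
    rw [pow_succ]
    nlinarith

namespace Hier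

variable {a b c B : ℝ} {k : ℕ} {G : (Fin k → ℝ) → ℝ} {α : Fin k → ℝ} {ν : ℕ → Measure ℝ}
  [∀ n, IsProbabilityMeasure (ν n)]

/-- The standardized linear part of `X_{n+1}`. -/
noncomputable def linStd (α : Fin k → ℝ) (μ : Measure ℝ) (x : Fin k → ℝ) : ℝ :=
  ∑ i, α i / √(∑ i, α i ^ 2) * stdize μ (x i)

lemma continuous_linStd (α : Fin k → ℝ) (μ : Measure ℝ) : Continuous (linStd α μ) := by
  have := continuous_stdize μ
  unfold linStd
  fun_prop

lemma linStd_moments (H : Hier a b c B G α ν) {i : Fin k} (hi : α i ≠ 0) (n : ℕ)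
    (hV : 0 < lawVar (ν n)) :
    (∫ x, linStd α (ν n) x ∂iidPi k (ν n) = 0) ∧
    (∫ x, linStd α (ν n) x ^ 2 ∂iidPi k (ν n) = 1) ∧
    (∫ x, linStd α (ν n) x ^ 4 ∂iidPi k (ν n)
      ≤ (∑ l, (α l / √(∑ i, α i ^ 2)) ^ 4) * (lawFourth (ν n) / lawVar (ν n) ^ 2) + 3) := by
  obtain ⟨z1, z2, z4⟩ := stdize_moments (H.ae n) hV
  have h := iidPi_sum_moments (H.ae n) (continuous_stdize (ν n)) z1
    (fun l => α l / √(∑ i, α i ^ 2)) Finset.univ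
  rw [z2, z4, (normalized_weights hi).1] at h
  simp only [one_pow, mul_one] at h
  exact h

/-- One step of the recursion for the Stein discrepancy: contraction by `φ`, plus an error
measuring the distance between `X_{n+1}` and its linear part. -/
lemma stein_step (H : Hier a b c B G α ν) {i : Fin k} (hi : α i ≠ 0) (n : ℕ)
    (hV : 0 < lawVar (ν n)) (hV' : 0 < lawVar (ν (n + 1))) {δ : ℝ}
    (h : SteinBound (ν n) (stdize (ν n)) δ) :
    SteinBound (ν (n + 1)) (stdize (ν (n + 1)))
      ((∑ i, |α i| ^ 3) / √(∑ i, α i ^ 2) ^ 3 * δ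
        + ∫ x, |stdize (ν (n + 1)) (G x) - linStd α (ν n) x|
          * (1 + 2 * (linStd α (ν n) x ^ 2 + stdize (ν (n + 1)) (G x) ^ 2)) ∂iidPi k (ν n)) := by
  have hG := H.cont
  have hZ := continuous_stdize (ν (n + 1))
  obtain ⟨z1, z2, -⟩ := stdize_moments (H.ae (n + 1)) hV'
  obtain ⟨t1, t2, -⟩ := H.linStd_moments hi n hV
  have hc := SteinBound.contract (H.ae n) (continuous_stdize (ν n)) h
    (fun l => α l / √(∑ i, α i ^ 2)) (normalized_weights hi).1
  rw [(normalized_weights hi).2] at hc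
  rw [H.integral_succ n (hZ.measurable)] at z1
  rw [H.integral_succ n (ψ := fun y => stdize (ν (n + 1)) y ^ 2) (by fun_prop)] at z2
  have hp := SteinBound.perturb (P := iidPi k (ν n)) (T := linStd α (ν n))
    (W := fun x => stdize (ν (n + 1)) (G x))
    (fun g hg => iidPi_integrable (H.ae n) hg) (continuous_linStd α (ν n)) (by fun_prop)
    t1 t2 z1 z2 hc
  intro f g hf hg
  have hfc : Continuous f := continuous_iff_continuousAt.2 fun x => (hf x).continuousAt
  have hgc : Continuous g := hg.continuous
  rw [H.integral_succ n (ψ := fun y => g (stdize (ν (n + 1)) y)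
    - stdize (ν (n + 1)) y * f (stdize (ν (n + 1)) y)) (by fun_prop)]
  exact hp f g hf hg

/-- `L²` distance between the standardized `X_{n+1}` and its standardized linear part. -/
lemma std_sub_sq (H : Hier a b c B G α ν) {i : Fin k} (hi : α i ≠ 0) (n : ℕ)
    (hV : 0 < lawVar (ν n)) (hV' : 0 < lawVar (ν (n + 1))) :
    ∫ x, (stdize (ν (n + 1)) (G x) - linStd α (ν n) x) ^ 2 ∂iidPi k (ν n)
      ≤ 4 * (∫ x, linRem G α (ν n) x ^ 2 ∂iidPi k (ν n)) / lawVar (ν (n + 1)) := by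
  have hae := H.ae n
  have hG := H.cont
  have hZ := continuous_stdize (ν (n + 1))
  have hT := continuous_linStd α (ν n)
  have hR := H.continuous_linRem (ν n)
  have hl : 0 < √(∑ i, α i ^ 2) := sqrt_sum_sq_pos hi
  have hclose := H.sigma_close n
  have hcen := H.var_centre_le n
  set R := ∫ x, linRem G α (ν n) x ^ 2 ∂iidPi k (ν n) with hRdef
  have hR0 : 0 ≤ R := integral_nonneg fun _ => sq_nonneg _
  set r := ∫ y, linRem G α (ν n) y ∂iidPi k (ν n) with hr
  have hs : 0 < √(lawVar (ν n)) := Real.sqrt_pos.2 hV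
  have hs' : 0 < √(lawVar (ν (n + 1))) := Real.sqrt_pos.2 hV'
  have hs2 : √(lawVar (ν (n + 1))) ^ 2 = lawVar (ν (n + 1)) := Real.sq_sqrt hV'.le
  set l := √(∑ i, α i ^ 2) with hldef
  set σ := √(lawVar (ν n)) with hσ
  set σ' := √(lawVar (ν (n + 1))) with hσ'
  have hL : ∀ x : Fin k → ℝ, ∑ i, α i * (x i - lawMean (ν n)) = l * σ * linStd α (ν n) x := by
    intro x
    unfold linStd stdize
    rw [Finset.mul_sum]
    refine Finset.sum_congr rfl fun j _ => ?_
    rw [← hldef, ← hσ]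
    field_simp
  have key : ∀ x, (stdize (ν (n + 1)) (G x) - linStd α (ν n) x) ^ 2
      ≤ 2 / lawVar (ν (n + 1)) * (linRem G α (ν n) x - r) ^ 2
        + 2 / lawVar (ν (n + 1)) * (σ' - l * σ) ^ 2 * linStd α (ν n) x ^ 2 := by
    intro x
    have e : stdize (ν (n + 1)) (G x) - linStd α (ν n) x
        = ((linRem G α (ν n) x - r) - (σ' - l * σ) * linStd α (ν n) x) / σ' := by
      have : stdize (ν (n + 1)) (G x) = (l * σ * linStd α (ν n) x
          + (linRem G α (ν n) x - r)) / σ' := by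
        rw [← hL, ← H.decomp n x]; rfl
      rw [this]; field_simp; ring
    rw [e, div_pow, hs2, div_le_iff₀ hV']
    have : (2 / lawVar (ν (n + 1)) * (linRem G α (ν n) x - r) ^ 2
        + 2 / lawVar (ν (n + 1)) * (σ' - l * σ) ^ 2 * linStd α (ν n) x ^ 2)
          * lawVar (ν (n + 1))
        = 2 * (linRem G α (ν n) x - r) ^ 2 + 2 * ((σ' - l * σ) * linStd α (ν n) x) ^ 2 := by
      field_simp
    rw [this]
    nlinarith [sq_nonneg ((linRem G α (ν n) x - r) + (σ' - l * σ) * linStd α (ν n) x)]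
  have h1 := integral_mono (μ := iidPi k (ν n)) (iidPi_integrable hae (by fun_prop))
    (iidPi_integrable hae (by fun_prop)) key
  rw [integral_add (iidPi_integrable hae (by fun_prop)) (iidPi_integrable hae (by fun_prop)),
    integral_const_mul, integral_const_mul, (H.linStd_moments hi n hV).2.1] at h1
  have h2 : (σ' - l * σ) ^ 2 ≤ R := by
    have := pow_le_pow_left₀ (abs_nonneg _) hclose 2
    rwa [sq_abs, Real.sq_sqrt hR0] at this
  refine h1.trans ?_
  calc _ ≤ 2 / lawVar (ν (n + 1)) * R + 2 / lawVar (ν (n + 1)) * R * 1 := by gcongr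
    _ = _ := by ring

/-- The error term of `SteinBound.perturb`, comparing the standardized `X_{n+1}` with its standardized
linear part, is `O(σₙ)`. -/
lemma stein_error_le (H : Hier a b c B G α ν) (hA : IsAvg a b G) {i j : Fin k} (hij : i ≠ j)
    (hi : 0 < α i) (hj : 0 < α j) (hV : ∀ n, 0 < lawVar (ν n)) (hl : √(∑ i, α i ^ 2) < 1) :
    ∃ K : ℝ, 0 ≤ K ∧ ∀ᶠ n in atTop,
      ∫ x, |stdize (ν (n + 1)) (G x) - linStd α (ν n) x|
          * (1 + 2 * (linStd α (ν n) x ^ 2 + stdize (ν (n + 1)) (G x) ^ 2)) ∂iidPi k (ν n)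
        ≤ K * √(lawVar (ν n)) := by
  have hl0 : 0 < √(∑ i, α i ^ 2) := sqrt_sum_sq_pos hi.ne'
  obtain ⟨l₁, hl₁, hl₁'⟩ := exists_between hl0
  obtain ⟨D, hD, h1⟩ := H.fourth_bound hA hij hi hj hV
  obtain ⟨C, hC, h2⟩ := H.rem_sq_fine hA hij hi hj hV hl
  set β := ∑ l, (α l / √(∑ i, α i ^ 2)) ^ 4 with hβ
  have hβ0 : 0 ≤ β := Finset.sum_nonneg fun _ _ => by positivity
  refine ⟨√(4 * C / l₁ ^ 2 * (3 + 12 * (β * D + 3) + 12 * D)), Real.sqrt_nonneg _, ?_⟩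
  filter_upwards [h1, (tendsto_add_atTop_nat 1).eventually h1, h2,
    H.sigma_ratio hA hi hl₁' (lt_add_one _)] with n p1 p2 p3 p4
  have hae := H.ae n
  have hG := H.cont
  have hZ := continuous_stdize (ν (n + 1))
  have hT := continuous_linStd α (ν n)
  set W : (Fin k → ℝ) → ℝ := fun x => stdize (ν (n + 1)) (G x) with hW
  set T := linStd α (ν n) with hTdef
  have hWc : Continuous W := hZ.comp hG
  have hV0 := hV n
  have hV1 := hV (n + 1)
  have q1 : lawFourth (ν n) / lawVar (ν n) ^ 2 ≤ D := (div_le_iff₀ (by positivity)).2 p1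
  have q2 : ∫ x, W x ^ 4 ∂iidPi k (ν n) ≤ D := by
    have e := H.integral_succ n (ψ := fun y => stdize (ν (n + 1)) y ^ 4) (by fun_prop)
    rw [(stdize_moments (H.ae (n + 1)) hV1).2.2] at e
    rw [hW, ← e]
    exact (div_le_iff₀ (by positivity)).2 p2
  have q3 : ∫ x, T x ^ 4 ∂iidPi k (ν n) ≤ β * D + 3 :=
    (H.linStd_moments hi.ne' n hV0).2.2.trans (by gcongr)
  have q4 : l₁ ^ 2 * lawVar (ν n) ≤ lawVar (ν (n + 1)) := by
    have := pow_le_pow_left₀ (by positivity) p4.1 2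
    rwa [mul_pow, Real.sq_sqrt hV0.le, Real.sq_sqrt hV1.le] at this
  have q5 : ∫ x, |W x - T x| ^ 2 ∂iidPi k (ν n) ≤ 4 * C / l₁ ^ 2 * lawVar (ν n) := by
    simp only [sq_abs]
    refine (H.std_sub_sq hi.ne' n hV0 hV1).trans ?_
    rw [div_le_iff₀ hV1]
    calc _ ≤ 4 * (C * lawVar (ν n) ^ 2) := by gcongr
      _ = 4 * C / l₁ ^ 2 * lawVar (ν n) * (l₁ ^ 2 * lawVar (ν n)) := by field_simp
      _ ≤ _ := by gcongr
  have q6 : ∫ x, (1 + 2 * (T x ^ 2 + W x ^ 2)) ^ 2 ∂iidPi k (ν n)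
      ≤ 3 + 12 * (β * D + 3) + 12 * D := by
    have h : ∫ x, (1 + 2 * (T x ^ 2 + W x ^ 2)) ^ 2 ∂iidPi k (ν n)
        ≤ ∫ x, (3 + 12 * T x ^ 4 + 12 * W x ^ 4) ∂iidPi k (ν n) := by
      refine integral_mono (iidPi_integrable hae (by fun_prop))
        (iidPi_integrable hae (by fun_prop)) fun x => ?_
      nlinarith [sq_nonneg (1 - 2 * T x ^ 2), sq_nonneg (1 - 2 * W x ^ 2),
        sq_nonneg (T x ^ 2 - W x ^ 2)]
    rw [integral_add (iidPi_integrable hae (by fun_prop)) (iidPi_integrable hae (by fun_prop)),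
      integral_add (iidPi_integrable hae (by fun_prop)) (iidPi_integrable hae (by fun_prop)),
      integral_const_mul, integral_const_mul] at h
    simp only [integral_const, probReal_univ, smul_eq_mul, one_mul] at h
    linarith
  have q7 := integral_mul_sq_le (P := iidPi k (ν n)) (f := fun x => |W x - T x|)
    (g := fun x => 1 + 2 * (T x ^ 2 + W x ^ 2)) (iidPi_integrable hae (by fun_prop))
    (iidPi_integrable hae (by fun_prop)) (iidPi_integrable hae (by fun_prop))
  rw [← Real.sqrt_mul (by positivity)]
  refine Real.le_sqrt_of_sq_le (q7.trans ?_)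
  calc _ ≤ (4 * C / l₁ ^ 2 * lawVar (ν n)) * (3 + 12 * (β * D + 3) + 12 * D) := by
        refine mul_le_mul q5 q6 (integral_nonneg fun _ => sq_nonneg _) (by positivity)
    _ = _ := by ring

lemma exists_stein (H : Hier a b c B G α ν) (n : ℕ) (hV : 0 < lawVar (ν n)) :
    ∃ δ, 0 ≤ δ ∧ SteinBound (ν n) (stdize (ν n)) δ := by
  obtain ⟨z1, z2, -⟩ := stdize_moments (H.ae n) hV
  exact exists_steinBound (fun g hg => integrable_of_continuous (H.ae n) hg)
    (continuous_stdize _) z1 z2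

/-- Geometric decay of the Stein discrepancy for a genuinely averaging function. -/
lemma stein_geometric (H : Hier a b c B G α ν) (hA : IsAvg a b G) {i j : Fin k} (hij : i ≠ j)
    (hi : α i ≠ 0) (hj : α j ≠ 0) (hV : ∀ n, 0 < lawVar (ν n)) {γ : ℝ}
    (hγ : (∑ i, |α i| ^ 3) / √(∑ i, α i ^ 2) ^ 3 < γ) :
    ∃ (K : ℝ) (N : ℕ), ∀ n, N ≤ n → SteinBound (ν n) (stdize (ν n)) (K * γ ^ n) := by
  obtain ⟨w0, w1⟩ := H.weights hA
  have hi' : 0 < α i := (w0 i).lt_of_ne' hi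
  have hj' : 0 < α j := (w0 j).lt_of_ne' hj
  have hphi := phi_mem hij hi hj
  have hle := sqrt_le_phi w0 w1 hi
  obtain ⟨K, hK, hE⟩ := H.stein_error_le hA hij hi' hj' hV (hle.trans_lt hphi.2)
  obtain ⟨N, hN⟩ := (hE.and (H.sigma_ratio hA hi' (sub_one_lt _)
    (hle.trans_lt hγ))).exists_forall_of_atTop
  obtain ⟨K', hK'⟩ := geometric_of_step (S := fun n δ => SteinBound (ν n) (stdize (ν n)) δ)
    (N := N) (s := fun n => K * √(lawVar (ν n))) hphi.1.le hγ (fun n δ δ' h hs => hs.mono h)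
    (fun n => H.exists_stein n (hV n))
    (fun n hn => by
      have := mul_le_mul_of_nonneg_left (hN n hn).2.2 hK
      linarith)
    (fun n hn δ hδ => (H.stein_step hi n (hV n) (hV (n + 1)) hδ).mono (by
      have := (hN n hn).1
      linarith))
  exact ⟨K', N, hK'⟩

lemma linear_var (H : Hier a b c B G α ν)
    (hL : ∀ x : Fin k → ℝ, (∀ i, x i ∈ Set.Icc a b) → G x = ∑ i, α i * x i) (n : ℕ) :
    lawVar (ν (n + 1)) = (∑ i, α i ^ 2) * lawVar (ν n) ∧
    ∀ x : Fin k → ℝ, (∀ i, x i ∈ Set.Icc a b) →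
      G x - lawMean (ν (n + 1)) = ∑ i, α i * (x i - lawMean (ν n)) := by
  have hae := H.ae n
  have hd : ∀ x : Fin k → ℝ, (∀ i, x i ∈ Set.Icc a b) →
      linRem G α (ν n) x = (∑ i, α i) * lawMean (ν n) - lawMean (ν n) := fun x hx => by
    unfold linRem
    rw [hL x hx, Finset.sum_mul]
    simp only [mul_sub, Finset.sum_sub_distrib]
    ring
  have hr : ∫ x, linRem G α (ν n) x ∂iidPi k (ν n)
      = (∑ i, α i) * lawMean (ν n) - lawMean (ν n) := by
    rw [integral_congr_ae (g := fun _ => (∑ i, α i) * lawMean (ν n) - lawMean (ν n))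
      ((iidPi_ae_box hae).mono fun x hx => hd x hx)]
    simp
  have h2 : ∀ x : Fin k → ℝ, (∀ i, x i ∈ Set.Icc a b) →
      G x - lawMean (ν (n + 1)) = ∑ i, α i * (x i - lawMean (ν n)) := fun x hx => by
    rw [H.decomp n x, hd x hx, hr]; ring
  refine ⟨?_, h2⟩
  rw [H.var_succ_eq, ← (H.linear_moments n α).2.1]
  exact integral_congr_ae ((iidPi_ae_box hae).mono fun x hx => by simp only; rw [h2 x hx])

/-- For a linear function the Stein discrepancy contracts exactly. -/
lemma stein_geometric_linear (H : Hier a b c B G α ν)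
    (hL : ∀ x : Fin k → ℝ, (∀ i, x i ∈ Set.Icc a b) → G x = ∑ i, α i * x i) {i j : Fin k}
    (hij : i ≠ j) (hi : α i ≠ 0) (hj : α j ≠ 0) (hV0 : 0 < lawVar (ν 0)) {γ : ℝ}
    (hγ : (∑ i, |α i| ^ 3) / √(∑ i, α i ^ 2) ^ 3 < γ) :
    (∀ n, 0 < lawVar (ν n)) ∧
    ∃ (K : ℝ) (N : ℕ), ∀ n, N ≤ n → SteinBound (ν n) (stdize (ν n)) (K * γ ^ n) := by
  have hl : 0 < √(∑ i, α i ^ 2) := sqrt_sum_sq_pos hi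
  have hphi := phi_mem hij hi hj
  have hV : ∀ n, 0 < lawVar (ν n) := fun n => by
    induction n with
    | zero => exact hV0
    | succ n ih => rw [(H.linear_var hL n).1]; exact mul_pos (Real.sqrt_pos.1 hl) ih
  refine ⟨hV, ?_⟩
  obtain ⟨K, hK⟩ := geometric_of_step (S := fun n δ => SteinBound (ν n) (stdize (ν n)) δ)
    (N := 0) (s := fun _ => 0) hphi.1.le hγ (fun n δ δ' h hs => hs.mono h)
    (fun n => H.exists_stein n (hV n)) (fun n _ => by simp) (fun n _ δ hδ => by
      refine (H.stein_step hi n (hV n) (hV (n + 1)) hδ).mono ?_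
      refine add_le_add le_rfl (le_of_eq ?_)
      refine integral_eq_zero_of_ae ((iidPi_ae_box (H.ae n)).mono fun x hx => ?_)
      have e : stdize (ν (n + 1)) (G x) = linStd α (ν n) x := by
        obtain ⟨v, g⟩ := H.linear_var hL n
        unfold stdize linStd stdize
        rw [g x hx, v, Real.sqrt_mul (Finset.sum_nonneg fun _ _ => sq_nonneg _),
          Finset.sum_div]
        exact Finset.sum_congr rfl fun j _ => by rw [mul_div_mul_comm]
      simp [e])
  exact ⟨K, 0, hK⟩

end Hier

/-! ### From the Stein discrepancy to the normal approximation -/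

/-- Stein's method: a bound on the Stein discrepancy bounds the distance to the normal law. -/
lemma wassersteinDist_le_of_steinBound {μ : Measure ℝ} [IsProbabilityMeasure μ] {a b : ℝ}
    (hμ : ∀ᵐ x ∂μ, x ∈ Set.Icc a b) {δ : ℝ} (h : SteinBound μ (stdize μ) δ) :
    wassersteinDist (Measure.map (stdize μ) μ) (ProbabilityTheory.gaussianReal 0 1) ≤ 26 * δ := by
  have hZ := continuous_stdize μ
  have : Nonempty { h : ℝ → ℝ // LipschitzWith 1 h } := ⟨⟨id, LipschitzWith.id⟩⟩
  refine ciSup_le fun ⟨u, hu⟩ => ?_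
  obtain ⟨f, g, hf, hg, hfg⟩ := stein_solution hu
  have h1 := h.scaled (by norm_num : (0 : NNReal) < 26) hf hg
  have huc : Continuous u := hu.continuous
  rw [integral_map hZ.aemeasurable huc.aestronglyMeasurable]
  have e : ∀ y, g (stdize μ y) - stdize μ y * f (stdize μ y)
      = u (stdize μ y) - ∫ t, u t ∂ProbabilityTheory.gaussianReal 0 1 := fun y => hfg _
  rw [integral_congr_ae (Eventually.of_forall e),
    integral_sub (integrable_of_continuous hμ (by fun_prop)) (integrable_const _)] at h1
  simpa using h1

/-- Theorem 1.1.  For the hierarchical sequence generated by a twice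
continuously differentiable averaging (or scaled averaging and positively homogeneous)
function `F : [a,b]^k → [a,b]` from a nonconstant `X₀` supported in `[a,b]`, if
`X_n →p c` and the gradient `α = F'(c,…,c)` is not a scalar multiple of a standard
basis vector, then `φ = (Σ|α_i|³)/(Σα_i²)^{3/2} ∈ (0,1)` and for every `γ ∈ (φ,1)`
there is `C` with `d(W_n, 𝒩) ≤ C γ^n`, where `W_n` is the standardized `X_n`.
Here `ν n` is the law of `X_n`. -/
theorem hierarchical_normal_approximation
    (a b : ℝ) (hab : a < b) {k : ℕ} (hk : 2 ≤ k)
    (F : (Fin k → ℝ) → ℝ)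
    (hmaps : ∀ x ∈ Set.Icc (fun _ : Fin k => a) (fun _ => b), F x ∈ Set.Icc a b)
    (hF : ContDiffOn ℝ 2 F (Set.Icc (fun _ : Fin k => a) (fun _ => b)))
    (havg : Averaging (Set.Icc a b) k F ∨
      (Averaging (Set.Icc a b) k (fun x => F x / F (fun _ => 1)) ∧
        ∀ t : ℝ, 0 < t → ∀ x : Fin k → ℝ,
          (∀ i, x i ∈ Set.Icc a b) → (∀ i, t * x i ∈ Set.Icc a b) →
          F (fun i => t * x i) = t * F x))
    (ν : ℕ → Measure ℝ) [∀ n, IsProbabilityMeasure (ν n)]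
    (hν0 : ν 0 (Set.Icc a b) = 1)
    (hnonconst : ∀ r : ℝ, ν 0 ≠ Measure.dirac r)
    (hrec : ∀ n, ν (n + 1) = Measure.map F (Measure.pi fun _ : Fin k => ν n))
    (c : ℝ)
    (hprob : ∀ ε : ℝ, 0 < ε →
      Tendsto (fun n => ν n {x : ℝ | ε < |x - c|}) atTop (nhds 0))
    (α : Fin k → ℝ)
    (hα : α = fun i => fderivWithin ℝ F (Set.Icc (fun _ : Fin k => a) (fun _ => b))
      (fun _ => c) (Pi.single i 1))
    (hbasis : ¬ ∃ (i : Fin k) (r : ℝ), α = r • (Pi.single i 1 : Fin k → ℝ))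
    (φ : ℝ) (hφ : φ = (∑ i, |α i| ^ 3) / (∑ i, α i ^ 2) ^ ((3 : ℝ) / 2)) :
    0 < φ ∧ φ < 1 ∧
    ∀ γ ∈ Set.Ioo φ 1, ∃ C : ℝ, ∀ n,
      wassersteinDist
        (Measure.map
          (fun x => (x - ∫ y, y ∂ν n) /
            Real.sqrt (∫ y, (y - ∫ z, z ∂ν n) ^ 2 ∂ν n)) (ν n))
        (ProbabilityTheory.gaussianReal 0 1) ≤ C * γ ^ n := by
  obtain ⟨i, j, hij, hi, hj⟩ := exists_ne_zero_of_not_basis hk hbasis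
  rw [rpow_three_halves_eq] at hφ
  have hphi := phi_mem hij hi hj
  rw [← hφ] at hphi
  refine ⟨hphi.1, hphi.2, fun γ hγ => ?_⟩
  obtain ⟨B, H⟩ := hier_of hab hmaps hF hν0 hrec hprob
  rw [← hα] at H
  have hV0 : 0 < lawVar (ν 0) := lawVar_pos_of_not_dirac (H.ae 0) hnonconst
  obtain ⟨K, N, hK⟩ : ∃ (K : ℝ) (N : ℕ), ∀ n, N ≤ n →
      SteinBound (ν n) (stdize (ν n)) (K * γ ^ n) := by
    have hγφ := hγ.1
    rw [hφ] at hγφ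
    rcases avg_or_linear hk H havg with hA | hL
    · exact H.stein_geometric hA hij hi hj
        (fun n => (H.charges hA hk hV0 n).lawVar_pos (H.ae n)) hγφ
    · exact (H.stein_geometric_linear hL hij hi hj hV0 hγφ).2
  have hγ0 : 0 < γ := hphi.1.trans hγ.1
  set d : ℕ → ℝ := fun n => wassersteinDist (Measure.map (stdize (ν n)) (ν n))
    (ProbabilityTheory.gaussianReal 0 1) with hd
  -- the finitely many terms before `N` are absorbed in the constant
  refine ⟨26 * |K| + ∑ m ∈ Finset.range N, |d m| / γ ^ m, fun n => ?_⟩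
  change d n ≤ _
  have hS : ∀ m ∈ Finset.range N, 0 ≤ |d m| / γ ^ m := fun m _ => by positivity
  rcases le_or_gt N n with hn | hn
  · have h1 : d n ≤ 26 * (K * γ ^ n) := wassersteinDist_le_of_steinBound (H.ae n) (hK n hn)
    have h2 : 26 * K ≤ 26 * |K| + ∑ m ∈ Finset.range N, |d m| / γ ^ m := by
      linarith [le_abs_self K, Finset.sum_nonneg hS]
    have h3 := mul_le_mul_of_nonneg_right h2 (pow_pos hγ0 n).le
    linarith
  · have h1 : |d n| / γ ^ n ≤ 26 * |K| + ∑ m ∈ Finset.range N, |d m| / γ ^ m := by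
      linarith [abs_nonneg K, Finset.single_le_sum hS (Finset.mem_range.2 hn)]
    exact (le_abs_self _).trans ((div_le_iff₀ (pow_pos hγ0 n)).1 h1)
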